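/- Let M be a subfield of the algebraic closure Q̃ of ℚ containing ℚ. Suppose that: (1) M is PAC, i.e. every polynomial f ∈ M[X,Y] that remains irreducible in Q̃[X,Y] has a zero (a,b) ∈ M × M; (2) for some positive integer e, the absolute Galois group Gal(M) = Aut(Q̃/M) is topologically generated by e elements and every finite group generated by e elements is a continuous epimorphic image of it (equivalently, by Iwasawa's theorem, Gal(M) ≅ F̂_e, the free profinite group on e generators); and (3) there is a computable function deciding, for each monic polynomial f ∈ ℚ[X] given by its coefficient list, whether f has a root in M. Then the elementary theory Th(M) is decidable. -/

import Mathlib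

/-!
The field `M` is studied through its algebraic closure. If `σ₁, …, σₑ` generate `Gal(M)`, then `M`
is the fixed field of `σ`, and the sentences about `M` become sentences, with quantifiers restricted
to fixed elements, about an algebraically closed field with `e` endomorphisms. The theorem follows
from a computable list of axioms for such structures which holds for `M` and decides every
restricted sentence.

*Axioms* (`axAll`). The structure is an algebraically closed field of characteristic zero with `e`
endomorphisms; the fixed field is PAC; and for each monic polynomial over `ℚ`, the fixed field has a
root of it or not, as told by the given computable function. The PAC property is first-order since
reducibility of a polynomial in two variables is a condition on its coefficients (`PACp_iff_PACb`).

*Completeness* (`sat_iff`). Let `N` be the fixed field of `τ` in a model `K`. The root axioms give an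
isomorphism of `M` with the algebraic part of `N`, hence an embedding of `Q̃` into `K`, on which
`τ` restricts to topological generators of `Gal(M)` (`exists_embedding`, `exists_lift_aut`,
`dense_of_fix`). Because every `e`-generated finite group is a quotient of `Gal(M)`, such generators
can be mapped to any `e` elements of any finite group (`exists_hom_of_generators`). So every
permutation representation of `e` letters on a finite set is realised by elements of `Q̃` (`Free`).
The theories of `M` and `N` are then compared by a back-and-forth argument over a common
algebraically closed subfield `A` with this property (`span_sat`). Given a fixed element `x` of one
field, the algebraic closure `B` of `A(x)` must be embedded over `A` into an ultrapower of the other.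
By compactness finitely many elements of `B` matter, and by finiteness of orbits they form a stable
set. Interpolating along an equivariant copy of this set in `A` yields a *fixed* element `y` such
that `A(x, y)` contains the set (`exists_fixed_primitive`). The plane curve with generic point
`(x, y)` is irreducible with fixed coefficients, and the PAC property of the other fixed field
provides a fixed point on it outside a given finite set (`exists_zero_avoiding`); specialising the
generic point there gives the partial embedding (`exists_partial_extension`).

*Decidability* (`decidable_of_complete`). Formulas are coded by natural numbers. The Henkin
construction turns the axioms into a computable sequence of propositional clauses whose satisfying
valuations correspond to the models. By compactness of propositional logic, for each sentence a
finite set of clauses refutes it or its negation, and such a refutation is found by search. Finally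
a primitive recursive parser translates the Gödel numbers of sentences into these codes
(`parseF_sentenceCode`, `pr_parseFC`).
-/

open FirstOrder Language Polynomial

/-- An explicit encoding of the function symbols of the language of rings. -/
instance encodableRingFunc : Encodable (Σ n, Language.ring.Functions n) where
  encode x :=
    match x with
    | ⟨_, .add⟩ => 0
    | ⟨_, .mul⟩ => 1
    | ⟨_, .neg⟩ => 2
    | ⟨_, .zero⟩ => 3
    | ⟨_, .one⟩ => 4
  decode n :=
    match n with
    | 0 => some ⟨2, .add⟩
    | 1 => some ⟨2, .mul⟩
    | 2 => some ⟨1, .neg⟩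
    | 3 => some ⟨0, .zero⟩
    | 4 => some ⟨0, .one⟩
    | _ => none
  encodek := by rintro ⟨_, f⟩; cases f <;> rfl

/-- The function symbols of `constantsOn α` are just the elements of `α`. -/
def constantsOnSigmaEquiv (α : Type*) : (Σ n, (constantsOn α).Functions n) ≃ α where
  toFun x :=
    match x with
    | ⟨0, a⟩ => a
    | ⟨_ + 1, x⟩ => x.elim
  invFun a := ⟨0, a⟩
  left_inv := by rintro ⟨(_ | n), a⟩
                 · rfl
                 · exact a.elim
  right_inv a := rfl

instance encodableConstantsOnSigma (α : Type*) [Encodable α] :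
    Encodable (Σ n, (constantsOn α).Functions n) :=
  Encodable.ofEquiv α (constantsOnSigmaEquiv α)

instance encodableRingWithConstantsFunc (α : Type*) [Encodable α] :
    Encodable (Σ n, (Language.ring[[α]]).Functions n) :=
  Encodable.ofEquiv _ (Equiv.sigmaSumDistrib Language.ring.Functions (constantsOn α).Functions)

instance isEmptyRingWithConstantsRel (α : Type*) :
    IsEmpty (Σ n, (Language.ring[[α]]).Relations n) :=
  ⟨by rintro ⟨n, r | r⟩ <;> exact r.elim⟩

/-- A Gödel numbering of the sentences of the language of rings with constants from `α`,
obtained from the (injective) encoding of formulas as lists of symbols. -/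
noncomputable def sentenceCode {α : Type*} [Encodable α]
    (φ : (Language.ring[[α]]).Sentence) : ℕ :=
  Encodable.encode φ.listEncode

/-- The natural interpretation of a field extension `M` of `K` as a structure of the
language of rings with a constant symbol for each element of `K`. -/
noncomputable def fieldStruct (K M : Type*) [Field K] [Field M] [Algebra K M] :
    (Language.ring[[K]]).Structure M :=
  letI : Language.ring.Structure M := (Ring.compatibleRingOfRing M).toStructure
  letI : (constantsOn K).Structure M := constantsOn.structure (algebraMap K M)
  Language.sumStructure _ _ M

/-- `Th(M)`, the elementary theory of a field extension `M` of `ℚ` in the language of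
rings with a constant symbol for each element of `ℚ`, is decidable. -/
noncomputable def ThDecidable (M : Type*) [Field M] [Algebra ℚ M] : Prop :=
  ∃ f : ℕ → Bool, Computable f ∧
    ∀ φ : (Language.ring[[ℚ]]).Sentence,
      (f (sentenceCode φ) = true ↔ @Sentence.Realize _ M (fieldStruct ℚ M) φ)

/-- `Ex(M)`, the existential theory of a field extension `M` of `ℚ` in the language of
rings with a constant symbol for each element of `ℚ`, is decidable.  An existential
sentence is one of the form `∃X₁⋯∃Xₙ φ` with `φ` quantifier-free. -/
noncomputable def ExDecidable (M : Type*) [Field M] [Algebra ℚ M] : Prop :=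
  ∃ f : ℕ → Bool, Computable f ∧
    ∀ (n : ℕ) (ψ : (Language.ring[[ℚ]]).BoundedFormula Empty n), ψ.IsQF →
      (f (sentenceCode ψ.exs) = true ↔ @Sentence.Realize _ M (fieldStruct ℚ M) ψ.exs)

/-- `Ex(M)` is primitively (recursively) decidable. -/
noncomputable def ExPrimDecidable (M : Type*) [Field M] [Algebra ℚ M] : Prop :=
  ∃ f : ℕ → Bool, Primrec f ∧
    ∀ (n : ℕ) (ψ : (Language.ring[[ℚ]]).BoundedFormula Empty n), ψ.IsQF →
      (f (sentenceCode ψ.exs) = true ↔ @Sentence.Realize _ M (fieldStruct ℚ M) ψ.exs)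

/-- The polynomial over `ℚ` with the given list of coefficients. -/
noncomputable def polyOfCoeffs (l : List ℚ) : Polynomial ℚ :=
  ∑ i ∈ Finset.range l.length, Polynomial.C (l.getD i 0) * Polynomial.X ^ i

/-- The list of coefficients of a polynomial over `ℚ`. -/
noncomputable def coeffList (q : Polynomial ℚ) : List ℚ :=
  (List.range (q.natDegree + 1)).map q.coeff

/-- A subfield `M` of `Q̃` is PAC (in the sense used here): every polynomial in two
variables over `M` which remains irreducible over `Q̃` has a zero in `M × M`. -/
def IsPACIn (M : IntermediateField ℚ (AlgebraicClosure ℚ)) : Prop :=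
  ∀ f : MvPolynomial (Fin 2) ↥M,
    Irreducible (MvPolynomial.map (algebraMap ↥M (AlgebraicClosure ℚ)) f) →
    ∃ a b : ↥M, MvPolynomial.eval ![a, b] f = 0

/-- The absolute Galois group `Gal(Q̃/M)` is topologically generated by `e` elements and
has every finite group generated by `e` elements as a continuous epimorphic image
(equivalently, by Iwasawa's theorem, it is isomorphic to the free profinite group `F̂ₑ`
on `e` generators). -/
def GalFreeRank (e : ℕ) (M : IntermediateField ℚ (AlgebraicClosure ℚ)) : Prop :=
  (∃ g : Fin e → (AlgebraicClosure ℚ ≃ₐ[↥M] AlgebraicClosure ℚ),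
      Dense ((Subgroup.closure (Set.range g) :
        Subgroup (AlgebraicClosure ℚ ≃ₐ[↥M] AlgebraicClosure ℚ)) :
        Set (AlgebraicClosure ℚ ≃ₐ[↥M] AlgebraicClosure ℚ))) ∧
    ∀ (G : Type) [Group G] [Finite G] [TopologicalSpace G] [DiscreteTopology G],
      (∃ g : Fin e → G, Subgroup.closure (Set.range g) = ⊤) →
      ∃ φ : (AlgebraicClosure ℚ ≃ₐ[↥M] AlgebraicClosure ℚ) →* G,
        Function.Surjective φ ∧ Continuous φ

namespace PACDec

/-! ### Fields with `e` automorphisms and the PAC property -/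

/-- `x` is fixed by every member of the family `σ`. -/
def Fix {ι K : Type} [Field K] (σ : ι → K →+* K) (x : K) : Prop := ∀ i, σ i x = x

/-- The PAC property of the fixed field of `σ`, in terms of bivariate polynomials. -/
def PACp {ι K : Type} [Field K] (σ : ι → K →+* K) : Prop :=
  ∀ f : K[X][X], (∀ i j, Fix σ ((f.coeff j).coeff i)) → Irreducible f →
    ∃ a b, Fix σ a ∧ Fix σ b ∧ f.evalEval a b = 0

/-- The value at `(x, y)` of the bivariate polynomial with coefficient sequence `c` of
length `D`; the monomial with index `m` is `x ^ i * y ^ j`, where `(i, j)` is coded by `m`. -/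
def ev2 {K : Type} [Field K] (c : ℕ → K) (D : ℕ) (x y : K) : K :=
  ∑ m ∈ Finset.range D, c m * (x ^ m.unpair.1 * y ^ m.unpair.2)

/-- A bound for the lengths of the coefficient sequences of factors. -/
def bd (D : ℕ) : ℕ := (D + 1) ^ 2

/-- The PAC property of the fixed field of `σ` as a scheme of first-order conditions, one for
each length `D` of coefficient sequences: a polynomial over the fixed field has a zero there,
or is constant, or is a product of two non-constant polynomials. -/
def PACb {ι K : Type} [Field K] (σ : ι → K →+* K) : Prop :=
  ∀ (D : ℕ) (c : ℕ → K), (∀ m < D, Fix σ (c m)) →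
    (∃ a b, Fix σ a ∧ Fix σ b ∧ ev2 c D a b = 0) ∨
    (∀ x y, ev2 c D x y = ev2 c D 0 0) ∨
    ∃ g h : ℕ → K, (∀ x y, ev2 c D x y = ev2 g (bd D) x y * ev2 h (bd D) x y) ∧
      (∃ x y, ev2 g (bd D) x y ≠ ev2 g (bd D) 0 0) ∧
      (∃ x y, ev2 h (bd D) x y ≠ ev2 h (bd D) 0 0)

section
variable {ι K R : Type} [Field K] [CommRing R]

lemma coeff_swap (p : R[X][X]) (i j : ℕ) :
    ((Bivariate.swap p).coeff i).coeff j = (p.coeff j).coeff i := by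
  induction p using Polynomial.induction_on' with
  | add p q hp hq => simp [hp, hq]
  | monomial n f =>
    induction f using Polynomial.induction_on' with
    | add p q hp hq => simp only [map_add, coeff_add, hp, hq]
    | monomial m r =>
      rw [Bivariate.swap_monomial_monomial]
      simp only [coeff_monomial]
      split_ifs <;> simp_all [coeff_monomial]

lemma evalEval_funext [Infinite K] {p q : K[X][X]}
    (h : ∀ x y, p.evalEval x y = q.evalEval x y) : p = q := by
  have h1 : ∀ y : K, p.eval (C y) = q.eval (C y) := fun y => Polynomial.funext fun x => h x y
  refine Polynomial.eq_of_infinite_eval_eq p q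
    ((Set.infinite_range_of_injective (C_injective (R := K))).mono ?_)
  rintro _ ⟨y, rfl⟩
  exact h1 y

/-- The polynomial with coefficient sequence `c` of length `D`. -/
noncomputable def poly2 (c : ℕ → R) (D : ℕ) : R[X][X] :=
  ∑ m ∈ Finset.range D, monomial m.unpair.2 (monomial m.unpair.1 (c m))

lemma evalEval_poly2 (c : ℕ → K) (D : ℕ) (x y : K) :
    (poly2 c D).evalEval x y = ev2 c D x y := by
  simp only [poly2, evalEval_finsetSum, ev2]
  refine Finset.sum_congr rfl fun m _ => ?_
  simp [evalEval, eval_monomial, mul_assoc]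

lemma coeff_poly2 (c : ℕ → R) (D i j : ℕ) :
    ((poly2 c D).coeff j).coeff i = if Nat.pair i j < D then c (Nat.pair i j) else 0 := by
  simp only [poly2, finsetSum_coeff, coeff_monomial]
  have : ∀ m ∈ Finset.range D, ((if m.unpair.2 = j then monomial m.unpair.1 (c m) else 0).coeff i)
      = if m = Nat.pair i j then c m else 0 := by
    intro m _
    by_cases hm : m = Nat.pair i j
    · subst hm; simp
    · rw [if_neg hm]
      split_ifs with h2
      · rw [coeff_monomial, if_neg]
        intro h1
        exact hm (by rw [← h1, ← h2, Nat.pair_unpair])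
      · simp
  rw [Finset.sum_congr rfl this, Finset.sum_ite_eq']
  simp

/-- A polynomial is recovered from its coefficients when these are confined to a box. -/
lemma poly2_coeff {p : R[X][X]} {d : ℕ} (h : ∀ i j, (p.coeff j).coeff i ≠ 0 → i ≤ d ∧ j ≤ d) :
    poly2 (fun m => (p.coeff m.unpair.2).coeff m.unpair.1) (bd d) = p := by
  ext j i
  rw [coeff_poly2]
  split_ifs with h1
  · simp
  · by_contra h2
    obtain ⟨h3, h4⟩ := h i j (Ne.symm h2)
    apply h1
    refine (Nat.pair_lt_max_add_one_sq i j).trans_le ?_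
    exact Nat.pow_le_pow_left (by omega) 2

lemma exists_box (p : R[X][X]) : ∃ d, ∀ i j, (p.coeff j).coeff i ≠ 0 → i ≤ d ∧ j ≤ d := by
  refine ⟨max p.natDegree (Bivariate.swap p).natDegree, fun i j h => ⟨?_, ?_⟩⟩
  · refine le_max_of_le_right (le_natDegree_of_ne_zero fun h0 => ?_)
    rw [← coeff_swap, h0] at h
    simp at h
  · refine le_max_of_le_left (le_natDegree_of_ne_zero fun h0 => ?_)
    rw [h0] at h; simp at h

lemma box_of_dvd {p q : K[X][X]} (hq : q ≠ 0) (hpq : p ∣ q) {d : ℕ}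
    (h : ∀ i j, (q.coeff j).coeff i ≠ 0 → i ≤ d ∧ j ≤ d) :
    ∀ i j, (p.coeff j).coeff i ≠ 0 → i ≤ d ∧ j ≤ d := by
  have h1 : q.natDegree ≤ d := natDegree_le_iff_coeff_eq_zero.2 fun j hj => by
    ext i; by_contra h0; have := (h i j h0).2; omega
  have h2 : (Bivariate.swap q).natDegree ≤ d := natDegree_le_iff_coeff_eq_zero.2 fun i hi => by
    ext j; by_contra h0; rw [coeff_swap] at h0; have := (h i j h0).1; omega
  have h3 := (natDegree_le_of_dvd hpq hq).trans h1
  have h4 := (natDegree_le_of_dvd (map_dvd Bivariate.swap hpq)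
    ((map_ne_zero_iff _ Bivariate.swap.injective).2 hq)).trans h2
  intro i j h
  constructor
  · refine le_trans (le_natDegree_of_ne_zero fun h0 => ?_) h4
    rw [← coeff_swap, h0] at h
    simp at h
  · refine le_trans (le_natDegree_of_ne_zero fun h0 => ?_) h3
    rw [h0] at h; simp at h

lemma eq_CC_of_const [Infinite K] {p : K[X][X]}
    (h : ∀ x y, p.evalEval x y = p.evalEval 0 0) : p = C (C (p.evalEval 0 0)) :=
  evalEval_funext fun x y => by rw [h]; simp [evalEval]

lemma PACp_iff_PACb [Infinite K] (σ : ι → K →+* K) : PACp σ ↔ PACb σ := by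
  classical
  constructor
  · intro hP D c hc
    by_cases hz : ∃ a b, Fix σ a ∧ Fix σ b ∧ ev2 c D a b = 0
    · exact Or.inl hz
    right
    set f := poly2 c D with hf
    have hfe : ∀ x y, f.evalEval x y = ev2 c D x y := evalEval_poly2 c D
    have hf0 : f ≠ 0 := by
      intro h0
      refine hz ⟨0, 0, fun i => map_zero _, fun i => map_zero _, ?_⟩
      rw [← hfe, h0]; simp
    have hbox : ∀ i j, (f.coeff j).coeff i ≠ 0 → i ≤ D ∧ j ≤ D := by
      intro i j h
      rw [coeff_poly2] at h
      have : Nat.pair i j < D := by by_contra h0; simp [h0] at h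
      exact ⟨(Nat.left_le_pair i j).trans this.le, (Nat.right_le_pair i j).trans this.le⟩
    by_cases hu : IsUnit f
    · left
      obtain ⟨r, hr, hr'⟩ := Polynomial.isUnit_iff.1 hu
      obtain ⟨s, -, rfl⟩ := Polynomial.isUnit_iff.1 hr
      intro x y
      simp [← hfe, ← hr', evalEval]
    right
    by_cases hi : Irreducible f
    · refine absurd (hP f ?_ hi) ?_
      · intro i j
        rw [coeff_poly2]
        split_ifs with h
        · exact hc _ h
        · exact fun i => map_zero _
      · rintro ⟨a, b, ha, hb, hab⟩
        exact hz ⟨a, b, ha, hb, by rw [← hfe, hab]⟩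
    rw [irreducible_iff] at hi
    push Not at hi
    obtain ⟨g, h, hgh, hg, hh⟩ := hi hu
    have key : ∀ p : K[X][X], p ∣ f → ¬ IsUnit p → ∃ g : ℕ → K,
        (∀ x y, p.evalEval x y = ev2 g (bd D) x y) ∧
        (∃ x y, ev2 g (bd D) x y ≠ ev2 g (bd D) 0 0) := by
      intro p hp hpu
      have e1 := poly2_coeff (box_of_dvd hf0 hp hbox)
      have e2 : ∀ x y, p.evalEval x y = ev2 (fun m => (p.coeff m.unpair.2).coeff m.unpair.1)
          (bd D) x y := fun x y => by rw [← evalEval_poly2, e1]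
      refine ⟨_, e2, ?_⟩
      by_contra hcon
      push Not at hcon
      have e3 := eq_CC_of_const (p := p) fun x y => by rw [e2, e2, hcon]
      apply hpu
      rw [e3]
      have : p.evalEval 0 0 ≠ 0 := by
        intro h0
        rw [h0] at e3
        simp only [map_zero] at e3
        rw [e3] at hp
        exact hf0 (zero_dvd_iff.1 hp)
      exact ((isUnit_iff_ne_zero.2 this).map C).map C
    obtain ⟨g', hg', hg''⟩ := key g ⟨h, hgh⟩ hg
    obtain ⟨h', hh', hh''⟩ := key h ⟨g, by rw [hgh, mul_comm]⟩ hh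
    exact ⟨g', h', fun x y => by rw [← hfe, hgh, evalEval_mul, hg', hh'], hg'', hh''⟩
  · intro hP f hf hirr
    obtain ⟨d, hd⟩ := exists_box f
    have e1 := poly2_coeff hd
    have e2 : ∀ x y, f.evalEval x y = ev2 (fun m => (f.coeff m.unpair.2).coeff m.unpair.1)
          (bd d) x y := fun x y => by rw [← evalEval_poly2, e1]
    rcases hP (bd d) _ (fun m _ => hf m.unpair.1 m.unpair.2) with h | h | h
    · obtain ⟨a, b, ha, hb, hab⟩ := h
      exact ⟨a, b, ha, hb, by rw [e2, hab]⟩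
    · have e3 := eq_CC_of_const (p := f) fun x y => by rw [e2, e2, h]
      exfalso
      apply hirr.not_isUnit
      rw [e3]
      have : f.evalEval 0 0 ≠ 0 := by
        intro h0
        rw [h0] at e3
        simp only [map_zero] at e3
        exact hirr.ne_zero e3
      exact ((isUnit_iff_ne_zero.2 this).map C).map C
    · obtain ⟨g, h, hgh, ⟨x, y, hg⟩, ⟨x', y', hh⟩⟩ := h
      have e3 : f = poly2 g (bd (bd d)) * poly2 h (bd (bd d)) :=
        evalEval_funext fun x y => by
          rw [evalEval_mul, evalEval_poly2, evalEval_poly2, ← hgh, e2]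
      have key : ∀ (g : ℕ → K) D x y, ev2 g D x y ≠ ev2 g D 0 0 → ¬ IsUnit (poly2 g D) := by
        intro g D x y hne hu
        obtain ⟨r, hr, hr'⟩ := Polynomial.isUnit_iff.1 hu
        obtain ⟨s, -, rfl⟩ := Polynomial.isUnit_iff.1 hr
        apply hne
        simp [← evalEval_poly2, ← hr', evalEval]
      rcases hirr.isUnit_or_isUnit e3 with h1 | h1
      · exact absurd h1 (key _ _ _ _ hg)
      · exact absurd h1 (key _ _ _ _ hh)

end

/-! ### Formulas, and ultrapowers of fields with automorphisms -/

/-- Terms of the language of rings with rational constants. -/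
inductive Tm where
  | var (i : ℕ)
  | cst (q : ℚ)
  | add (a b : Tm)
  | mul (a b : Tm)
  | neg (a : Tm)

/-- The value of a term at the list `s` of values of the variables. -/
noncomputable def Tm.ev {K : Type} [Field K] (s : List K) : Tm → K
  | .var i => s.getD i 0
  | .cst q => (q : K)
  | .add a b => a.ev s + b.ev s
  | .mul a b => a.ev s * b.ev s
  | .neg a => - a.ev s

/-- First-order formulas of the language of rings with rational constants; the variables are
de Bruijn levels, so a quantifier binds the variable whose index is the length of the list
of values. -/
inductive Fm where
  | bot
  | eq (a b : Tm)
  | imp (φ ψ : Fm)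
  | all (φ : Fm)

/-- Satisfaction of a formula, quantifiers ranging over `N`. -/
def Fm.sat {K : Type} [Field K] (N : K → Prop) : Fm → List K → Prop
  | .bot, _ => False
  | .eq a b, s => a.ev s = b.ev s
  | .imp φ ψ, s => φ.sat N s → ψ.sat N s
  | .all φ, s => ∀ x, N x → φ.sat N (s ++ [x])

/-- Algebraic closedness as a scheme of first-order conditions on coefficients. -/
def ACb (K : Type) [Field K] : Prop :=
  ∀ (n : ℕ) (c : ℕ → K), ∃ x : K, x ^ (n + 1) + ∑ j ∈ Finset.range (n + 1), c j * x ^ j = 0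

lemma isAlgClosed_iff_ACb (K : Type) [Field K] : IsAlgClosed K ↔ ACb K := by
  constructor
  · intro h n c
    have hd : (∑ j ∈ Finset.range (n + 1), C (c j) * X ^ j : K[X]).degree < (n + 1 : ℕ) := by
      refine (degree_sum_le _ _).trans_lt ((Finset.sup_lt_iff ?_).2 fun j hj => ?_)
      · exact WithBot.bot_lt_coe _
      · refine (degree_C_mul_X_pow_le _ _).trans_lt ?_
        exact_mod_cast Finset.mem_range.1 hj
    obtain ⟨x, hx⟩ := IsAlgClosed.exists_root (X ^ (n + 1) +
      ∑ j ∈ Finset.range (n + 1), C (c j) * X ^ j : K[X]) (by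
        rw [degree_add_eq_left_of_degree_lt (by rwa [degree_X_pow]), degree_X_pow]
        exact_mod_cast Nat.succ_ne_zero n)
    refine ⟨x, ?_⟩
    simpa [IsRoot, eval_finsetSum] using hx
  · intro h
    refine IsAlgClosed.of_exists_root K fun p hp hirr => ?_
    obtain ⟨n, hn⟩ := Nat.exists_eq_succ_of_ne_zero (hirr.natDegree_pos.ne')
    obtain ⟨x, hx⟩ := h n p.coeff
    refine ⟨x, ?_⟩
    rw [eval_eq_sum_range, hn, Finset.sum_range_succ]
    have : p.coeff (n + 1) = 1 := by
      have := hp.coeff_natDegree; rwa [hn] at this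
    rw [this, add_comm, one_mul]
    exact hx

section
set_option linter.unusedSectionVars false
variable {ι K I : Type} [Field K] (U : Ultrafilter I)

/-- The ultrapower of `K` with respect to `U`. -/
abbrev UP (K : Type) (U : Ultrafilter I) : Type := (U : Filter I).Germ K

/-- The endomorphism of the ultrapower induced by an endomorphism. -/
noncomputable def upMap (f : K →+* K) : UP K U →+* UP K U where
  toFun := Filter.Germ.map f
  map_one' := by
    show Filter.Germ.map f ((fun _ => (1 : K) : I → K) : UP K U) = _
    simp only [Filter.Germ.map_coe]
    exact congrArg _ (funext fun _ => map_one f)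
  map_zero' := by
    show Filter.Germ.map f ((fun _ => (0 : K) : I → K) : UP K U) = _
    simp only [Filter.Germ.map_coe]
    exact congrArg _ (funext fun _ => map_zero f)
  map_add' := by
    rintro ⟨a⟩ ⟨b⟩
    exact congrArg (Filter.Germ.ofFun (l := (U : Filter I))) (funext fun i => map_add f (a i) (b i))
  map_mul' := by
    rintro ⟨a⟩ ⟨b⟩
    exact congrArg (Filter.Germ.ofFun (l := (U : Filter I))) (funext fun i => map_mul f (a i) (b i))

/-- The diagonal embedding into the ultrapower. -/
noncomputable def upDiag : K →+* UP K U :=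
  (Filter.Germ.coeRingHom (U : Filter I)).comp (Pi.constRingHom I K)

/-- The endomorphisms of the ultrapower induced by a family of endomorphisms. -/
noncomputable def upS (σ : ι → K →+* K) : ι → UP K U →+* UP K U := fun i => upMap U (σ i)

lemma up_coe_eq {K : Type} {a b : I → K} : (a : UP K U) = b ↔ ∀ᶠ i in U, a i = b i := Filter.Germ.coe_eq

lemma upMap_coe (f : K →+* K) (a : I → K) :
    upMap U f (a : UP K U) = ((fun i => f (a i) : I → K) : UP K U) := rfl

lemma upDiag_apply (x : K) : upDiag U x = ((fun _ => x : I → K) : UP K U) := rfl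

lemma upS_diag (σ : ι → K →+* K) (i : ι) (x : K) :
    upS U σ i (upDiag U x) = upDiag U (σ i x) := rfl

lemma fix_coe [Finite ι] (σ : ι → K →+* K) (a : I → K) :
    Fix (upS U σ) (a : UP K U) ↔ ∀ᶠ i in U, Fix σ (a i) := by
  simp only [Fix, Filter.eventually_all]
  exact forall_congr' fun j => up_coe_eq U

lemma ev_coe (s : List (I → K)) (t : Tm) :
    t.ev (s.map (Filter.Germ.ofFun (l := (U : Filter I)))) = ((fun i => t.ev (s.map (· i)) : I → K) : UP K U) := by
  induction t with
  | var j =>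
    by_cases h : j < s.length
    · simp [Tm.ev, h]
    · simp only [Tm.ev]
      rw [List.getD_eq_default _ _ (by simpa using h)]
      have : (fun i => List.getD (List.map (· i) s) j 0 : I → K) = fun _ => 0 := by
        funext i
        exact List.getD_eq_default _ _ (by simpa using h)
      rw [this]
      rfl
  | cst q => exact (map_ratCast (upDiag (K := K) U) q).symm
  | add a b ha hb => simp only [Tm.ev, ha, hb]; rfl
  | mul a b ha hb => simp only [Tm.ev, ha, hb]; rfl
  | neg a ha => simp only [Tm.ev, ha]; rfl

/-- Łoś's theorem. -/
lemma sat_coe [Finite ι] (σ : ι → K →+* K) (φ : Fm) (s : List (I → K)) :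
    φ.sat (Fix (upS U σ)) (s.map (Filter.Germ.ofFun (l := (U : Filter I)))) ↔
      ∀ᶠ i in U, φ.sat (Fix σ) (s.map (· i)) := by
  induction φ generalizing s with
  | bot => simp [Fm.sat, U.neBot.ne]
  | eq a b => simp only [Fm.sat, ev_coe, up_coe_eq]
  | imp φ ψ hφ hψ => simp only [Fm.sat, hφ, hψ, Ultrafilter.eventually_imp]
  | all φ hφ =>
    simp only [Fm.sat]
    constructor
    · intro h
      by_contra hc
      rw [← Ultrafilter.eventually_not] at hc
      have : ∀ i, ∃ x, Fix σ x ∧ ((¬ ∀ x, Fix σ x → φ.sat (Fix σ) (s.map (· i) ++ [x])) →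
          ¬ φ.sat (Fix σ) (s.map (· i) ++ [x])) := by
        intro i
        by_cases hi : ∀ x, Fix σ x → φ.sat (Fix σ) (s.map (· i) ++ [x])
        · exact ⟨0, fun _ => map_zero _, fun h => absurd hi h⟩
        · have hi' := hi
          push Not at hi'
          obtain ⟨x, hx, hx'⟩ := hi'
          exact ⟨x, hx, fun _ => hx'⟩
      choose x hx hx' using this
      have h1 := h (x : UP K U) ((fix_coe U σ x).2 (Filter.Eventually.of_forall hx))
      have h2 := (hφ (s ++ [x])).1 (by simpa using h1)
      obtain ⟨i, hi1, hi2⟩ := (hc.and h2).exists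
      exact hx' i hi1 (by simpa using hi2)
    · intro h x
      induction x using Filter.Germ.inductionOn with
      | _ x =>
      intro hx
      have h1 := (hφ (s ++ [x])).2 (by
        filter_upwards [h, (fix_coe U σ x).1 hx] with i h1 h2
        simpa using h1 (x i) h2)
      simpa using h1

lemma sat_diag [Finite ι] (σ : ι → K →+* K) (φ : Fm) (s : List K) :
    φ.sat (Fix (upS U σ)) (s.map (upDiag U)) ↔ φ.sat (Fix σ) s := by
  have := sat_coe U σ φ (s.map fun x _ => x)
  have e : (upDiag U : K → UP K U) = fun x => Filter.Germ.ofFun fun _ => x := rfl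
  rw [e]
  simpa [Function.comp_def] using this

instance up_charZero [CharZero K] : CharZero (UP K U) :=
  charZero_of_injective_ringHom (upDiag (K := K) U).injective

lemma up_sum_coe {J : Type} (s : Finset J) (f : J → I → K) :
    ((fun i => ∑ j ∈ s, f j i : I → K) : UP K U) = ∑ j ∈ s, (f j : UP K U) := by
  have := map_sum (Filter.Germ.coeRingHom (R := K) (U : Filter I)) f s
  rw [show (fun i => ∑ j ∈ s, f j i : I → K) = ∑ j ∈ s, f j from by ext i; simp]
  exact this

instance up_isAlgClosed [IsAlgClosed K] : IsAlgClosed (UP K U) := by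
  rw [isAlgClosed_iff_ACb]
  have hK := (isAlgClosed_iff_ACb K).1 ‹_›
  intro n c
  choose c' hc' using fun j => Quotient.exists_rep (c j)
  choose x hx using fun i => hK n fun j => c' j i
  refine ⟨(x : UP K U), ?_⟩
  have h0 : ((fun i => x i ^ (n + 1) + ∑ j ∈ Finset.range (n + 1), c' j i * x i ^ j : I → K)
      : UP K U) = 0 := by
    rw [show (fun i => x i ^ (n + 1) + ∑ j ∈ Finset.range (n + 1), c' j i * x i ^ j) =
      fun _ => 0 from funext hx]
    rfl
  rw [← h0]
  have h1 := up_sum_coe U (Finset.range (n + 1)) fun j i => c' j i * x i ^ j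
  have h2 : ∀ j, ((fun i => c' j i * x i ^ j : I → K) : UP K U) = c j * (x : UP K U) ^ j := by
    intro j; rw [← hc' j]; rfl
  simp only [h2] at h1
  rw [← h1]
  rfl

lemma ev2_coe (c : ℕ → I → K) (D : ℕ) (x y : I → K) :
    ev2 (fun m => (c m : UP K U)) D (x : UP K U) y =
      ((fun i => ev2 (fun m => c m i) D (x i) (y i) : I → K) : UP K U) := by
  simp only [ev2]
  rw [up_sum_coe]
  rfl

lemma up_PACb [Finite ι] (σ : ι → K →+* K) (h : PACb σ) : PACb (upS U σ) := by
  intro D c hc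
  obtain ⟨c', rfl⟩ : ∃ c' : ℕ → I → K, c = fun m => (c' m : UP K U) := by
    choose c' hc' using fun j => Quotient.exists_rep (c j)
    exact ⟨c', funext fun m => (hc' m).symm⟩
  have hc1 : ∀ᶠ i in U, ∀ m < D, Fix σ (c' m i) := by
    have : ∀ᶠ i in U, ∀ m ∈ Finset.range D, Fix σ (c' m i) := by
      rw [Filter.eventually_all_finset]
      exact fun m hm => (fix_coe U σ _).1 (hc m (Finset.mem_range.1 hm))
    simpa using this
  have hz : ∀ i, Fix σ ((0 : I → K) i) := fun i j => map_zero _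
  have h1 := hc1.mono fun i hi => h D (fun m => c' m i) hi
  rw [Ultrafilter.eventually_or, Ultrafilter.eventually_or] at h1
  rcases h1 with h1 | h1 | h1
  · left
    obtain ⟨a, ha⟩ := Filter.Eventually.choice h1
    obtain ⟨b, hb⟩ := Filter.Eventually.choice ha
    refine ⟨(a : UP K U), (b : UP K U), (fix_coe U σ a).2 (hb.mono fun i h => h.1),
      (fix_coe U σ b).2 (hb.mono fun i h => h.2.1), ?_⟩
    rw [ev2_coe]
    exact (up_coe_eq U).2 (hb.mono fun i h => h.2.2)
  · right; left
    intro x y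
    induction x using Filter.Germ.inductionOn with
    | _ x =>
    induction y using Filter.Germ.inductionOn with
    | _ y =>
    rw [ev2_coe, show (0 : UP K U) = ((0 : I → K) : UP K U) from rfl, ev2_coe]
    exact (up_coe_eq U).2 (h1.mono fun i h => h _ _)
  · right; right
    obtain ⟨g, hg⟩ := Filter.Eventually.choice h1
    obtain ⟨k, hk⟩ := Filter.Eventually.choice hg
    refine ⟨fun m => ((fun i => g i m : I → K) : UP K U),
      fun m => ((fun i => k i m : I → K) : UP K U), ?_, ?_, ?_⟩
    · intro x y
      induction x using Filter.Germ.inductionOn with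
      | _ x =>
      induction y using Filter.Germ.inductionOn with
      | _ y =>
      rw [ev2_coe, ev2_coe, ev2_coe]
      exact (up_coe_eq U).2 (hk.mono fun i h => h.1 _ _)
    · obtain ⟨x, hx⟩ := Filter.Eventually.choice (hk.mono fun i h => h.2.1)
      obtain ⟨y, hy⟩ := Filter.Eventually.choice hx
      refine ⟨(x : UP K U), (y : UP K U), ?_⟩
      rw [ev2_coe, show (0 : UP K U) = ((0 : I → K) : UP K U) from rfl, ev2_coe, Ne, up_coe_eq,
        ← Ultrafilter.eventually_not]
      exact hy
    · obtain ⟨x, hx⟩ := Filter.Eventually.choice (hk.mono fun i h => h.2.2)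
      obtain ⟨y, hy⟩ := Filter.Eventually.choice hx
      refine ⟨(x : UP K U), (y : UP K U), ?_⟩
      rw [ev2_coe, show (0 : UP K U) = ((0 : I → K) : UP K U) from rfl, ev2_coe, Ne, up_coe_eq,
        ← Ultrafilter.eventually_not]
      exact hy

lemma up_PACp [Finite ι] [CharZero K] (σ : ι → K →+* K) (h : PACp σ) : PACp (upS U σ) :=
  (PACp_iff_PACb _).2 (up_PACb U σ ((PACp_iff_PACb _).1 h))

end

/-! ### Irreducible plane curves over algebraically closed fields -/

section
variable {A K R : Type} [Field A] [Field K] [CommRing R]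

lemma map_poly2 {R' : Type} [CommRing R'] (f : R →+* R') (c : ℕ → R) (D : ℕ) :
    (poly2 c D).map (mapRingHom f) = poly2 (fun m => f (c m)) D := by
  ext j i
  simp only [coeff_map, coe_mapRingHom, coeff_poly2]
  split_ifs <;> simp

/-- Weak Nullstellensatz: a nontrivial finitely generated algebra over an algebraically closed
field has a rational point. -/
lemma exists_algHom_of_finiteType [IsAlgClosed A] [Algebra A R] [Nontrivial R]
    [Algebra.FiniteType A R] : Nonempty (R →ₐ[A] A) := by
  obtain ⟨m, hm⟩ := Ideal.exists_maximal R
  letI := Ideal.Quotient.field m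
  have : Algebra.FiniteType A (R ⧸ m) := .of_surjective (Ideal.Quotient.mkₐ A m)
    (Ideal.Quotient.mkₐ_surjective A m)
  have := finite_of_finite_type_of_isJacobsonRing A (R ⧸ m)
  have hb := IsAlgClosed.algebraMap_bijective_of_isIntegral (k := A) (K := R ⧸ m)
  exact ⟨((AlgEquiv.ofBijective (Algebra.ofId A (R ⧸ m)) hb).symm : (R ⧸ m) →ₐ[A] A).comp
    (Ideal.Quotient.mkₐ A m)⟩

lemma exists_coeff_of_not_isUnit {p : K[X][X]} (h0 : p ≠ 0) (hp : ¬ IsUnit p) :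
    ∃ i j, (i ≠ 0 ∨ j ≠ 0) ∧ (p.coeff j).coeff i ≠ 0 := by
  by_contra hcon
  push Not at hcon
  have : p = C (C ((p.coeff 0).coeff 0)) := by
    ext j i
    rw [coeff_C]
    split_ifs with hj
    · subst hj
      rw [coeff_C]
      split_ifs with hi
      · subst hi; rfl
      · exact hcon i 0 (Or.inl hi)
    · simpa using hcon i j (Or.inr hj)
  apply hp
  rw [this]
  refine ((isUnit_iff_ne_zero.2 fun h => ?_).map C).map C
  rw [h] at this
  exact h0 (by simpa using this)

lemma not_isUnit_of_coeff {p : K[X][X]} {i j : ℕ} (hij : i ≠ 0 ∨ j ≠ 0)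
    (h : (p.coeff j).coeff i ≠ 0) : ¬ IsUnit p := by
  intro hu
  obtain ⟨r, hr, rfl⟩ := Polynomial.isUnit_iff.1 hu
  obtain ⟨s, -, rfl⟩ := Polynomial.isUnit_iff.1 hr
  apply h
  rw [coeff_C]
  split_ifs with hj
  · rw [coeff_C, if_neg]
    rcases hij with h | h
    · exact h
    · exact absurd hj h
  · simp

/-- An irreducible polynomial over an algebraically closed field remains irreducible over every
extension field, since a factorisation can be specialised. -/
lemma irreducible_map_of_isAlgClosed [IsAlgClosed A] (i2 : A →+* K) {f : A[X][X]}
    (hf : Irreducible f) : Irreducible (f.map (mapRingHom i2)) := by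
  letI := i2.toAlgebra
  have hinj : Function.Injective (Polynomial.map (mapRingHom i2)) :=
    map_injective _ (map_injective _ i2.injective)
  have hf0 : f.map (mapRingHom i2) ≠ 0 := by
    rw [← Polynomial.map_zero (mapRingHom i2)]
    exact hinj.ne hf.ne_zero
  constructor
  · intro hu
    obtain ⟨i, j, hij, hc⟩ := exists_coeff_of_not_isUnit hf.ne_zero hf.not_isUnit
    refine not_isUnit_of_coeff hij ?_ hu
    simpa using hc
  intro g h hgh
  by_contra hcon
  push Not at hcon
  obtain ⟨hg, hh⟩ := hcon
  have hg0 : g ≠ 0 := by rintro rfl; simp at hgh; exact hf0 hgh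
  have hh0 : h ≠ 0 := by rintro rfl; simp at hgh; exact hf0 hgh
  obtain ⟨i, j, hij, hc⟩ := exists_coeff_of_not_isUnit hg0 hg
  obtain ⟨k, l, hkl, hd⟩ := exists_coeff_of_not_isUnit hh0 hh
  obtain ⟨d1, hd1⟩ := exists_box g
  obtain ⟨d2, hd2⟩ := exists_box h
  have e1 := poly2_coeff hd1
  have e2 := poly2_coeff hd2
  set cg : ℕ → K := fun m => (g.coeff m.unpair.2).coeff m.unpair.1 with hcg
  set ch : ℕ → K := fun m => (h.coeff m.unpair.2).coeff m.unpair.1 with hch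
  set S : Set K := cg '' Set.Iio (bd d1) ∪ ch '' Set.Iio (bd d2) ∪
    {((g.coeff j).coeff i)⁻¹, ((h.coeff l).coeff k)⁻¹} with hS
  have hSfin : S.Finite := (((Set.finite_Iio _).image _).union ((Set.finite_Iio _).image _)).union
    (Set.toFinite _)
  set T := Algebra.adjoin A S with hT
  have : Algebra.FiniteType A T :=
    (Subalgebra.fg_iff_finiteType _).1 ⟨hSfin.toFinset, by simp [hT]⟩
  obtain ⟨ψ⟩ := exists_algHom_of_finiteType (A := A) (R := T)
  have hmem : ∀ a ∈ S, a ∈ T := fun a ha => Algebra.subset_adjoin ha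
  have lift : ∀ (c : ℕ → K) D, (∀ m < D, c m ∈ S) → ∃ c' : ℕ → T,
      ∀ m < D, (c' m : K) = c m := by
    intro c D hc
    classical
    exact ⟨fun m => if h : m < D then ⟨c m, hmem _ (hc m h)⟩ else 0, fun m hm => by simp [hm]⟩
  obtain ⟨cg', hcg'⟩ := lift cg (bd d1) fun m hm => Or.inl (Or.inl ⟨m, hm, rfl⟩)
  obtain ⟨ch', hch'⟩ := lift ch (bd d2) fun m hm => Or.inl (Or.inr ⟨m, hm, rfl⟩)
  have m1 : (poly2 cg' (bd d1)).map (mapRingHom (algebraMap T K)) = g := by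
    rw [map_poly2, ← e1]
    ext j i
    simp only [coeff_poly2]
    split_ifs with h
    · exact hcg' _ h
    · rfl
  have m2 : (poly2 ch' (bd d2)).map (mapRingHom (algebraMap T K)) = h := by
    rw [map_poly2, ← e2]
    ext j i
    simp only [coeff_poly2]
    split_ifs with h
    · exact hch' _ h
    · rfl
  have hTi : Function.Injective (Polynomial.map (mapRingHom (algebraMap T K))) :=
    map_injective _ (map_injective _ Subtype.val_injective)
  have e3 : f.map (mapRingHom (algebraMap A T)) = poly2 cg' (bd d1) * poly2 ch' (bd d2) := by
    apply hTi
    rw [Polynomial.map_mul, m1, m2, ← hgh, Polynomial.map_map, mapRingHom_comp]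
    rfl
  have e4 : f = (poly2 cg' (bd d1)).map (mapRingHom (ψ : T →+* A)) *
      (poly2 ch' (bd d2)).map (mapRingHom (ψ : T →+* A)) := by
    rw [← Polynomial.map_mul, ← e3, Polynomial.map_map, mapRingHom_comp]
    have : (ψ : T →+* A).comp (algebraMap A T) = RingHom.id A := ψ.comp_algebraMap
    rw [this]
    simp
  have nz : ∀ (p : T[X][X]) (q : K[X][X]) (i j : ℕ),
      p.map (mapRingHom (algebraMap T K)) = q → (q.coeff j).coeff i ≠ 0 →
      ((q.coeff j).coeff i)⁻¹ ∈ T → (((p.map (mapRingHom (ψ : T →+* A))).coeff j).coeff i) ≠ 0 := by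
    rintro p q i j rfl h1 h2 h3
    simp only [coeff_map, coe_mapRingHom] at h1 h2 h3
    have h4 : (p.coeff j).coeff i * ⟨_, h2⟩ = 1 := by
      apply Subtype.ext
      exact mul_inv_cancel₀ h1
    have h5 := congrArg ψ h4
    rw [map_mul, map_one] at h5
    have h6 : ψ ((p.coeff j).coeff i) = 0 := h3
    rw [h6, zero_mul] at h5
    exact zero_ne_one h5
  rcases hf.isUnit_or_isUnit e4 with hu | hu
  · exact not_isUnit_of_coeff hij (nz _ _ i j m1 hc (hmem _ (Or.inr (Or.inl rfl)))) hu
  · exact not_isUnit_of_coeff hkl (nz _ _ k l m2 hd (hmem _ (Or.inr (Or.inr rfl)))) hu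

lemma Fix.sub {ι : Type} {τ : ι → K →+* K} {a b : K} (ha : Fix τ a) (hb : Fix τ b) :
    Fix τ (a - b) := fun i => by rw [map_sub, ha i, hb i]

/-- The fixed field of `τ`. -/
def fixField {ι : Type} (τ : ι → K →+* K) : Subfield K where
  carrier := {x | Fix τ x}
  zero_mem' i := map_zero _
  one_mem' i := map_one _
  add_mem' ha hb i := by rw [map_add, ha i, hb i]
  mul_mem' ha hb i := by rw [map_mul, ha i, hb i]
  neg_mem' ha i := by rw [map_neg, ha i]
  inv_mem' a ha i := by rw [map_inv₀, ha i]

lemma mem_fixField {ι : Type} {τ : ι → K →+* K} {x : K} : x ∈ fixField τ ↔ Fix τ x := Iff.rfl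

/-- A polynomial is fixed by `τ` coefficientwise iff all its coefficients are fixed. -/
lemma fix_coeff_iff {ι : Type} (τ : ι → K →+* K) (f : K[X][X]) :
    (∀ i j, Fix τ ((f.coeff j).coeff i)) ↔ ∀ k, f.map (mapRingHom (τ k)) = f := by
  constructor
  · intro h k
    ext j i
    simpa using h i j k
  · intro h i j k
    conv_rhs => rw [← h k]
    simp

/-- Over a PAC fixed field, an irreducible curve of positive `Y`-degree has a rational point
whose abscissa avoids the zeros of a given nonzero polynomial `h`: substitute `c + h₁(X) Y`
for `Y`, where `h₁` vanishes at the rational zeros of `h` and `f` does not vanish at the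
points of ordinate `c` above them. -/
lemma exists_zero_avoiding {ι : Type} [IsAlgClosed K] [CharZero K] {τ : ι → K →+* K}
    (hP : PACp τ) {f : K[X][X]} (hfix : ∀ i j, Fix τ ((f.coeff j).coeff i))
    (hf : Irreducible f) (hd : f.natDegree ≠ 0) {h : K[X]} (h0 : h ≠ 0) :
    ∃ a b, Fix τ a ∧ Fix τ b ∧ f.evalEval a b = 0 ∧ h.eval a ≠ 0 := by
  classical
  letI := Classical.choice (α := NormalizedGCDMonoid K[X]) inferInstance
  have hprim := hf.isPrimitive hd
  set Z := h.roots.toFinset.filter (Fix τ) with hZ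
  have hρ : ∀ ρ : K, f.map (evalRingHom ρ) ≠ 0 := by
    intro ρ h1
    have : C (X - C ρ) ∣ f := by
      rw [C_dvd_iff_dvd_coeff]
      intro i
      rw [dvd_iff_isRoot]
      have := congrArg (fun p => p.coeff i) h1
      simpa using this
    exact not_isUnit_X_sub_C ρ (hprim _ this)
  -- the ordinate `c`
  obtain ⟨c, hc⟩ : ∃ c : ℕ, ∀ ρ ∈ Z, (f.map (evalRingHom ρ)).eval (c : K) ≠ 0 := by
    have hfin : (⋃ ρ ∈ Z, {c : ℕ | (f.map (evalRingHom ρ)).eval (c : K) = 0}).Finite := by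
      refine Set.Finite.biUnion Z.finite_toSet fun ρ _ => ?_
      refine Set.Finite.of_finite_image (f := fun c : ℕ => (c : K)) ?_ Nat.cast_injective.injOn
      refine (f.map (evalRingHom ρ)).roots.toFinset.finite_toSet.subset ?_
      rintro _ ⟨c, hc, rfl⟩
      simpa [hρ ρ] using hc
    obtain ⟨c, hc⟩ := hfin.exists_notMem
    refine ⟨c, fun ρ hρ h1 => hc ?_⟩
    simp only [Set.mem_iUnion]
    exact ⟨ρ, hρ, h1⟩
  set h1 : K[X] := ∏ ρ ∈ Z, (X - C ρ) with hh1
  have h1ne : h1 ≠ 0 := Finset.prod_ne_zero_iff.2 fun ρ _ => X_sub_C_ne_zero ρ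
  set ℓ : K[X][X] := C h1 * X + C (C (c : K)) with hℓ
  set f' := f.comp ℓ with hf'
  have hev : ∀ a b, f'.evalEval a b = f.evalEval a (h1.eval a * b + c) := by
    intro a b
    simp only [hf', evalEval, eval_comp, hℓ, eval_add, eval_mul, eval_C, eval_X]
    have key : ∀ p : K[X], (f.eval p).eval a = (f.map (evalRingHom a)).eval (p.eval a) := by
      intro p
      exact (Polynomial.eval_map_apply (f := evalRingHom a) (p := f) p).symm
    rw [key, key]
    simp
  have hmapρ : ∀ ρ : K, f'.map (evalRingHom ρ) =
      (f.map (evalRingHom ρ)).comp (C (h1.eval ρ) * X + C (c : K)) := by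
    intro ρ; simp [hf', hℓ, Polynomial.map_comp]
  have hprim' : f'.IsPrimitive := by
    intro r hr
    by_contra hu
    obtain ⟨ρ, hrρ⟩ : ∃ ρ, r.IsRoot ρ := by
      by_cases hr0 : r = 0
      · exact ⟨0, by simp [hr0]⟩
      · refine IsAlgClosed.exists_root r fun hdeg => hu ?_
        exact Polynomial.isUnit_iff_degree_eq_zero.2 hdeg
    have h2 : f'.map (evalRingHom ρ) = 0 := by
      obtain ⟨q, hq⟩ := hr
      rw [hq, Polynomial.map_mul, map_C]
      have : evalRingHom ρ r = 0 := hrρ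
      rw [this]; simp
    rw [hmapρ] at h2
    by_cases h3 : h1.eval ρ = 0
    · rw [h3] at h2
      have hρZ : ρ ∈ Z := by
        rw [hh1, eval_prod, Finset.prod_eq_zero_iff] at h3
        obtain ⟨ρ', hρ', h4⟩ := h3
        simp only [eval_sub, eval_X, eval_C] at h4
        rwa [sub_eq_zero.1 h4]
      apply hc ρ hρZ
      have := congrArg (eval 0) h2
      simpa [eval_comp] using this
    · rw [comp_eq_zero_iff] at h2
      rcases h2 with h2 | ⟨-, h2⟩
      · exact hρ ρ h2
      · have := congrArg natDegree h2
        rw [natDegree_C, natDegree_linear h3] at this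
        exact one_ne_zero this
  have hirr' : Irreducible f' := by
    rw [hprim'.irreducible_iff_irreducible_map_fraction_map (K := FractionRing K[X])]
    have h2 := (hprim.irreducible_iff_irreducible_map_fraction_map (K := FractionRing K[X])).1 hf
    have h3 : algebraMap K[X] (FractionRing K[X]) h1 ≠ 0 := by
      simpa using h1ne
    letI := invertibleOfNonzero h3
    have h4 := (MulEquiv.irreducible_iff (algEquivCMulXAddC (algebraMap K[X] (FractionRing K[X]) h1)
      (algebraMap K[X] (FractionRing K[X]) (C (c : K)))).toMulEquiv).2 h2
    convert h4 using 1
    show _ = algEquivCMulXAddC _ _ _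
    rw [algEquivCMulXAddC_apply, hf', Polynomial.map_comp, hℓ]
    simp [comp, aeval_def, Polynomial.algebraMap_eq]
  obtain ⟨a, b, ha, hb, hab⟩ := hP f' (by
    rw [fix_coeff_iff] at hfix ⊢
    intro k
    have e1 : h1.map (τ k) = h1 := by
      rw [hh1, Polynomial.map_prod]
      refine Finset.prod_congr rfl fun ρ hρ => ?_
      have : τ k ρ = ρ := (Finset.mem_filter.1 hρ).2 k
      simp [this]
    simp [hf', Polynomial.map_comp, hfix k, hℓ, e1]) hirr'
  have haZ : a ∉ Z := by
    intro haZ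
    have h2 : h1.eval a = 0 := by
      rw [hh1, eval_prod]
      exact Finset.prod_eq_zero haZ (by simp)
    rw [hev, h2, zero_mul, zero_add] at hab
    apply hc a haZ
    rw [← hab]
    simp only [evalEval]
    rw [← coe_evalRingHom a, ← Polynomial.eval_map_apply]
    simp
  refine ⟨a, h1.eval a * b + c, ha, ?_, by rw [← hev, hab], ?_⟩
  · have hh : Fix τ (h1.eval a) := by
      rw [hh1, eval_prod, ← mem_fixField]
      refine Subfield.prod_mem _ fun ρ hρ => ?_
      rw [mem_fixField]
      simpa using ha.sub (Finset.mem_filter.1 hρ).2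
    intro k
    rw [map_add, map_mul, hh k, hb k, map_natCast]
  · intro h2
    apply haZ
    simp [hZ, h0, h2, ha]

end

/-! ### Finite approximations to an extension of an embedding -/

/-- Every permutation representation on a finite set is realised, by an injective equivariant
map, inside the field. -/
def Free {ι A : Type} [Field A] (σ : ι → A →+* A) : Prop :=
  ∀ (n : ℕ) (π : ι → Equiv.Perm (Fin n)), ∃ z : Fin n → A, Function.Injective z ∧
    ∀ i j, σ i (z j) = z (π i j)

/-- Every element lies in a finite set which is stable under `σ`. -/
def FinOrb {ι A : Type} [Field A] (σ : ι → A →+* A) : Prop :=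
  ∀ a : A, ∃ S : Finset A, a ∈ S ∧ ∀ i, ∀ s ∈ S, σ i s ∈ S

lemma FinOrb.finset {ι B : Type} [Field B] {σ : ι → B →+* B} (h : FinOrb σ) (S : Finset B) :
    ∃ T : Finset B, S ⊆ T ∧ ∀ i, ∀ s ∈ T, σ i s ∈ T := by
  classical
  choose T hT1 hT2 using h
  refine ⟨S.biUnion T, fun s hs => Finset.mem_biUnion.2 ⟨s, hs, hT1 s⟩, fun i s hs => ?_⟩
  obtain ⟨a, ha, hs⟩ := Finset.mem_biUnion.1 hs
  exact Finset.mem_biUnion.2 ⟨a, ha, hT2 a i s hs⟩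

/-- A primitive element theorem: for some natural number `t`, all values of `P` at points of
the base field are rational expressions in `P(t)`. There are finitely many intermediate fields,
so infinitely many `t` give the same field, which then contains the coefficients of `P`. -/
lemma exists_primitive_value {L E : Type} [Field L] [Field E] [Algebra L E] [CharZero L]
    [FiniteDimensional L E] (P : E[X]) :
    ∃ t : ℕ, ∀ z : L, P.eval (algebraMap L E z) ∈ IntermediateField.adjoin L {P.eval (t : E)} := by
  classical
  have : CharZero E := charZero_of_injective_algebraMap (algebraMap L E).injective
  have := Field.finite_intermediateField_of_exists_primitive_element L E
    (Field.exists_primitive_element L E)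
  obtain ⟨F, hF⟩ := Finite.exists_infinite_fiber
    (fun t : ℕ => IntermediateField.adjoin L {P.eval (t : E)})
  have hF' : ((fun t : ℕ => IntermediateField.adjoin L {P.eval (t : E)}) ⁻¹' {F}).Infinite :=
    Set.infinite_coe_iff.1 hF
  obtain ⟨T, hT, hTc⟩ := hF'.exists_subset_card_eq (P.natDegree + 1)
  obtain ⟨t, ht⟩ := hF'.nonempty
  refine ⟨t, fun z => ?_⟩
  have ht' : IntermediateField.adjoin L {P.eval (t : E)} = F := ht
  rw [ht']
  have hval : ∀ t ∈ T, P.eval (t : E) ∈ F := by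
    intro t ht
    have h1 : IntermediateField.adjoin L {P.eval (t : E)} = F := hT ht
    rw [← h1]
    exact IntermediateField.mem_adjoin_simple_self L _
  have hP := Lagrange.eq_interpolate (s := T) (v := fun t : ℕ => (t : E)) (f := P)
    Nat.cast_injective.injOn (by
      rw [hTc]
      exact degree_le_natDegree.trans_lt (by exact_mod_cast Nat.lt_succ_self _))
  rw [hP, Lagrange.interpolate_apply, eval_finsetSum]
  refine sum_mem fun i hi => ?_
  rw [eval_mul, eval_C]
  refine mul_mem (hval i hi) ?_
  rw [Lagrange.basis, eval_prod]
  refine prod_mem fun j _ => ?_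
  rw [Lagrange.basisDivisor, eval_mul, eval_C, eval_sub, eval_X, eval_C]
  exact mul_mem (inv_mem (sub_mem (natCast_mem _ _) (natCast_mem _ _)))
    (sub_mem (F.algebraMap_mem z) (natCast_mem _ _))

section
variable {ι A B L K : Type} [Field A] [Field B] [Field L] [Field K]
  [Algebra A[X] L] [IsFractionRing A[X] L] [Algebra L B] [Algebra A[X] B] [IsScalarTower A[X] L B]

lemma algebraMap_injective_B {A B : Type} [Field A] [Field B] (L : Type) [Field L]
    [Algebra A[X] L] [IsFractionRing A[X] L] [Algebra L B] [Algebra A[X] B]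
    [IsScalarTower A[X] L B] : Function.Injective (algebraMap A[X] B) := by
  rw [IsScalarTower.algebraMap_eq A[X] L B]
  exact (algebraMap L B).injective.comp (IsFractionRing.injective A[X] L)

variable (L) in
/-- The equation of the plane curve with generic point `(x, y)`, where `x` is the image of `X`:
an irreducible polynomial dividing all polynomials which vanish at `(x, y)`. -/
lemma exists_curve [Algebra.IsAlgebraic L B] (y : B) :
    ∃ f : A[X][X], Irreducible f ∧ f.natDegree ≠ 0 ∧ aeval y f = 0 ∧
      (∃ i j, (f.coeff j).coeff i = 1) ∧ ∀ T : A[X][X], aeval y T = 0 → f ∣ T := by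
  classical
  have hinj := algebraMap_injective_B (A := A) (B := B) L
  have : FaithfulSMul A[X] B := (faithfulSMul_iff_algebraMap_injective A[X] B).2 hinj
  have halg : IsAlgebraic A[X] y :=
    (IsFractionRing.isAlgebraic_iff A[X] L B).2 (Algebra.IsAlgebraic.isAlgebraic y)
  have hprime : (RingHom.ker (aeval y : A[X][X] →ₐ[A[X]] B)).IsPrime := RingHom.ker_isPrime _
  obtain ⟨g, hg, hgp⟩ := hprime.exists_mem_prime_of_ne_bot (by
    obtain ⟨p, hp, hp0⟩ := halg
    intro h
    have : p ∈ RingHom.ker (aeval y : A[X][X] →ₐ[A[X]] B) := hp0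
    rw [h] at this
    exact hp this)
  have hg0 : aeval y g = 0 := hg
  have hdeg : g.natDegree ≠ 0 := by
    intro h
    rw [natDegree_eq_zero] at h
    obtain ⟨r, rfl⟩ := h
    rw [aeval_C] at hg0
    have : r = 0 := hinj (by rw [hg0, map_zero])
    exact hgp.ne_zero (by rw [this, C_0])
  have hdvd : ∀ T : A[X][X], aeval y T = 0 → g ∣ T := by
    intro T hT
    have hLi : Function.Injective (algebraMap A[X] L) := IsFractionRing.injective A[X] L
    letI := Classical.choice (α := NormalizedGCDMonoid A[X]) inferInstance
    have h1 := ((hgp.irreducible.isPrimitive hdeg).irreducible_iff_irreducible_map_fraction_map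
      (K := L)).1 hgp.irreducible
    have h2 : ∀ T : A[X][X], aeval y T = 0 → aeval y (T.map (algebraMap A[X] L)) = 0 := by
      intro T hT; rwa [aeval_map_algebraMap]
    have h3 : g.map (algebraMap A[X] L) ∣ T.map (algebraMap A[X] L) := by
      have h4 := minpoly.dvd L y (h2 g hg0)
      have h5 := minpoly.dvd L y (h2 T hT)
      exact ((minpoly.irreducible (Algebra.IsIntegral.isIntegral y)).dvd_symm h1 h4).trans h5
    obtain ⟨q, hq⟩ := h3
    obtain ⟨d, hd, hd'⟩ := IsLocalization.integerNormalization_spec (nonZeroDivisors A[X]) q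
    have h7 : C d * T = g * IsLocalization.integerNormalization (nonZeroDivisors A[X]) q := by
      apply map_injective _ hLi
      rw [Polynomial.map_mul, Polynomial.map_mul, hd', hq, map_C, Algebra.smul_def]
      simp only [Polynomial.algebraMap_apply]
      ring
    rcases hgp.dvd_or_dvd (show g ∣ C d * T from ⟨_, h7⟩) with h8 | h8
    · exfalso
      have hd0 : d ≠ 0 := nonZeroDivisors.ne_zero hd
      have := natDegree_le_of_dvd h8 (by simpa using hd0)
      rw [natDegree_C] at this
      omega
    · exact h8
  -- normalise a coefficient
  obtain ⟨i, j, hij⟩ : ∃ i j, (g.coeff j).coeff i ≠ 0 := by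
    by_contra hcon
    push Not at hcon
    exact hgp.ne_zero (by ext j i; simpa using hcon i j)
  have hu : IsUnit (C (C ((g.coeff j).coeff i)⁻¹) : A[X][X]) :=
    ((isUnit_iff_ne_zero.2 (inv_ne_zero hij)).map C).map C
  refine ⟨C (C ((g.coeff j).coeff i)⁻¹) * g, ?_, ?_, ?_, ⟨i, j, ?_⟩, ?_⟩
  · exact (irreducible_isUnit_mul hu).2 hgp.irreducible
  · rwa [natDegree_C_mul (by simpa using hij)]
  · rw [map_mul, hg0, mul_zero]
  · rw [coeff_C_mul, coeff_C_mul, inv_mul_cancel₀ hij]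
  · intro T hT
    exact (hu.mul_left_dvd).2 (hdvd T hT)

variable (σA : ι → A →+* A) (σB : ι → B →+* B)

lemma aeval_map_of_fix (hAB : ∀ i a, σB i (algebraMap A[X] B (C a)) = algebraMap A[X] B (C (σA i a)))
    (hX : ∀ i, σB i (algebraMap A[X] B X) = algebraMap A[X] B X) (i : ι) (y : B) (T : A[X][X]) :
    aeval (σB i y) (T.map (mapRingHom (σA i))) = σB i (aeval y T) := by
  have h1 : (σB i).comp (algebraMap A[X] B) = (algebraMap A[X] B).comp (mapRingHom (σA i)) := by
    ext a
    · simpa using hAB i a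
    · simpa using hX i
  rw [aeval_def, aeval_def, eval₂_map, hom_eval₂, h1]

/-- The equation of a curve with a generic point fixed by `σB` has fixed coefficients. -/
lemma fix_curve (hAB : ∀ i a, σB i (algebraMap A[X] B (C a)) = algebraMap A[X] B (C (σA i a)))
    (hX : ∀ i, σB i (algebraMap A[X] B X) = algebraMap A[X] B X) {y : B} (hy : Fix σB y)
    {f : A[X][X]} (hirr : Irreducible f) (hf : aeval y f = 0) (h1 : ∃ i j, (f.coeff j).coeff i = 1)
    (hdvd : ∀ T : A[X][X], aeval y T = 0 → f ∣ T) :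
    ∀ i j, Fix σA ((f.coeff j).coeff i) := by
  rw [fix_coeff_iff]
  intro k
  have h2 : aeval y (f.map (mapRingHom (σA k))) = 0 := by
    have := aeval_map_of_fix σA σB hAB hX k y f
    rw [hy k, hf, map_zero] at this
    exact this
  obtain ⟨g, hg⟩ := hdvd _ h2
  have hinj : Function.Injective (mapRingHom (σA k)) := map_injective _ (σA k).injective
  have hf0 := hirr.ne_zero
  have hmf0 : f.map (mapRingHom (σA k)) ≠ 0 := by
    rwa [Ne, Polynomial.map_eq_zero_iff hinj]
  have hg0 : g ≠ 0 := by rintro rfl; rw [mul_zero] at hg; exact hmf0 hg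
  have hgd : g.natDegree = 0 := by
    have := congrArg natDegree hg
    rw [natDegree_map_eq_of_injective hinj, natDegree_mul hf0 hg0] at this
    omega
  obtain ⟨p, rfl⟩ := natDegree_eq_zero.1 hgd
  have hp0 : p ≠ 0 := by rintro rfl; simp at hg0
  have hpd : p.natDegree = 0 := by
    have h3 := congrArg leadingCoeff hg
    rw [leadingCoeff_map_of_injective hinj, leadingCoeff_mul, leadingCoeff_C] at h3
    have h4 := congrArg natDegree h3
    rw [natDegree_mul (leadingCoeff_ne_zero.2 hf0) hp0, coe_mapRingHom,
      natDegree_map_eq_of_injective (σA k).injective] at h4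
    omega
  obtain ⟨u, rfl⟩ := natDegree_eq_zero.1 hpd
  obtain ⟨i, j, hij⟩ := h1
  have h5 := congrArg (fun q => (q.coeff j).coeff i) hg
  simp only [coeff_map, coe_mapRingHom, hij, map_one, coeff_mul_C, one_mul] at h5
  rw [hg, ← h5]
  simp

/-- Over a finite `σB`-stable set `S` there is a fixed `y` with `S ⊆ L(y)`: interpolate the
inclusion `S → B` at the points of an equivariant copy of `S` in `A`. -/
lemma exists_fixed_primitive [CharZero A] [Algebra.IsAlgebraic L B]
    (hAB : ∀ i a, σB i (algebraMap A[X] B (C a)) = algebraMap A[X] B (C (σA i a)))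
    (hfree : Free σA) (S : Finset B) (hS : ∀ i, ∀ s ∈ S, σB i s ∈ S) :
    ∃ y : B, Fix σB y ∧ ∀ s ∈ S, s ∈ IntermediateField.adjoin L {y} := by
  classical
  have hinj := algebraMap_injective_B (A := A) (B := B) L
  have hLinj : Function.Injective ((algebraMap A[X] L).comp C) :=
    (IsFractionRing.injective A[X] L).comp C_injective
  have : CharZero L := charZero_of_injective_ringHom hLinj
  have eqv := S.equivFin
  have hπ : ∀ i, ∃ π : Equiv.Perm (Fin S.card), ∀ j,
      σB i (eqv.symm j : B) = (eqv.symm (π j) : B) := by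
    intro i
    let g : Fin S.card → Fin S.card := fun j =>
      eqv ⟨σB i (eqv.symm j : B), hS i _ (eqv.symm j).2⟩
    have hg : Function.Injective g := by
      intro j k hjk
      have h1 := congrArg Subtype.val (eqv.injective hjk)
      exact eqv.symm.injective (Subtype.ext ((σB i).injective h1))
    exact ⟨Equiv.ofBijective g (Finite.injective_iff_bijective.1 hg), fun j => by simp [g]⟩
  choose π hπ using hπ
  obtain ⟨z, hz, hzπ⟩ := hfree _ π
  set E := IntermediateField.adjoin L (S : Set B) with hE
  have hfd : FiniteDimensional L E := by
    apply IntermediateField.finiteDimensional_adjoin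
    intro x _
    exact Algebra.IsIntegral.isIntegral x
  let zL : Fin S.card → L := fun j => algebraMap A[X] L (C (z j))
  have hzL : Function.Injective zL := hLinj.comp hz
  have hzE : Function.Injective fun j => algebraMap L E (zL j) :=
    (algebraMap L E).injective.comp hzL
  let sE : Fin S.card → E := fun j =>
    ⟨eqv.symm j, IntermediateField.subset_adjoin L _ (eqv.symm j).2⟩
  set P : E[X] := Lagrange.interpolate Finset.univ (fun j => algebraMap L E (zL j)) sE with hP
  have hPev : ∀ j, P.eval (algebraMap L E (zL j)) = sE j := fun j =>
    Lagrange.eval_interpolate_at_node _ hzE.injOn (Finset.mem_univ j)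
  obtain ⟨t, ht⟩ := exists_primitive_value (L := L) P
  refine ⟨(P.eval (t : E) : E), ?_, ?_⟩
  · -- the coefficients of `P` are fixed, by uniqueness of interpolation
    intro i
    set PB : B[X] := P.map (algebraMap E B) with hPB
    have hzB : ∀ j, algebraMap E B (algebraMap L E (zL j)) = algebraMap A[X] B (C (z j)) := by
      intro j
      rw [← IsScalarTower.algebraMap_apply L E B, ← IsScalarTower.algebraMap_apply A[X] L B]
    have hPBev : ∀ j, PB.eval (algebraMap A[X] B (C (z j))) = eqv.symm j := by
      intro j
      rw [← hzB, hPB, eval_map_apply, hPev]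
      rfl
    have hdeg : PB.degree < (Finset.univ : Finset (Fin S.card)).card := by
      rw [hPB, degree_map]
      exact Lagrange.degree_interpolate_lt _ hzE.injOn
    have hzB' : Function.Injective fun j => algebraMap A[X] B (C (z j)) :=
      hinj.comp (C_injective.comp hz)
    have hfixP : PB.map (σB i) = PB := by
      refine Polynomial.eq_of_degrees_lt_of_eval_index_eq (s := Finset.univ)
        (v := fun j => algebraMap A[X] B (C (z j))) hzB'.injOn ?_ hdeg ?_
      · rw [degree_map]; exact hdeg
      · intro j _
        obtain ⟨k, rfl⟩ := (π i).surjective j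
        show (PB.map (σB i)).eval (algebraMap A[X] B (C (z (π i k)))) =
          PB.eval (algebraMap A[X] B (C (z (π i k))))
        rw [hPBev, ← hzπ, ← hAB, eval_map_apply, hPBev, hπ]
    have e1 : ((P.eval (t : E) : E) : B) = PB.eval (t : B) := by
      rw [hPB, ← map_natCast (algebraMap E B), eval_map_apply]; rfl
    rw [e1]
    conv_rhs => rw [← hfixP, ← map_natCast (σB i), eval_map_apply]
  · intro s hs
    have h1 := ht (zL (eqv ⟨s, hs⟩))
    rw [hPev] at h1
    have h2 : (IntermediateField.adjoin L {P.eval (t : E)}).map E.val =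
        IntermediateField.adjoin L {((P.eval (t : E) : E) : B)} := by
      rw [IntermediateField.adjoin_map]
      simp
    rw [← h2]
    refine ⟨_, h1, ?_⟩
    simp [sE]

end

/-! ### Specialising a generic point -/

section
variable {A B K : Type} [Field A] [Field B] [Field K]

/-- The specialisation of `L(y)` at a zero of the curve with generic point `y`, where `Φ` is
evaluation at the generic point and `Ψ` evaluation at the chosen zero. -/
def Specialises (Φ : A[X][X] →+* B) (Ψ : A[X][X] →+* K) (s : B) (k : K) : Prop :=
  ∃ (h : A[X]) (Q : A[X][X]), Ψ (C h) ≠ 0 ∧ Φ (C h) * s = Φ Q ∧ Ψ (C h) * k = Ψ Q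

variable {Φ : A[X][X] →+* B} {Ψ : A[X][X] →+* K}

lemma Specialises.unique (H : ∀ T, Φ T = 0 → Ψ T = 0) {s : B} {k k' : K} (h1 : Specialises Φ Ψ s k)
    (h2 : Specialises Φ Ψ s k') : k = k' := by
  obtain ⟨h, Q, hh, hQ, hk⟩ := h1
  obtain ⟨h', Q', hh', hQ', hk'⟩ := h2
  have h3 : Φ (C h' * Q - C h * Q') = 0 := by
    rw [map_sub, map_mul, map_mul, ← hQ, ← hQ']; ring
  have h4 := H _ h3
  rw [map_sub, map_mul, map_mul, ← hk, ← hk'] at h4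
  have h5 : (Ψ (C h) * Ψ (C h')) * (k - k') = 0 := by rw [← h4]; ring
  exact sub_eq_zero.1 ((mul_eq_zero.1 h5).resolve_left (mul_ne_zero hh hh'))

lemma Specialises.add {s s' : B} {k k' : K} (h1 : Specialises Φ Ψ s k)
    (h2 : Specialises Φ Ψ s' k') : Specialises Φ Ψ (s + s') (k + k') := by
  obtain ⟨h, Q, hh, hQ, hk⟩ := h1
  obtain ⟨h', Q', hh', hQ', hk'⟩ := h2
  refine ⟨h * h', C h' * Q + C h * Q', ?_, ?_, ?_⟩
  · rw [C_mul, map_mul]; exact mul_ne_zero hh hh'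
  · rw [C_mul, map_mul, map_add, map_mul, map_mul, ← hQ, ← hQ']; ring
  · rw [C_mul, map_mul, map_add, map_mul, map_mul, ← hk, ← hk']; ring

lemma Specialises.mul {s s' : B} {k k' : K} (h1 : Specialises Φ Ψ s k)
    (h2 : Specialises Φ Ψ s' k') : Specialises Φ Ψ (s * s') (k * k') := by
  obtain ⟨h, Q, hh, hQ, hk⟩ := h1
  obtain ⟨h', Q', hh', hQ', hk'⟩ := h2
  refine ⟨h * h', Q * Q', ?_, ?_, ?_⟩
  · rw [C_mul, map_mul]; exact mul_ne_zero hh hh'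
  · rw [C_mul, map_mul, map_mul, ← hQ, ← hQ']; ring
  · rw [C_mul, map_mul, map_mul, ← hk, ← hk']; ring

end

section
variable {ι A B L K : Type} [Field A] [Field B] [Field L] [Field K]
  [Algebra A[X] L] [IsFractionRing A[X] L] [Algebra L B] [Algebra A[X] B] [IsScalarTower A[X] L B]

variable (A) in
lemma clear_denominators [Algebra.IsAlgebraic L B] {y s : B}
    (hs : s ∈ IntermediateField.adjoin L {y}) :
    ∃ (h : A[X]) (Q : A[X][X]), h ≠ 0 ∧ algebraMap A[X] B h * s = aeval y Q := by
  have h1 : s ∈ Algebra.adjoin L {y} := by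
    rw [← IntermediateField.adjoin_simple_toSubalgebra_of_isAlgebraic
      (Algebra.IsAlgebraic.isAlgebraic y)]
    exact hs
  rw [Algebra.adjoin_singleton_eq_range_aeval] at h1
  obtain ⟨p, rfl⟩ := h1
  obtain ⟨d, hd, hd'⟩ := IsLocalization.integerNormalization_spec (nonZeroDivisors A[X]) p
  refine ⟨d, IsLocalization.integerNormalization (nonZeroDivisors A[X]) p,
    nonZeroDivisors.ne_zero hd, ?_⟩
  · rw [← aeval_map_algebraMap L, hd', ← algebraMap_smul L d p, map_smul, Algebra.smul_def,
      ← IsScalarTower.algebraMap_apply]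
    rfl

variable (L) in
/-- An embedding `i2` of `A` into `K` extends to `B`, as far as finitely many elements of `B` are
concerned. -/
lemma exists_partial_extension [IsAlgClosed A] [CharZero A] [IsAlgClosed K] [CharZero K]
    [Algebra.IsAlgebraic L B] {σA : ι → A →+* A} {σB : ι → B →+* B} {τ : ι → K →+* K}
    (hAB : ∀ i a, σB i (algebraMap A[X] B (C a)) = algebraMap A[X] B (C (σA i a)))
    (hX : ∀ i, σB i (algebraMap A[X] B X) = algebraMap A[X] B X)
    (hfree : Free σA) (horb : FinOrb σB) (hP : PACp τ) (i2 : A →+* K)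
    (hi2 : ∀ i a, i2 (σA i a) = τ i (i2 a)) (S : Finset B) :
    ∃ F : B → K, (∀ a ∈ S, ∀ b ∈ S, a + b ∈ S → F (a + b) = F a + F b) ∧
      (∀ a ∈ S, ∀ b ∈ S, a * b ∈ S → F (a * b) = F a * F b) ∧
      (∀ c, algebraMap A[X] B (C c) ∈ S → F (algebraMap A[X] B (C c)) = i2 c) ∧
      (∀ i, ∀ b ∈ S, σB i b ∈ S → F (σB i b) = τ i (F b)) := by
  classical
  obtain ⟨T, hST, hT⟩ := horb.finset S
  obtain ⟨y, hy, hTy⟩ := exists_fixed_primitive (L := L) σA σB hAB hfree T hT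
  obtain ⟨f, hirr, hdeg, hfy, h1, hdvd⟩ := exists_curve (A := A) L y
  have hfix := fix_curve σA σB hAB hX hy hirr hfy h1 hdvd
  have hden : ∀ s : B, ∃ (h : A[X]) (Q : A[X][X]), h ≠ 0 ∧
      (s ∈ T → algebraMap A[X] B h * s = aeval y Q) := by
    intro s
    by_cases hs : s ∈ T
    · obtain ⟨h, Q, h0, hQ⟩ := clear_denominators A (hTy s hs)
      exact ⟨h, Q, h0, fun _ => hQ⟩
    · exact ⟨1, 0, one_ne_zero, fun h => absurd h hs⟩
  choose h Q h0 hQ using hden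
  have hinj2 : Function.Injective (mapRingHom i2) := map_injective _ i2.injective
  obtain ⟨a, b, ha, hb, hab, hh⟩ := exists_zero_avoiding (h := (∏ s ∈ T, h s).map i2) hP
    (f := f.map (mapRingHom i2))
    (by
      intro i j k
      rw [coeff_map, coe_mapRingHom, coeff_map, ← hi2, hfix i j k])
    (irreducible_map_of_isAlgClosed i2 hirr)
    (by rwa [natDegree_map_eq_of_injective hinj2])
    (by
      rw [Ne, Polynomial.map_eq_zero_iff i2.injective]
      exact Finset.prod_ne_zero_iff.2 fun s _ => h0 s)
  let Φ : A[X][X] →+* B := (aeval y : A[X][X] →ₐ[A[X]] B)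
  let Ψ : A[X][X] →+* K := (evalEvalRingHom a b).comp (mapRingHom (mapRingHom i2))
  have hΦC : ∀ p : A[X], Φ (C p) = algebraMap A[X] B p := fun p => aeval_C y p
  have hΨC : ∀ p : A[X], Ψ (C p) = (p.map i2).eval a := by
    intro p; simp [Ψ]
  have H : ∀ T, Φ T = 0 → Ψ T = 0 := by
    intro T hT
    obtain ⟨q, rfl⟩ := hdvd T hT
    rw [map_mul]
    have : Ψ f = 0 := hab
    rw [this, zero_mul]
  have hex : ∀ s : B, ∃ k : K, s ∈ T → Specialises Φ Ψ s k := by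
    intro s
    by_cases hs : s ∈ T
    · have h2 : Ψ (C (h s)) ≠ 0 := by
        rw [hΨC]
        rw [Polynomial.map_prod, eval_prod] at hh
        exact (Finset.prod_ne_zero_iff.1 hh) s hs
      exact ⟨Ψ (Q s) / Ψ (C (h s)), fun _ => ⟨h s, Q s, h2, by rw [hΦC]; exact hQ s hs,
        mul_div_cancel₀ _ h2⟩⟩
    · exact ⟨0, fun h => absurd h hs⟩
  choose F hF using hex
  refine ⟨F, ?_, ?_, ?_, ?_⟩
  · intro s hs t ht hst
    exact (hF _ (hST hst)).unique H ((hF s (hST hs)).add (hF t (hST ht)))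
  · intro s hs t ht hst
    exact (hF _ (hST hst)).unique H ((hF s (hST hs)).mul (hF t (hST ht)))
  · intro c hc
    refine (hF _ (hST hc)).unique H ⟨1, C (C c), ?_, ?_, ?_⟩
    · simp
    · simp [hΦC]
    · rw [hΨC, hΨC]; simp
  · intro i s hs hs'
    refine (hF _ (hST hs')).unique H ?_
    obtain ⟨p, q, hp, hq, hk⟩ := hF s (hST hs)
    have hΦσ : ∀ q, Φ (q.map (mapRingHom (σA i))) = σB i (Φ q) := by
      intro q
      have := aeval_map_of_fix σA σB hAB hX i y q
      rwa [hy i] at this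
    have hΨσ' : Ψ.comp (mapRingHom (mapRingHom (σA i))) = (τ i).comp Ψ := by
      ext c
      · simp [Ψ, hi2]
      · simp [Ψ, ha i]
      · simp [Ψ, hb i]
    have hΨσ : ∀ q, Ψ (q.map (mapRingHom (σA i))) = τ i (Ψ q) := fun q =>
      RingHom.congr_fun hΨσ' q
    have hCp : C (p.map (σA i)) = (C p : A[X][X]).map (mapRingHom (σA i)) := by simp
    refine ⟨p.map (σA i), q.map (mapRingHom (σA i)), ?_, ?_, ?_⟩
    · rw [hCp, hΨσ]
      exact (_root_.map_ne_zero _).2 hp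
    · rw [hCp, hΦσ, hΦσ, ← map_mul, hq]
    · rw [hCp, hΨσ, hΨσ, ← map_mul, hk]

end

/-! ### The back-and-forth argument -/

section
variable {ι R : Type} [CommRing R]

/-- The element `a` lies in a finite set which is stable under `σ`. -/
def OrbAt (σ : ι → R →+* R) (a : R) : Prop :=
  ∃ S : Set R, S.Finite ∧ a ∈ S ∧ ∀ i, ∀ s ∈ S, σ i s ∈ S

lemma OrbAt.add {σ : ι → R →+* R} {a b : R} (ha : OrbAt σ a) (hb : OrbAt σ b) :
    OrbAt σ (a + b) := by
  obtain ⟨S, hS, haS, hSσ⟩ := ha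
  obtain ⟨T, hT, hbT, hTσ⟩ := hb
  refine ⟨Set.image2 (· + ·) S T, hS.image2 _ hT, ⟨a, haS, b, hbT, rfl⟩, ?_⟩
  rintro i _ ⟨s, hs, t, ht, rfl⟩
  exact ⟨σ i s, hSσ i s hs, σ i t, hTσ i t ht, (map_add _ _ _).symm⟩

lemma OrbAt.mul {σ : ι → R →+* R} {a b : R} (ha : OrbAt σ a) (hb : OrbAt σ b) :
    OrbAt σ (a * b) := by
  obtain ⟨S, hS, haS, hSσ⟩ := ha
  obtain ⟨T, hT, hbT, hTσ⟩ := hb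
  refine ⟨Set.image2 (· * ·) S T, hS.image2 _ hT, ⟨a, haS, b, hbT, rfl⟩, ?_⟩
  rintro i _ ⟨s, hs, t, ht, rfl⟩
  exact ⟨σ i s, hSσ i s hs, σ i t, hTσ i t ht, (map_mul _ _ _).symm⟩

lemma orbAt_polynomial {σ : ι → R →+* R} (h : ∀ a, OrbAt σ a) (p : R[X]) :
    OrbAt (fun i => mapRingHom (σ i)) p := by
  have hX : OrbAt (fun i => mapRingHom (σ i)) (X : R[X]) :=
    ⟨{X}, Set.finite_singleton _, rfl, by rintro i _ rfl; simp⟩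
  induction p using Polynomial.induction_on with
  | C a =>
    obtain ⟨S, hS, haS, hSσ⟩ := h a
    refine ⟨C '' S, hS.image _, ⟨a, haS, rfl⟩, ?_⟩
    rintro i _ ⟨s, hs, rfl⟩
    exact ⟨σ i s, hSσ i s hs, by simp⟩
  | add p q hp hq => exact hp.add hq
  | monomial n a hp =>
    rw [pow_succ, ← mul_assoc]
    exact hp.mul hX

end

section
variable {ι A K K' : Type} [Field A] [Field K] [Field K'] [Algebra A[X] K]

/-- One step of the back-and-forth: the algebraic closure `B` of `A(x)` in `K` embeds over `A`
into an ultrapower of `K'`. -/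
lemma exists_extension_aux (L : Type) [Field L] [Algebra A[X] L] [IsFractionRing A[X] L]
    [Algebra L K] [IsScalarTower A[X] L K] [IsAlgClosed A] [CharZero A] [IsAlgClosed K] [CharZero K]
    [IsAlgClosed K'] [CharZero K']
    {σ : ι → A →+* A} {τ : ι → K →+* K} {τ' : ι → K' →+* K'}
    (hAK : ∀ i a, τ i (algebraMap A[X] K (C a)) = algebraMap A[X] K (C (σ i a)))
    (hX : ∀ i, τ i (algebraMap A[X] K X) = algebraMap A[X] K X)
    (hfree : Free σ) (horb : FinOrb σ) (hP : PACp τ') (i' : A →+* K')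
    (hi' : ∀ i a, i' (σ i a) = τ' i (i' a)) :
    ∃ (B : Type) (_ : Field B) (_ : IsAlgClosed B) (_ : CharZero B) (σB : ι → B →+* B)
      (_ : Free σB) (_ : FinOrb σB) (j : A →+* B) (jK : B →+* K) (b : B)
      (I : Type) (U : Ultrafilter I) (F : B →+* UP K' U),
      (∀ a, jK (j a) = algebraMap A[X] K (C a)) ∧ (∀ i a, j (σ i a) = σB i (j a)) ∧
      (∀ i c, jK (σB i c) = τ i (jK c)) ∧
      jK b = algebraMap A[X] K X ∧ (∀ a, F (j a) = upDiag U (i' a)) ∧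
      ∀ i c, F (σB i c) = upS U τ' i (F c) := by
  classical
  have hinj : Function.Injective (algebraMap A[X] K) := algebraMap_injective_B L
  have : FaithfulSMul A[X] K := (faithfulSMul_iff_algebraMap_injective A[X] K).2 hinj
  let B := algebraicClosure L K
  have hBC : IsAlgClosed B := IsAlgClosure.isAlgClosed L
  have hB0 : CharZero B := charZero_of_injective_algebraMap (algebraMap B K).injective.of_comp
  have hmem : ∀ b : K, b ∈ B ↔ IsAlgebraic A[X] b := fun b => by
    rw [IsFractionRing.isAlgebraic_iff A[X] L K, mem_algebraicClosure_iff]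
  have hτ : ∀ i, ∀ b ∈ B, τ i b ∈ B := by
    intro i b hb
    rw [hmem] at hb ⊢
    obtain ⟨p, hp, hp0⟩ := hb
    refine ⟨p.map (mapRingHom (σ i)), ?_, ?_⟩
    · rwa [Ne, Polynomial.map_eq_zero_iff (map_injective _ (σ i).injective)]
    · rw [aeval_map_of_fix σ τ hAK hX, hp0, map_zero]
  let σB : ι → B →+* B := fun i => (τ i).restrict B B (hτ i)
  have hσB : ∀ i b, ((σB i b : B) : K) = τ i b := fun i b => rfl
  have hAB : ∀ i a, σB i (algebraMap A[X] B (C a)) = algebraMap A[X] B (C (σ i a)) :=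
    fun i a => Subtype.ext (hAK i a)
  have hXB : ∀ i, σB i (algebraMap A[X] B X) = algebraMap A[X] B X :=
    fun i => Subtype.ext (hX i)
  have horbB : FinOrb σB := by
    intro b
    obtain ⟨p, hp, hp0⟩ := (hmem b).1 b.2
    have hA : ∀ a, OrbAt σ a := by
      intro a
      obtain ⟨S, haS, hS⟩ := horb a
      exact ⟨S, S.finite_toSet, haS, hS⟩
    obtain ⟨T, hT, hpT, hTσ⟩ := orbAt_polynomial (orbAt_polynomial hA) p
    let S : Set K := ⋃ q ∈ T, {k | q ≠ 0 ∧ aeval k q = 0}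
    have hS : S.Finite := by
      refine hT.biUnion fun q _ => ?_
      by_cases hq : q = 0
      · simp [hq]
      · refine (q.rootSet_finite K).subset fun k hk => ?_
        exact (mem_rootSet).2 ⟨hq, hk.2⟩
    have hS' : ((↑) ⁻¹' S : Set B).Finite := hS.preimage Subtype.val_injective.injOn
    refine ⟨hS'.toFinset, ?_, ?_⟩
    · rw [Set.Finite.mem_toFinset]
      exact Set.mem_biUnion hpT ⟨hp, hp0⟩
    · intro i s hs
      rw [Set.Finite.mem_toFinset] at hs ⊢
      obtain ⟨q, hq, hq0, hqs⟩ : ∃ q ∈ T, q ≠ 0 ∧ aeval (s : K) q = 0 := by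
        obtain ⟨q, hq, hs⟩ := Set.mem_iUnion₂.1 hs
        exact ⟨q, hq, hs⟩
      refine Set.mem_biUnion (hTσ i q hq) ⟨?_, ?_⟩
      · rw [coe_mapRingHom, Ne, Polynomial.map_eq_zero_iff (map_injective _ (σ i).injective)]
        exact hq0
      · rw [hσB, coe_mapRingHom, aeval_map_of_fix σ τ hAK hX, hqs, map_zero]
  have hBinj : Function.Injective (algebraMap A[X] B) := algebraMap_injective_B L
  choose F hF1 hF2 hF3 hF4 using
    exists_partial_extension (B := B) L hAB hXB hfree horbB hP i' hi'
  let U : Ultrafilter (Finset B) := Ultrafilter.of Filter.atTop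
  have hU : ∀ b : B, ∀ᶠ S : Finset B in (U : Filter (Finset B)), b ∈ S := by
    intro b
    have h1 := Filter.eventually_ge_atTop ({b} : Finset B)
    refine (Filter.Eventually.filter_mono (Ultrafilter.of_le _) h1).mono fun S hS => ?_
    exact hS (Finset.mem_singleton_self b)
  let G : B → UP K' U := fun b => ((fun S => F S b : Finset B → K') : UP K' U)
  have hGC : ∀ c, G (algebraMap A[X] B (C c)) = upDiag U (i' c) := by
    intro c
    exact (up_coe_eq U).2 ((hU _).mono fun S hS => hF3 S c hS)
  let GR : B →+* UP K' U :=
    { toFun := G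
      map_one' := by
        have := hGC 1
        rwa [C_1, map_one, map_one, map_one] at this
      map_zero' := by
        have := hGC 0
        rwa [C_0, map_zero, map_zero, map_zero] at this
      map_add' := fun a b => (up_coe_eq U).2 (by
        filter_upwards [hU a, hU b, hU (a + b)] with S h1 h2 h3 using hF1 S a h1 b h2 h3)
      map_mul' := fun a b => (up_coe_eq U).2 (by
        filter_upwards [hU a, hU b, hU (a * b)] with S h1 h2 h3 using hF2 S a h1 b h2 h3) }
  refine ⟨B, inferInstance, hBC, hB0, σB, ?_, horbB, (algebraMap A[X] B).comp C,
    algebraMap B K, algebraMap A[X] B X, Finset B, U, GR, ?_, ?_, ?_, ?_, ?_, ?_⟩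
  · intro n π
    obtain ⟨z, hz, hzπ⟩ := hfree n π
    refine ⟨fun j => algebraMap A[X] B (C (z j)), hBinj.comp (C_injective.comp hz), fun i j => ?_⟩
    rw [hAB, hzπ]
  · intro a; rfl
  · intro i a; exact (hAB i a).symm
  · intro i c; rfl
  · rfl
  · intro a; exact hGC a
  · intro i c
    exact (up_coe_eq U).2 (by
      filter_upwards [hU c, hU (σB i c)] with S h1 h2 using hF4 S i c h1 h2)

end

section
variable {ι A K K' : Type} [Field A] [Field K] [Field K']

lemma exists_extension [IsAlgClosed A] [CharZero A] [IsAlgClosed K] [CharZero K]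
    [IsAlgClosed K'] [CharZero K']
    {σ : ι → A →+* A} {τ : ι → K →+* K} {τ' : ι → K' →+* K'}
    (hfree : Free σ) (horb : FinOrb σ) (hP : PACp τ')
    (i : A →+* K) (hi : ∀ k a, i (σ k a) = τ k (i a)) (i' : A →+* K')
    (hi' : ∀ k a, i' (σ k a) = τ' k (i' a)) {x : K} (hx : Fix τ x) :
    ∃ (B : Type) (_ : Field B) (_ : IsAlgClosed B) (_ : CharZero B) (σB : ι → B →+* B)
      (_ : Free σB) (_ : FinOrb σB) (j : A →+* B) (jK : B →+* K) (b : B)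
      (I : Type) (U : Ultrafilter I) (F : B →+* UP K' U),
      (∀ a, jK (j a) = i a) ∧ (∀ k a, j (σ k a) = σB k (j a)) ∧
      (∀ k c, jK (σB k c) = τ k (jK c)) ∧
      jK b = x ∧ (∀ a, F (j a) = upDiag U (i' a)) ∧
      ∀ k c, F (σB k c) = upS U τ' k (F c) := by
  by_cases hxi : ∃ a, i a = x
  · obtain ⟨a, rfl⟩ := hxi
    exact ⟨A, inferInstance, inferInstance, inferInstance, σ, hfree, horb, RingHom.id A, i, a,
      Unit, Ultrafilter.of ⊤, (upDiag _).comp i', fun _ => rfl, fun _ _ => rfl, hi, rfl,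
      fun _ => rfl, fun k c => by rw [RingHom.comp_apply, RingHom.comp_apply, hi', upS_diag]⟩
  · letI : Algebra A K := i.toAlgebra
    have htr : Transcendental A x := by
      intro halg
      refine hxi ?_
      have h1 := minpoly.irreducible (A := A) (x := x) halg.isIntegral
      obtain ⟨a, ha⟩ := minpoly.mem_range_of_degree_eq_one A x
        (IsAlgClosed.degree_eq_one_of_irreducible A h1)
      exact ⟨a, ha⟩
    letI : Algebra A[X] K := (aeval x : A[X] →ₐ[A] K).toRingHom.toAlgebra
    have hinj : Function.Injective (algebraMap A[X] K) := transcendental_iff_injective.1 htr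
    have : FaithfulSMul A[X] K := (faithfulSMul_iff_algebraMap_injective A[X] K).2 hinj
    letI : Algebra (FractionRing A[X]) K := FractionRing.liftAlgebra A[X] K
    have hC : ∀ a, algebraMap A[X] K (C a) = i a := fun a => aeval_C x a
    have hX : algebraMap A[X] K X = x := aeval_X x
    have := exists_extension_aux (FractionRing A[X]) (σ := σ) (τ := τ) (τ' := τ')
      (fun k a => by rw [hC, hC, hi]) (fun k => by rw [hX, hx k]) hfree horb hP i' hi'
    simp only [hC, hX] at this
    exact this

end

/-- Two fields with operators, algebraically closed of characteristic zero, whose fixed fields are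
pseudo algebraically closed, satisfy the same formulas at the images of a tuple of fixed elements
of a common algebraically closed subfield with operators `A`, provided that `A` realises all finite
permutation representations and the operators have finite orbits on `A`. For a quantifier, `A` is
enlarged by the algebraic closure of `A(x)`, and one of the two fields is replaced by an
ultrapower. -/
theorem span_sat {ι : Type} [Finite ι] (φ : Fm) :
    ∀ (A K K' : Type) [Field A] [Field K] [Field K'] [IsAlgClosed A] [CharZero A]
      [IsAlgClosed K] [CharZero K] [IsAlgClosed K'] [CharZero K']
      (σ : ι → A →+* A) (τ : ι → K →+* K) (τ' : ι → K' →+* K')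
      (_ : Free σ) (_ : FinOrb σ) (_ : PACp τ) (_ : PACp τ')
      (i : A →+* K) (_ : ∀ k a, i (σ k a) = τ k (i a)) (i' : A →+* K')
      (_ : ∀ k a, i' (σ k a) = τ' k (i' a)) (s : List A) (_ : ∀ a ∈ s, Fix σ a),
      φ.sat (Fix τ) (s.map i) ↔ φ.sat (Fix τ') (s.map i') := by
  have hev : ∀ (A K : Type) [Field A] [Field K] [CharZero A] [CharZero K]
      (i : A →+* K) (s : List A) (t : Tm), t.ev (s.map i) = i (t.ev s) := by
    intro A K _ _ _ _ i s t
    induction t with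
    | var n =>
      simp only [Tm.ev]
      rw [← map_zero i, List.getD_map]
    | cst q => simp [Tm.ev]
    | add t u ht hu => simp [Tm.ev, ht, hu]
    | mul t u ht hu => simp [Tm.ev, ht, hu]
    | neg t ht => simp [Tm.ev, ht]
  induction φ with
  | bot => intros; rfl
  | eq t u =>
    intro A K K' _ _ _ _ _ _ _ _ _ σ τ τ' _ _ _ _ i _ i' _ s _
    simp only [Fm.sat, hev, i.injective.eq_iff, i'.injective.eq_iff]
  | imp φ ψ hφ hψ =>
    intro A K K' _ _ _ _ _ _ _ _ _ σ τ τ' h1 h2 h3 h4 i hi i' hi' s hs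
    simp only [Fm.sat]
    rw [hφ A K K' σ τ τ' h1 h2 h3 h4 i hi i' hi' s hs, hψ A K K' σ τ τ' h1 h2 h3 h4 i hi i' hi' s hs]
  | all φ hφ =>
    have key : ∀ (A K K' : Type) [Field A] [Field K] [Field K'] [IsAlgClosed A] [CharZero A]
        [IsAlgClosed K] [CharZero K] [IsAlgClosed K'] [CharZero K']
        (σ : ι → A →+* A) (τ : ι → K →+* K) (τ' : ι → K' →+* K')
        (_ : Free σ) (_ : FinOrb σ) (_ : PACp τ) (_ : PACp τ')
        (i : A →+* K) (_ : ∀ k a, i (σ k a) = τ k (i a)) (i' : A →+* K')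
        (_ : ∀ k a, i' (σ k a) = τ' k (i' a)) (s : List A) (_ : ∀ a ∈ s, Fix σ a),
        (Fm.all φ).sat (Fix τ') (s.map i') → (Fm.all φ).sat (Fix τ) (s.map i) := by
      intro A K K' _ _ _ _ _ _ _ _ _ σ τ τ' h1 h2 h3 h4 i hi i' hi' s hs hsat x hx
      obtain ⟨B, _, _, _, σB, hfB, hoB, j, jK, b, I, U, F, e1, e2, e3, rfl, e4, e5⟩ :=
        exists_extension h1 h2 h4 i hi i' hi' hx
      have hb : Fix σB b := fun k => jK.injective (by rw [e3, hx k])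
      have h5 := hφ B K (UP K' U) σB τ (upS U τ') hfB hoB h3 (up_PACp U τ' h4) jK e3 F e5
        (s.map j ++ [b]) (by
          intro a ha
          rw [List.mem_append] at ha
          rcases ha with ha | ha
          · obtain ⟨c, hc, rfl⟩ := List.mem_map.1 ha
            intro k
            rw [← e2, hs c hc k]
          · rw [List.mem_singleton.1 ha]; exact hb)
      rw [← sat_diag U τ'] at hsat
      have h6 := hsat (F b) (fun k => by rw [← e5, hb k])
      have e6 : (s.map j ++ [b]).map jK = s.map i ++ [jK b] := by
        simp [e1, Function.comp_def]
      have e7 : (s.map j ++ [b]).map F = (s.map i').map (upDiag U) ++ [F b] := by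
        simp [e4, Function.comp_def]
      rw [e6, e7] at h5
      exact h5.2 h6
    intro A K K' _ _ _ _ _ _ _ _ _ σ τ τ' h1 h2 h3 h4 i hi i' hi' s hs
    exact ⟨key A K' K σ τ' τ h1 h2 h4 h3 i' hi' i hi s hs,
      key A K K' σ τ τ' h1 h2 h3 h4 i hi i' hi' s hs⟩

/-! ### Absolute Galois groups -/

section
variable {k Ω : Type} [Field k] [Field Ω] [Algebra k Ω] {e : ℕ}

/-- A family of automorphisms, viewed as a family of ring endomorphisms. -/
def autHom (σ : Fin e → (Ω ≃ₐ[k] Ω)) : Fin e → Ω →+* Ω :=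
  fun i => ((σ i : Ω →ₐ[k] Ω) : Ω →+* Ω)

lemma autHom_apply (σ : Fin e → (Ω ≃ₐ[k] Ω)) (i : Fin e) (x : Ω) : autHom σ i x = σ i x := rfl

lemma finOrb_autHom [Algebra.IsAlgebraic k Ω] (σ : Fin e → (Ω ≃ₐ[k] Ω)) : FinOrb (autHom σ) := by
  classical
  intro a
  have ha : minpoly k a ≠ 0 := minpoly.ne_zero (Algebra.IsIntegral.isIntegral a)
  refine ⟨((minpoly k a).rootSet_finite Ω).toFinset, ?_, ?_⟩
  · rw [Set.Finite.mem_toFinset, mem_rootSet]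
    exact ⟨ha, minpoly.aeval k a⟩
  · intro i s hs
    rw [Set.Finite.mem_toFinset, mem_rootSet] at hs ⊢
    refine ⟨ha, ?_⟩
    rw [autHom_apply]
    have := congrArg (σ i) hs.2
    rwa [map_zero, ← AlgEquiv.coe_toAlgHom, ← aeval_algHom_apply] at this

lemma fix_of_dense [IsGalois k Ω] {σ : Fin e → (Ω ≃ₐ[k] Ω)}
    (h : Dense ((Subgroup.closure (Set.range σ) : Subgroup (Ω ≃ₐ[k] Ω)) : Set (Ω ≃ₐ[k] Ω)))
    {x : Ω} (hx : Fix (autHom σ) x) : x ∈ Set.range (algebraMap k Ω) := by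
  rw [InfiniteGalois.mem_range_algebraMap_iff_fixed]
  let S : Subgroup (Ω ≃ₐ[k] Ω) := MulAction.stabilizer (Ω ≃ₐ[k] Ω) x
  have hopen : IsOpen (S : Set (Ω ≃ₐ[k] Ω)) := stabilizer_isOpen_of_isIntegral x
  have hcl : IsClosed (S : Set (Ω ≃ₐ[k] Ω)) := S.isClosed_of_isOpen hopen
  have h1 : Subgroup.closure (Set.range σ) ≤ S := by
    rw [Subgroup.closure_le]
    rintro _ ⟨i, rfl⟩
    exact hx i
  intro g
  have h2 : (g : Ω ≃ₐ[k] Ω) ∈ closure (S : Set (Ω ≃ₐ[k] Ω)) := closure_mono h1 (h g)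
  rw [hcl.closure_eq] at h2
  exact h2

lemma dense_of_fix [IsGalois k Ω] {σ : Fin e → (Ω ≃ₐ[k] Ω)}
    (h : ∀ x, Fix (autHom σ) x → x ∈ Set.range (algebraMap k Ω)) :
    Dense ((Subgroup.closure (Set.range σ) : Subgroup (Ω ≃ₐ[k] Ω)) : Set (Ω ≃ₐ[k] Ω)) := by
  let H : ClosedSubgroup (Ω ≃ₐ[k] Ω) :=
    ⟨(Subgroup.closure (Set.range σ)).topologicalClosure, Subgroup.isClosed_topologicalClosure _⟩
  have h1 : IntermediateField.fixedField (H : Subgroup (Ω ≃ₐ[k] Ω)) = ⊥ := by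
    rw [eq_bot_iff]
    intro x hx
    rw [IntermediateField.mem_fixedField_iff] at hx
    rw [IntermediateField.mem_bot]
    refine h x fun i => hx (σ i) ?_
    exact Subgroup.le_topologicalClosure _ (Subgroup.subset_closure ⟨i, rfl⟩)
  have h2 := InfiniteGalois.fixingSubgroup_fixedField H
  rw [h1, IntermediateField.fixingSubgroup_bot] at h2
  intro g
  have h3 : g ∈ (H : Subgroup (Ω ≃ₐ[k] Ω)) := by rw [← h2]; trivial
  exact h3

/-- A permutation representation of the Galois group is realised by elements of `Ω`. The elements
are linear combinations of a normal basis. -/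
lemma exists_perm_points [CharZero k] [IsGalois k Ω] {n : ℕ} [TopologicalSpace (Equiv.Perm (Fin n))]
    [DiscreteTopology (Equiv.Perm (Fin n))] (φ : (Ω ≃ₐ[k] Ω) →* Equiv.Perm (Fin n))
    (hφ : Continuous φ) :
    ∃ z : Fin n → Ω, Function.Injective z ∧ ∀ g j, g (z j) = z (φ g j) := by
  classical
  have hker : (φ.ker : Set (Ω ≃ₐ[k] Ω)) ∈ nhds 1 := by
    have h1 : IsOpen (φ ⁻¹' {1}) := (isOpen_discrete _).preimage hφ
    exact h1.mem_nhds (by simp)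
  obtain ⟨E, hE1, hE2, hE3⟩ := (krullTopology_mem_nhds_one_iff_of_normal k Ω _).1 hker
  have : IsGalois k E := {}
  have hsurj : Function.Surjective (AlgEquiv.restrictNormalHom (F := k) (K₁ := Ω) E) :=
    AlgEquiv.restrictNormalHom_surjective Ω
  let r := AlgEquiv.restrictNormalHom (F := k) (K₁ := Ω) E
  choose l hl using hsurj
  have hkey : ∀ s t : Ω ≃ₐ[k] Ω, r s = r t → φ s = φ t := by
    intro s t hst
    have h1 : s⁻¹ * t ∈ E.fixingSubgroup := by
      rw [IntermediateField.mem_fixingSubgroup_iff]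
      intro x hx
      have h2 : r (s⁻¹ * t) = 1 := by rw [map_mul, map_inv, hst, inv_mul_cancel]
      have h3 := AlgEquiv.restrictNormalHom_apply E (s⁻¹ * t) ⟨x, hx⟩
      change ((r (s⁻¹ * t) ⟨x, hx⟩ : E) : Ω) = _ at h3
      rw [h2] at h3
      exact h3.symm
    have h4 : φ (s⁻¹ * t) = 1 := hE3 h1
    rw [map_mul, map_inv, inv_mul_eq_one] at h4
    exact h4
  let b := IsGalois.normalBasis k E
  let w : (E ≃ₐ[k] E) → Fin n → k := fun g j => (((φ (l g))⁻¹ j : Fin n) : ℕ)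
  refine ⟨fun j => ((∑ g, w g j • b g : E) : Ω), ?_, ?_⟩
  · intro i j hij
    have h1 : (∑ g, w g i • b g : E) = ∑ g, w g j • b g := Subtype.ext hij
    have h2 := congrArg (fun x => b.repr x 1) h1
    simp only [b.repr_sum_self] at h2
    have h3 : φ (l 1) = 1 := by
      rw [hkey (l 1) 1 (by rw [map_one]; exact hl 1), map_one]
    simp only [w, h3, inv_one, Equiv.Perm.one_apply, Nat.cast_inj] at h2
    exact Fin.ext h2
  · intro s j
    have h1 : ∀ x : E, s (x : Ω) = ((r s x : E) : Ω) := fun x =>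
      (AlgEquiv.restrictNormalHom_apply E s x).symm
    show s ((∑ g, w g j • b g : E) : Ω) = ((∑ g, w g (φ s j) • b g : E) : Ω)
    rw [h1]
    congr 1
    rw [map_sum]
    refine Fintype.sum_equiv (Equiv.mulLeft (r s)) _ _ fun g => ?_
    rw [Algebra.smul_def, map_mul, AlgEquiv.commutes, ← Algebra.smul_def, Equiv.coe_mulLeft]
    have e1 : r s (b g) = b (r s * g) := by
      rw [IsGalois.normalBasis_apply g, IsGalois.normalBasis_apply (r s * g)]; rfl
    have e2 : φ (l (r s * g)) = φ s * φ (l g) := by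
      rw [← map_mul]
      apply hkey
      rw [map_mul]
      show r (l (r s * g)) = r s * r (l g)
      have h5 : ∀ g, r (l g) = g := hl
      rw [h5, h5]
    rw [e1]
    congr 1
    simp only [w, e2, mul_inv_rev, Equiv.Perm.mul_apply]
    rw [← Equiv.Perm.mul_apply (φ s)⁻¹, inv_mul_cancel, Equiv.Perm.one_apply]

/-- If a profinite group has every `e`-generated finite group as a quotient, any `e` topological
generators can be mapped to any `e` given elements of a finite group: apply the hypothesis to a
suitable subgroup of a power of the target and count homomorphisms. -/
lemma exists_hom_of_generators {Γ P : Type} [Group Γ] [TopologicalSpace Γ] [Group P] [Finite P]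
    [TopologicalSpace P] [DiscreteTopology P]
    (hΓ : ∀ (G : Type) [Group G] [Finite G] [TopologicalSpace G] [DiscreteTopology G],
      (∃ g : Fin e → G, Subgroup.closure (Set.range g) = ⊤) →
      ∃ φ : Γ →* G, Function.Surjective φ ∧ Continuous φ)
    {σ : Fin e → Γ} (hσ : Dense ((Subgroup.closure (Set.range σ) : Subgroup Γ) : Set Γ))
    (π : Fin e → P) : ∃ φ : Γ →* P, Continuous φ ∧ ∀ i, φ (σ i) = π i := by
  classical
  let h : Fin e → ((Fin e → P) → P) := fun i ρ => ρ i
  let H : Subgroup ((Fin e → P) → P) := Subgroup.closure (Set.range h)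
  letI : TopologicalSpace H := ⊥
  haveI : DiscreteTopology H := ⟨rfl⟩
  obtain ⟨ψ, hψs, hψc⟩ := hΓ H ⟨fun i => ⟨h i, Subgroup.subset_closure ⟨i, rfl⟩⟩, by
    have e1 : Set.range (fun i => (⟨h i, Subgroup.subset_closure ⟨i, rfl⟩⟩ : H)) =
        ((↑) : H → _) ⁻¹' (Set.range h) := by
      ext ⟨x, hx⟩
      simp [Subtype.ext_iff]
    rw [e1]
    exact Subgroup.closure_closure_coe_preimage⟩
  let q : (Fin e → P) → (Γ →* P) := fun ρ =>
    ((Pi.evalMonoidHom (fun _ : Fin e → P => P) ρ).comp H.subtype).comp ψ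
  have hq : ∀ ρ, Continuous (q ρ) := fun ρ =>
    (continuous_of_discreteTopology (f := fun x : H => (x : (Fin e → P) → P) ρ)).comp hψc
  have hinj : Function.Injective fun ρ : Fin e → P => fun i => q ρ (σ i) := by
    intro ρ ρ' hρ
    have h1 : Set.EqOn (q ρ) (q ρ') (Subgroup.closure (Set.range σ) : Subgroup Γ) := by
      apply MonoidHom.eqOn_closure
      rintro _ ⟨i, rfl⟩
      exact congrFun hρ i
    have h2 : (q ρ : Γ → P) = q ρ' := Continuous.ext_on hσ (hq ρ) (hq ρ') h1
    funext i
    obtain ⟨γ, hγ⟩ := hψs ⟨h i, Subgroup.subset_closure ⟨i, rfl⟩⟩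
    have h3 := congrFun h2 γ
    simpa [q, hγ, h] using h3
  obtain ⟨ρ, hρ⟩ := (Finite.injective_iff_surjective.1 hinj) π
  exact ⟨q ρ, hq ρ, fun i => congrFun hρ i⟩

lemma free_autHom [CharZero k] [IsGalois k Ω]
    (hΓ : ∀ (G : Type) [Group G] [Finite G] [TopologicalSpace G] [DiscreteTopology G],
      (∃ g : Fin e → G, Subgroup.closure (Set.range g) = ⊤) →
      ∃ φ : (Ω ≃ₐ[k] Ω) →* G, Function.Surjective φ ∧ Continuous φ)
    {σ : Fin e → (Ω ≃ₐ[k] Ω)} (h : ∀ x, Fix (autHom σ) x → x ∈ Set.range (algebraMap k Ω)) :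
    Free (autHom σ) := by
  intro n π
  letI : TopologicalSpace (Equiv.Perm (Fin n)) := ⊥
  haveI : DiscreteTopology (Equiv.Perm (Fin n)) := ⟨rfl⟩
  obtain ⟨φ, hφc, hφ⟩ := exists_hom_of_generators hΓ (dense_of_fix h) π
  obtain ⟨z, hz, hzφ⟩ := exists_perm_points φ hφc
  exact ⟨z, hz, fun i j => by rw [autHom_apply, hzφ, hφ]⟩

end

/-! ### Uniqueness of the theory -/

section
variable {M : IntermediateField ℚ (AlgebraicClosure ℚ)} {e : ℕ}

/-- The two `ℚ`-algebra structures on the algebraic closure agree, though not by definition. -/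
lemma isAlgebraic_algebraicClosure_rat :
    @Algebra.IsAlgebraic ℚ (AlgebraicClosure ℚ) _ _ DivisionRing.toRatAlgebra := by
  have h := AlgebraicClosure.isAlgebraic ℚ
  have e : (AlgebraicClosure.instAlgebra ℚ : Algebra ℚ (AlgebraicClosure ℚ)) =
    DivisionRing.toRatAlgebra := Subsingleton.elim _ _
  rw [e] at h
  exact h

lemma isAlgebraic_ringHom_iff {A B : Type} [Field A] [Field B] [CharZero A] [CharZero B]
    (f : A →+* B) (x : A) : IsAlgebraic ℚ (f x) ↔ IsAlgebraic ℚ x :=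
  isAlgebraic_algHom_iff f.toRatAlgHom f.injective

lemma PACp_of_isPACIn (hM : IsPACIn M) {σ : Fin e → AlgebraicClosure ℚ →+* AlgebraicClosure ℚ}
    (hσ : ∀ x, Fix σ x ↔ x ∈ M) : PACp σ := by
  intro f hf hirr
  obtain ⟨d, hd⟩ := exists_box f
  let c : ℕ → M := fun m => ⟨(f.coeff m.unpair.2).coeff m.unpair.1, (hσ _).1 (hf _ _)⟩
  have h1 : (poly2 c (bd d)).map (mapRingHom (algebraMap M (AlgebraicClosure ℚ))) = f := by
    rw [map_poly2]
    exact poly2_coeff hd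
  have hnat : (MvPolynomial.map (σ := Fin 2) (algebraMap M (AlgebraicClosure ℚ))).comp
      (Bivariate.equivMvPolynomial M : M[X][X] →+* MvPolynomial (Fin 2) M) =
      (Bivariate.equivMvPolynomial (AlgebraicClosure ℚ) :
        (AlgebraicClosure ℚ)[X][X] →+* MvPolynomial (Fin 2) (AlgebraicClosure ℚ)).comp
        (mapRingHom (mapRingHom (algebraMap M (AlgebraicClosure ℚ)))) := by
    ext <;> simp
  have h2 := RingHom.congr_fun hnat (poly2 c (bd d))
  simp only [RingHom.comp_apply, coe_mapRingHom] at h2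
  rw [h1] at h2
  obtain ⟨a, b, hab⟩ := hM (Bivariate.equivMvPolynomial M (poly2 c (bd d))) (by
    rw [show (MvPolynomial.map (algebraMap M (AlgebraicClosure ℚ)))
      (Bivariate.equivMvPolynomial M (poly2 c (bd d))) =
        Bivariate.equivMvPolynomial (AlgebraicClosure ℚ) f from h2]
    exact (MulEquiv.irreducible_iff (Bivariate.equivMvPolynomial (AlgebraicClosure ℚ))).2 hirr)
  refine ⟨a, b, (hσ _).2 a.2, (hσ _).2 b.2, ?_⟩
  have hev : (algebraMap M (AlgebraicClosure ℚ)).comp ((MvPolynomial.eval ![a, b]).comp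
      (Bivariate.equivMvPolynomial M : M[X][X] →+* MvPolynomial (Fin 2) M)) =
      (evalEvalRingHom (a : AlgebraicClosure ℚ) (b : AlgebraicClosure ℚ)).comp
        (mapRingHom (mapRingHom (algebraMap M (AlgebraicClosure ℚ)))) := by
    ext <;> simp
  have h3 := RingHom.congr_fun hev (poly2 c (bd d))
  simp only [RingHom.comp_apply, coe_mapRingHom] at h3
  rw [h1] at h3
  have h4 : f.evalEval (a : AlgebraicClosure ℚ) (b : AlgebraicClosure ℚ) =
      algebraMap M (AlgebraicClosure ℚ) (MvPolynomial.eval ![a, b]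
        (Bivariate.equivMvPolynomial M (poly2 c (bd d)))) := h3.symm
  rw [h4, hab, map_zero]

/-- The fixed field of `τ` has the same algebraic part as `M`, up to isomorphism. -/
lemma exists_embedding {K : Type} [Field K] [CharZero K] (τ : Fin e → K →+* K)
    (hroot : ∀ p : ℚ[X], p.Monic →
      ((∃ x ∈ M, aeval x p = 0) ↔ ∃ x : K, Fix τ x ∧ aeval x p = 0)) :
    ∃ θ : M →+* K, (∀ x, Fix τ (θ x)) ∧
      ∀ y : K, Fix τ y → IsAlgebraic ℚ y → ∃ x, θ x = y := by
  let N : Subfield K := fixField τ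
  let N' := algebraicClosure ℚ N
  have := isAlgebraic_algebraicClosure_rat
  have : Algebra.IsAlgebraic ℚ M := ⟨fun x => (isAlgebraic_ringHom_iff
    (algebraMap M (AlgebraicClosure ℚ)) x).1 (Algebra.IsAlgebraic.isAlgebraic _)⟩
  have : Algebra.IsAlgebraic ℚ N' := ⟨fun x => (isAlgebraic_ringHom_iff
    (algebraMap N' N) x).1 (mem_algebraicClosure_iff.1 x.2)⟩
  have h1 : Nonempty (M →ₐ[ℚ] N') := by
    apply Field.nonempty_algHom_of_exists_root
    intro x
    have hm : (minpoly ℚ x).Monic := minpoly.monic (Algebra.IsIntegral.isIntegral x)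
    obtain ⟨y, hy, hy0⟩ := (hroot _ hm).1 ⟨x, x.2, by
      have := minpoly.aeval ℚ x
      have h := congrArg (algebraMap M (AlgebraicClosure ℚ)) this
      rwa [map_zero, ← aeval_algebraMap_apply] at h⟩
    have hyN : aeval (⟨y, hy⟩ : N) (minpoly ℚ x) = 0 := by
      apply (algebraMap N K).injective
      rw [map_zero, ← aeval_algebraMap_apply]
      exact hy0
    have hyA : (⟨y, hy⟩ : N) ∈ N' := by
      rw [mem_algebraicClosure_iff]
      exact ⟨_, hm.ne_zero, hyN⟩
    refine ⟨⟨⟨y, hy⟩, hyA⟩, ?_⟩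
    apply (algebraMap N' N).injective
    rw [map_zero, ← aeval_algebraMap_apply]
    exact hyN
  have h2 : Nonempty (N' →ₐ[ℚ] M) := by
    apply Field.nonempty_algHom_of_exists_root
    intro y
    have hm : (minpoly ℚ y).Monic := minpoly.monic (Algebra.IsIntegral.isIntegral y)
    obtain ⟨x, hx, hx0⟩ := (hroot _ hm).2 ⟨(y : N), (y : N).2, by
      have := minpoly.aeval ℚ y
      have h := congrArg (algebraMap N K) (congrArg (algebraMap N' N) this)
      rwa [map_zero, map_zero, ← aeval_algebraMap_apply, ← aeval_algebraMap_apply] at h⟩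
    refine ⟨⟨x, hx⟩, ?_⟩
    apply (algebraMap M (AlgebraicClosure ℚ)).injective
    rw [map_zero, ← aeval_algebraMap_apply]
    exact hx0
  obtain ⟨α⟩ := h1
  obtain ⟨β⟩ := h2
  refine ⟨((algebraMap N K).comp (algebraMap N' N)).comp α.toRingHom, fun x => ?_, fun y hy hya => ?_⟩
  · exact ((α x : N') : N).2
  · have hyA : (⟨y, hy⟩ : N) ∈ N' := by
      rw [mem_algebraicClosure_iff]
      obtain ⟨p, hp, hp0⟩ := hya
      refine ⟨p, hp, ?_⟩
      apply (algebraMap N K).injective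
      rw [map_zero, ← aeval_algebraMap_apply]
      exact hp0
    -- an injective endomorphism of an algebraic extension is bijective
    obtain ⟨z, hz⟩ := (Algebra.IsAlgebraic.algHom_bijective (α.comp β)).surjective ⟨⟨y, hy⟩, hyA⟩
    refine ⟨β z, ?_⟩
    have h3 : α (β z) = ⟨⟨y, hy⟩, hyA⟩ := hz
    show ((α (β z) : N') : N).1 = y
    rw [h3]

/-- An embedding of `k` into the fixed field of `τ` extends to its algebraic closure, on which
`τ` then induces automorphisms. -/
lemma exists_lift_aut {k Ω K : Type} [Field k] [Field Ω] [Field K] [Algebra k Ω]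
    [IsAlgClosed Ω] [Algebra.IsAlgebraic k Ω] [IsAlgClosed K] (θ : k →+* K) (τ : Fin e → K →+* K)
    (hθ : ∀ x, Fix τ (θ x)) :
    ∃ (Θ : Ω →+* K) (σ : Fin e → (Ω ≃ₐ[k] Ω)), (∀ x, Θ (algebraMap k Ω x) = θ x) ∧
      ∀ i a, Θ (autHom σ i a) = τ i (Θ a) := by
  letI : Algebra k K := θ.toAlgebra
  let Θ : Ω →ₐ[k] K := IsAlgClosed.lift
  letI : Algebra Ω K := Θ.toRingHom.toAlgebra
  haveI : IsScalarTower k Ω K := IsScalarTower.of_algebraMap_eq fun x => (Θ.commutes x).symm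
  have : IsAlgClosure k Ω := ⟨inferInstance, inferInstance⟩
  have : Normal k Ω := IsAlgClosure.normal k _
  let T : Fin e → K →ₐ[k] K := fun i => { τ i with commutes' := fun x => hθ x i }
  exact ⟨Θ.toRingHom, fun i => (T i).restrictNormal' Ω, fun x => Θ.commutes x,
    fun i a => (T i).restrictNormal_commutes Ω a⟩

/-- The completeness statement: the theory of `M` agrees with that of the fixed field of `τ` on any
algebraically closed field of characteristic zero, as soon as this fixed field is PAC and has the
same rational polynomials with roots as `M`. Nothing is required of the group generated by `τ`: the
root condition forces `τ` to restrict to generators of `Gal(M)`. -/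
theorem sat_iff (hPAC : IsPACIn M) (hGal : GalFreeRank e M) {K : Type} [Field K] [IsAlgClosed K]
    [CharZero K] (τ : Fin e → K →+* K) (hP : PACp τ)
    (hroot : ∀ p : ℚ[X], p.Monic →
      ((∃ x ∈ M, aeval x p = 0) ↔ ∃ x : K, Fix τ x ∧ aeval x p = 0)) (φ : Fm) :
    φ.sat (Fix τ) [] ↔ φ.sat (fun x : AlgebraicClosure ℚ => x ∈ M) [] := by
  obtain ⟨θ, hθ1, hθ2⟩ := exists_embedding τ hroot
  have := isAlgebraic_algebraicClosure_rat
  have : Algebra.IsAlgebraic M (AlgebraicClosure ℚ) := Algebra.IsAlgebraic.tower_top (K := ℚ) M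
  have : IsAlgClosure M (AlgebraicClosure ℚ) := ⟨inferInstance, inferInstance⟩
  have : Normal M (AlgebraicClosure ℚ) := IsAlgClosure.normal M _
  have : IsGalois M (AlgebraicClosure ℚ) := {}
  obtain ⟨Θ, σ, hΘ, hσ⟩ := exists_lift_aut (Ω := AlgebraicClosure ℚ) θ τ hθ1
  have hfix : ∀ x, Fix (autHom σ) x → x ∈ Set.range (algebraMap M (AlgebraicClosure ℚ)) := by
    intro x hx
    obtain ⟨m, hm⟩ := hθ2 (Θ x) (fun i => by rw [← hσ, hx i])
      ((isAlgebraic_ringHom_iff Θ x).2 (Algebra.IsAlgebraic.isAlgebraic x))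
    refine ⟨m, Θ.injective ?_⟩
    rw [hΘ, hm]
  have hfix' : ∀ x, Fix (autHom σ) x ↔ x ∈ M := by
    intro x
    refine ⟨fun hx => ?_, fun hx i => ?_⟩
    · obtain ⟨m, rfl⟩ := hfix x hx
      exact m.2
    · exact (σ i).commutes ⟨x, hx⟩
  have hP' := PACp_of_isPACIn hPAC hfix'
  have h := span_sat φ (AlgebraicClosure ℚ) K (AlgebraicClosure ℚ) (autHom σ) τ (autHom σ)
    (free_autHom hGal.2 hfix) (finOrb_autHom σ) hP hP' Θ hσ (RingHom.id _)
    (fun _ _ => rfl) [] (by simp)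
  rw [List.map_nil, List.map_nil] at h
  rw [h]
  have e1 : Fix (autHom σ) = fun x => x ∈ M := funext fun x => propext (hfix' x)
  rw [e1]

/-- `M` itself is the fixed field of finitely many automorphisms. -/
lemma exists_fix_iff (hGal : GalFreeRank e M) :
    ∃ σ : Fin e → AlgebraicClosure ℚ →+* AlgebraicClosure ℚ, ∀ x, Fix σ x ↔ x ∈ M := by
  have := isAlgebraic_algebraicClosure_rat
  have : Algebra.IsAlgebraic M (AlgebraicClosure ℚ) := Algebra.IsAlgebraic.tower_top (K := ℚ) M
  have : IsAlgClosure M (AlgebraicClosure ℚ) := ⟨inferInstance, inferInstance⟩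
  have : Normal M (AlgebraicClosure ℚ) := IsAlgClosure.normal M _
  have : IsGalois M (AlgebraicClosure ℚ) := {}
  obtain ⟨g, hg⟩ := hGal.1
  refine ⟨autHom g, fun x => ⟨fun hx => ?_, fun hx i => ?_⟩⟩
  · obtain ⟨m, rfl⟩ := fix_of_dense hg hx
    exact m.2
  · exact (g i).commutes ⟨x, hx⟩

end

/-! ### Deciding by search for propositional refutations -/

/-- A clause is the disjunction of its literals; the literal `(i, b)` says that variable `i` has
value `b`. -/
abbrev Clause : Type := List (ℕ × Bool)

/-- The valuation `v` satisfies the clause `C`. -/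
def Clause.holds (v : ℕ → Bool) (C : Clause) : Prop := ∃ p ∈ C, v p.1 = p.2

/-- Every assignment to the first `B` variables, coded by the binary digits of a number, falsifies
a clause of `L`. -/
def Refutes (L : List Clause) (B : ℕ) : Prop :=
  ∀ w < 2 ^ B, ∃ C ∈ L, ∀ p ∈ C, p.1 < B ∧ w.testBit p.1 ≠ p.2

lemma primrec_two_pow : Primrec fun n : ℕ => 2 ^ n := by
  refine (Primrec.nat_rec₁ (f := fun _ x => x + x) 1
    (Primrec.nat_add.comp Primrec.snd Primrec.snd)).of_eq fun n => ?_
  induction n with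
  | zero => rfl
  | succ n ih => rw [pow_succ, ← ih]; show _ + _ = _; ring

lemma primrec_testBit : Primrec₂ Nat.testBit := by
  have h : PrimrecRel fun w i : ℕ => w / 2 ^ i % 2 = 1 :=
    Primrec.eq.comp (Primrec.nat_mod.comp (Primrec.nat_div.comp Primrec.fst
      (primrec_two_pow.comp Primrec.snd)) (Primrec.const 2)) (Primrec.const 1)
  exact h.decide.of_eq fun w i => (Nat.testBit_eq_decide_div_mod_eq).symm

lemma primrecRel_refutes : PrimrecRel Refutes := by
  have h1 : PrimrecRel fun (p : ℕ × Bool) (z : ℕ × ℕ) => p.1 < z.1 ∧ z.2.testBit p.1 ≠ p.2 := by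
    refine PrimrecPred.and ?_ ?_
    · exact Primrec.nat_lt.comp (Primrec.fst.comp Primrec.fst) (Primrec.fst.comp Primrec.snd)
    · refine PrimrecPred.not ?_
      exact Primrec.eq.comp (primrec_testBit.comp (Primrec.snd.comp Primrec.snd)
        (Primrec.fst.comp Primrec.fst)) (Primrec.snd.comp Primrec.fst)
  have h2 : PrimrecRel fun (L : List Clause) (z : ℕ × ℕ) =>
      ∃ C ∈ L, ∀ p ∈ C, p.1 < z.1 ∧ z.2.testBit p.1 ≠ p.2 := h1.forall_mem_list.exists_mem_list
  have h3 : PrimrecRel fun (w : ℕ) (y : List Clause × ℕ) =>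
      ∃ C ∈ y.1, ∀ p ∈ C, p.1 < y.2 ∧ w.testBit p.1 ≠ p.2 :=
    h2.comp (Primrec.fst.comp Primrec.snd)
      (Primrec.pair (Primrec.snd.comp Primrec.snd) Primrec.fst)
  have h4 : PrimrecPred fun y : List Clause × ℕ => ∀ w ∈ List.range (2 ^ y.2),
      ∃ C ∈ y.1, ∀ p ∈ C, p.1 < y.2 ∧ w.testBit p.1 ≠ p.2 :=
    h3.forall_mem_list.comp (Primrec.list_range.comp (primrec_two_pow.comp Primrec.snd))
      Primrec.id
  exact h4.of_eq fun y => by simp [Refutes]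

lemma not_refutes {L : List Clause} {B : ℕ} {v : ℕ → Bool} (hv : ∀ C ∈ L, C.holds v) :
    ¬ Refutes L B := by
  intro h
  obtain ⟨C, hC, hp⟩ := h (Nat.ofBits fun i : Fin B => v i) (Nat.ofBits_lt_two_pow _)
  obtain ⟨p, hpC, hvp⟩ := hv C hC
  obtain ⟨h1, h2⟩ := hp p hpC
  rw [Nat.testBit_ofBits_lt _ _ h1] at h2
  exact h2 hvp

lemma exists_bound (L : List Clause) : ∃ B, ∀ C ∈ L, ∀ p ∈ C, p.1 < B := by
  refine ⟨(L.flatten.map Prod.fst).sum + 1, fun C hC p hp => Nat.lt_succ_of_le ?_⟩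
  exact List.single_le_sum (fun _ _ => Nat.zero_le _) _
    (List.mem_map.2 ⟨p, List.mem_flatten.2 ⟨C, hC, hp⟩, rfl⟩)

lemma exists_refutes {L : List Clause} (h : ∀ v : ℕ → Bool, ∃ C ∈ L, ¬ C.holds v) :
    ∃ B, Refutes L B := by
  obtain ⟨B, hB⟩ := exists_bound L
  refine ⟨B, fun w _ => ?_⟩
  obtain ⟨C, hC, hn⟩ := h w.testBit
  exact ⟨C, hC, fun p hp => ⟨hB C hC p hp, fun h0 => hn ⟨p, hp, h0⟩⟩⟩

lemma isClosed_holds (C : Clause) : IsClosed {v | C.holds v} := by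
  have : {v : ℕ → Bool | C.holds v} = ⋃ p ∈ {p | p ∈ C}, {v | v p.1 = p.2} := by
    ext v; simp [Clause.holds]
  rw [this]
  refine Set.Finite.isClosed_biUnion (List.finite_toSet C) fun p _ => ?_
  exact isClosed_eq (continuous_apply _) continuous_const

/-- Compactness of propositional logic. -/
lemma exists_finite_unsat (cl : ℕ → Clause) (D : Clause)
    (h : ∀ v, (∀ n, (cl n).holds v) → ¬ D.holds v) :
    ∃ n, ∀ v : ℕ → Bool, ∃ C ∈ (List.range n).map cl ++ [D], ¬ C.holds v := by
  by_contra hcon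
  push Not at hcon
  let S : ℕ → Set (ℕ → Bool) := fun n => {v | D.holds v} ∩ ⋂ i < n, {v | (cl i).holds v}
  have hcl : ∀ n, IsClosed (S n) := fun n => (isClosed_holds D).inter
    (isClosed_biInter fun i _ => isClosed_holds _)
  obtain ⟨v, hv⟩ := IsCompact.nonempty_iInter_of_sequence_nonempty_isCompact_isClosed S
    (fun n v hv => ⟨hv.1, by
      have := hv.2
      simp only [Set.mem_iInter, Set.mem_ofPred_eq] at this ⊢
      exact fun i hi => this i (by omega)⟩)
    (fun n => by
      obtain ⟨v, hv⟩ := hcon n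
      refine ⟨v, hv D (by simp), ?_⟩
      simp only [Set.mem_iInter, Set.mem_ofPred_eq]
      exact fun i hi => hv _ (List.mem_append_left _
        (List.mem_map.2 ⟨i, List.mem_range.2 hi, rfl⟩)))
    (hcl 0).isCompact hcl
  simp only [Set.mem_iInter] at hv
  refine h v (fun n => ?_) (hv 0).1
  have := (hv (n + 1)).2
  simp only [Set.mem_iInter, Set.mem_ofPred_eq] at this
  exact this n (by omega)

lemma computable_firstClauses {cl : ℕ → Clause} (hcl : Computable cl) :
    Computable fun n => (List.range n).map cl := by
  have h : Computable fun n : ℕ =>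
      (Nat.rec [] (fun i (L : List Clause) => L ++ [cl i]) n : List Clause) :=
    Computable.nat_rec (f := fun n : ℕ => n) (g := fun _ => ([] : List Clause))
      (h := fun _ (q : ℕ × List Clause) => q.2 ++ [cl q.1]) Computable.id (Computable.const _)
      (Computable.list_concat.comp (Computable.snd.comp Computable.snd)
        (hcl.comp (Computable.fst.comp Computable.snd)))
  refine h.of_eq fun n => ?_
  induction n with
  | zero => rfl
  | succ n ih => rw [List.range_succ, List.map_append, ← ih]; rfl

/-- If a computable, satisfiable set of clauses determines the values of the variables `g c`, then
these values are computable. -/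
theorem exists_computable_of_clauses {cl : ℕ → Clause} (hcl : Computable cl) {g : ℕ → ℕ}
    (hg : Computable g) {P : ℕ → Prop} (hex : ∃ v, ∀ n, (cl n).holds v)
    (hP : ∀ v, (∀ n, (cl n).holds v) → ∀ c, v (g c) = true ↔ P c) :
    ∃ f : ℕ → Bool, Computable f ∧ ∀ c, f c = true ↔ P c := by
  classical
  -- the finitely many clauses of stage `m`, together with the clause `g c = b`
  let L : ℕ → ℕ → Bool → List Clause := fun c m b =>
    (List.range m.unpair.1).map cl ++ [ [(g c, b)] ]
  obtain ⟨v, hv⟩ := hex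
  have hsound : ∀ c m, ¬ Refutes (L c m (v (g c))) m.unpair.2 := by
    intro c m
    refine not_refutes (v := v) fun C hC => ?_
    rcases List.mem_append.1 hC with h | h
    · obtain ⟨i, -, rfl⟩ := List.mem_map.1 h
      exact hv i
    · rw [List.mem_singleton.1 h]
      exact ⟨_, List.mem_singleton.2 rfl, rfl⟩
  have hcomplete : ∀ c, ∃ m, Refutes (L c m (!(v (g c)))) m.unpair.2 := by
    intro c
    obtain ⟨n, hn⟩ := exists_finite_unsat cl [(g c, !(v (g c)))] (by
      rintro w hw ⟨p, hp, hwp⟩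
      rw [List.mem_singleton.1 hp] at hwp
      have : w (g c) = v (g c) := Bool.eq_iff_iff.2 ((hP w hw c).trans (hP v hv c).symm)
      rw [this] at hwp
      simp at hwp)
    obtain ⟨B, hB⟩ := exists_refutes hn
    exact ⟨Nat.pair n B, by simpa [L] using hB⟩
  have hL : ∀ b, Computable₂ fun c m => decide (Refutes (L c m b) m.unpair.2) := fun b => by
    refine Computable₂.comp (f := fun (l : List Clause) B => decide (Refutes l B))
      primrecRel_refutes.decide.to_comp ?_ ?_
    · refine Computable.list_append.comp ((computable_firstClauses hcl).comp
        (Computable.fst.comp (Computable.unpair.comp Computable.snd))) ?_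
      exact Computable.list_cons.comp (Computable.list_cons.comp ((hg.comp Computable.fst).pair
        (Computable.const b)) (Computable.const [])) (Computable.const [])
    · exact Computable.snd.comp (Computable.unpair.comp Computable.snd)
  let F : ℕ → ℕ → Option Bool := fun c m =>
    bif decide (Refutes (L c m false) m.unpair.2) then some true
    else bif decide (Refutes (L c m true) m.unpair.2) then some false else none
  have hF : Computable₂ F := Computable.cond (hL false) (Computable.const _)
    (Computable.cond (hL true) (Computable.const _) (Computable.const _))
  have hF1 : ∀ c m b, b ∈ F c m → b = v (g c) := by
    intro c m b hb
    have := hsound c m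
    simp only [F] at hb
    cases hvc : v (g c) <;> rw [hvc] at this
    · simp only [this, decide_false, cond_false] at hb
      cases hd : decide (Refutes (L c m true) m.unpair.2) <;> rw [hd] at hb <;> simp_all
    · simp only [this, decide_false, cond_false] at hb
      cases hd : decide (Refutes (L c m false) m.unpair.2) <;> rw [hd] at hb <;> simp_all
  have hF2 : ∀ c, ∃ m b, b ∈ F c m := by
    intro c
    obtain ⟨m, hm⟩ := hcomplete c
    refine ⟨m, ?_⟩
    simp only [F]
    cases hvc : v (g c) <;> rw [hvc] at hm <;>
      cases hd : decide (Refutes (L c m false) m.unpair.2) <;> simp_all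
  have hpart : Partrec fun c => Nat.rfindOpt (F c) := Partrec.rfindOpt hF
  refine ⟨fun c => v (g c), ?_, fun c => hP v hv c⟩
  refine hpart.of_eq fun c => ?_
  obtain ⟨b, hb⟩ := Part.dom_iff_mem.1 (Nat.rfindOpt_dom.2 (hF2 c))
  obtain ⟨m, hm⟩ := Nat.rfindOpt_spec hb
  rw [hF1 c m b hm] at hb
  exact Part.eq_some_iff.2 hb

/-! ### Automation for primitive recursive functions -/

attribute [fun_prop] Primrec

section
variable {α β γ : Type} [Primcodable α] [Primcodable β] [Primcodable γ]

@[fun_prop] lemma pr_id : Primrec fun x : α => x := Primrec.id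

@[fun_prop] lemma pr_const (c : β) : Primrec fun _ : α => c := Primrec.const c

@[fun_prop] lemma pr_comp {g : β → γ} {f : α → β} (hg : Primrec g) (hf : Primrec f) :
    Primrec fun x => g (f x) := hg.comp hf

@[fun_prop] lemma pr_prod {g : α → γ} {f : α → β} (hf : Primrec f) (hg : Primrec g) :
    Primrec fun x => (f x, g x) := hf.pair hg

@[fun_prop] lemma pr_fst {f : α → β × γ} (hf : Primrec f) : Primrec fun x => (f x).1 :=
  Primrec.fst.comp hf

@[fun_prop] lemma pr_snd {f : α → β × γ} (hf : Primrec f) : Primrec fun x => (f x).2 :=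
  Primrec.snd.comp hf

@[fun_prop] lemma pr_unpair {f : α → ℕ} (hf : Primrec f) : Primrec fun x => (f x).unpair :=
  Primrec.unpair.comp hf

@[fun_prop] lemma pr_pair {f g : α → ℕ} (hf : Primrec f) (hg : Primrec g) :
    Primrec fun x => Nat.pair (f x) (g x) := Primrec₂.natPair.comp hf hg

@[fun_prop] lemma pr_add {f g : α → ℕ} (hf : Primrec f) (hg : Primrec g) :
    Primrec fun x => f x + g x := Primrec.nat_add.comp hf hg

@[fun_prop] lemma pr_mul {f g : α → ℕ} (hf : Primrec f) (hg : Primrec g) :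
    Primrec fun x => f x * g x := Primrec.nat_mul.comp hf hg

@[fun_prop] lemma pr_cons {f : α → β} {g : α → List β} (hf : Primrec f) (hg : Primrec g) :
    Primrec fun x => f x :: g x := Primrec.list_cons.comp hf hg

@[fun_prop] lemma pr_append {f g : α → List β} (hf : Primrec f) (hg : Primrec g) :
    Primrec fun x => f x ++ g x := Primrec.list_append.comp hf hg

@[fun_prop] lemma pr_getD {f : α → List β} {g : α → ℕ} {d : β} (hf : Primrec f) (hg : Primrec g) :
    Primrec fun x => (f x).getD (g x) d := (Primrec.list_getD d).comp hf hg

end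

/-! ### First-order logic on codes

The language has countably many binary function symbols and equality. Its terms and formulas are
natural numbers, and every natural number is a term and a formula. Besides the ordinary quantifier
there is a relativised one, whose range is the set of `x` with `F 0 x x = x`. -/

/-- The variable with index `i`; variables are de Bruijn levels. -/
def vr (i : ℕ) : ℕ := Nat.pair 0 i

/-- The application of the function symbol `k`. -/
def ap (k a b : ℕ) : ℕ := Nat.pair (k + 1) (Nat.pair a b)

/-- The formula `⊥`. -/
def fBot : ℕ := Nat.pair 0 0

/-- The formula `a = b`. -/
def fEq (a b : ℕ) : ℕ := Nat.pair 1 (Nat.pair a b)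

/-- The implication. -/
def fImp (a b : ℕ) : ℕ := Nat.pair 2 (Nat.pair a b)

/-- The universal quantifier. -/
def fAll (a : ℕ) : ℕ := Nat.pair 3 a

/-- The relativised universal quantifier. -/
def fAllN (a : ℕ) : ℕ := Nat.pair 4 a

lemma lt_pair_succ (k m : ℕ) : m < Nat.pair (k + 1) m :=
  lt_of_lt_of_le (by omega) (Nat.add_le_pair (k + 1) m)

lemma unpair_snd_lt {n : ℕ} (h : n.unpair.1 ≠ 0) : n.unpair.2 < n := by
  obtain ⟨k, hk⟩ := Nat.exists_eq_succ_of_ne_zero h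
  have := lt_pair_succ k n.unpair.2
  rwa [← Nat.succ_eq_add_one, ← hk, Nat.pair_unpair] at this

lemma lt_pair_succ_left (k a b : ℕ) : a < Nat.pair (k + 1) (Nat.pair a b) :=
  (Nat.left_le_pair a b).trans_lt (lt_pair_succ k _)

lemma lt_pair_succ_right (k a b : ℕ) : b < Nat.pair (k + 1) (Nat.pair a b) :=
  (Nat.right_le_pair a b).trans_lt (lt_pair_succ k _)

section
variable {K : Type} (d : K) (F : ℕ → K → K → K)

/-- The value of a term; `d` is the value of the variables outside the list `s`. -/
def tv (s : List K) (n : ℕ) : K :=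
  if h : n.unpair.1 = 0 then s.getD n.unpair.2 d
  else F (n.unpair.1 - 1) (tv s n.unpair.2.unpair.1) (tv s n.unpair.2.unpair.2)
termination_by n
decreasing_by
  · exact (Nat.unpair_left_le _).trans_lt (unpair_snd_lt h)
  · exact (Nat.unpair_right_le _).trans_lt (unpair_snd_lt h)

lemma tv_vr (s : List K) (i : ℕ) : tv d F s (vr i) = s.getD i d := by
  rw [tv]; simp [vr]

lemma tv_ap (s : List K) (k a b : ℕ) :
    tv d F s (ap k a b) = F k (tv d F s a) (tv d F s b) := by
  rw [tv]; simp [ap]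

/-- Satisfaction of a formula. -/
def sat (n : ℕ) (s : List K) : Prop :=
  if n.unpair.1 = 0 then False
  else if n.unpair.1 = 1 then tv d F s n.unpair.2.unpair.1 = tv d F s n.unpair.2.unpair.2
  else if n.unpair.1 = 2 then sat n.unpair.2.unpair.1 s → sat n.unpair.2.unpair.2 s
  else if n.unpair.1 = 3 then ∀ x, sat n.unpair.2 (s ++ [x])
  else ∀ x, F 0 x x = x → sat n.unpair.2 (s ++ [x])
termination_by n
decreasing_by
  · exact (Nat.unpair_left_le _).trans_lt (unpair_snd_lt (by omega))
  · exact (Nat.unpair_right_le _).trans_lt (unpair_snd_lt (by omega))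
  · exact unpair_snd_lt (by omega)
  · exact unpair_snd_lt (by omega)

lemma sat_bot' (m : ℕ) (s : List K) : ¬ sat d F (Nat.pair 0 m) s := by
  rw [sat]; simp

lemma sat_eq (a b : ℕ) (s : List K) :
    sat d F (fEq a b) s ↔ tv d F s a = tv d F s b := by
  rw [sat]; simp [fEq]

lemma sat_imp (a b : ℕ) (s : List K) :
    sat d F (fImp a b) s ↔ (sat d F a s → sat d F b s) := by
  rw [sat]; simp [fImp]

lemma sat_all (a : ℕ) (s : List K) :
    sat d F (fAll a) s ↔ ∀ x, sat d F a (s ++ [x]) := by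
  rw [sat]; simp [fAll]

lemma sat_allN' (k a : ℕ) (s : List K) :
    sat d F (Nat.pair (k + 4) a) s ↔ ∀ x, F 0 x x = x → sat d F a (s ++ [x]) := by
  rw [sat]; simp

lemma sat_bot (s : List K) : ¬ sat d F fBot s := sat_bot' d F 0 s

lemma sat_allN (a : ℕ) (s : List K) :
    sat d F (fAllN a) s ↔ ∀ x, F 0 x x = x → sat d F a (s ++ [x]) := sat_allN' d F 0 a s

end

/-! ### Henkin clauses -/

/-- The finite sequence coded by a number. -/
def dl (s : ℕ) : List ℕ := Denumerable.ofNat (List ℕ) s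

/-- The code of the sequence `s` extended by `x`. -/
def sn (s x : ℕ) : ℕ := Encodable.encode (dl s ++ [x])

@[simp] lemma dl_sn (s x : ℕ) : dl (sn s x) = dl s ++ [x] := by simp [dl, sn]

@[simp] lemma dl_zero : dl 0 = [] := by simp [dl]

/-- The element denoted by the term `t` with values `s` of the variables. Natural numbers serve as
names of the elements of the term model. -/
def eTm (t s : ℕ) : ℕ := Nat.pair 0 (Nat.pair t s)

/-- The Henkin witness for the failure of the quantified formula `c` at `s`. -/
def eWit (c s : ℕ) : ℕ := Nat.pair 1 (Nat.pair c s)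

/-- The value of the function symbol `k`. -/
def eOp (k a b : ℕ) : ℕ := Nat.pair (k + 2) (Nat.pair a b)

/-- The propositional variable for the equality of `a` and `b`. -/
def pEq (a b : ℕ) : ℕ := Nat.pair 0 (Nat.pair a b)

/-- The propositional variable for the truth of the formula `c` at `s`. -/
def pTr (c s : ℕ) : ℕ := Nat.pair 1 (Nat.pair c s)

/-- The clauses saying that the propositional variables describe a structure whose elements are
named by the natural numbers. -/
def baseClauses (k a b c x : ℕ) : List Clause :=
  [ [(pEq a a, true)],
    [(pEq a b, false), (pEq a c, false), (pEq b c, true)],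
    [(pEq a b, false), (pEq c x, false), (pEq (eOp k a c) (eOp k b x), true)],
    [(pEq (eTm (vr k) a) ((dl a).getD k 0), true)],
    [(pEq (eTm (ap k a b) c) (eOp k (eTm a c) (eTm b c)), true)],
    [(pTr (Nat.pair 0 a) c, false)],
    [(pTr (fEq a b) c, false), (pEq (eTm a c) (eTm b c), true)],
    [(pTr (fEq a b) c, true), (pEq (eTm a c) (eTm b c), false)],
    [(pTr (fImp a b) c, false), (pTr a c, false), (pTr b c, true)],
    [(pTr (fImp a b) c, true), (pTr a c, true)],
    [(pTr (fImp a b) c, true), (pTr b c, false)],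
    [(pTr (fAll a) c, false), (pTr a (sn c x), true)],
    [(pTr (fAll a) c, true), (pTr a (sn c (eWit (fAll a) c)), false)],
    [(pTr (Nat.pair (k + 4) a) c, false), (pEq (eOp 0 x x) x, false), (pTr a (sn c x), true)],
    [(pTr (Nat.pair (k + 4) a) c, true), (pEq (eOp 0 (eWit (Nat.pair (k + 4) a) c)
      (eWit (Nat.pair (k + 4) a) c)) (eWit (Nat.pair (k + 4) a) c), true)],
    [(pTr (Nat.pair (k + 4) a) c, true),
      (pTr a (sn c (eWit (Nat.pair (k + 4) a) c)), false)] ]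

section
variable {α : Type} [Primcodable α] {f g h : α → ℕ}

@[fun_prop] lemma pr_dl (hf : Primrec f) : Primrec fun x => dl (f x) :=
  (Primrec.ofNat (List ℕ)).comp hf

@[fun_prop] lemma pr_sn (hf : Primrec f) (hg : Primrec g) : Primrec fun x => sn (f x) (g x) :=
  Primrec.encode.comp (by fun_prop)

@[fun_prop] lemma pr_vr (hf : Primrec f) : Primrec fun x => vr (f x) := by unfold vr; fun_prop

@[fun_prop] lemma pr_ap (hf : Primrec f) (hg : Primrec g) (hh : Primrec h) :
    Primrec fun x => ap (f x) (g x) (h x) := by unfold ap; fun_prop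

@[fun_prop] lemma pr_fEq (hf : Primrec f) (hg : Primrec g) :
    Primrec fun x => fEq (f x) (g x) := by unfold fEq; fun_prop

@[fun_prop] lemma pr_fImp (hf : Primrec f) (hg : Primrec g) :
    Primrec fun x => fImp (f x) (g x) := by unfold fImp; fun_prop

@[fun_prop] lemma pr_fAll (hf : Primrec f) : Primrec fun x => fAll (f x) := by
  unfold fAll; fun_prop

@[fun_prop] lemma pr_fAllN (hf : Primrec f) : Primrec fun x => fAllN (f x) := by
  unfold fAllN; fun_prop

@[fun_prop] lemma pr_eTm (hf : Primrec f) (hg : Primrec g) :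
    Primrec fun x => eTm (f x) (g x) := by unfold eTm; fun_prop

@[fun_prop] lemma pr_eWit (hf : Primrec f) (hg : Primrec g) :
    Primrec fun x => eWit (f x) (g x) := by unfold eWit; fun_prop

@[fun_prop] lemma pr_eOp (hf : Primrec f) (hg : Primrec g) (hh : Primrec h) :
    Primrec fun x => eOp (f x) (g x) (h x) := by unfold eOp; fun_prop

@[fun_prop] lemma pr_pEq (hf : Primrec f) (hg : Primrec g) :
    Primrec fun x => pEq (f x) (g x) := by unfold pEq; fun_prop

@[fun_prop] lemma pr_pTr (hf : Primrec f) (hg : Primrec g) :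
    Primrec fun x => pTr (f x) (g x) := by unfold pTr; fun_prop

end

/-- All clauses, for the theory with axioms `ax`; the tautology `(0, true) ∨ (0, false)` is a
filler. -/
def clauses (ax : ℕ → ℕ) (n : ℕ) : Clause :=
  (([(pTr (ax n.unpair.2) 0, true)] : Clause) :: baseClauses n.unpair.2.unpair.1
    n.unpair.2.unpair.2.unpair.1 n.unpair.2.unpair.2.unpair.2.unpair.1
    n.unpair.2.unpair.2.unpair.2.unpair.2.unpair.1
    n.unpair.2.unpair.2.unpair.2.unpair.2.unpair.2).getD n.unpair.1 [(0, true), (0, false)]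

lemma computable_clauses {ax : ℕ → ℕ} (hax : Computable ax) : Computable (clauses ax) := by
  have h1 : Primrec fun n : ℕ => baseClauses n.unpair.2.unpair.1
    n.unpair.2.unpair.2.unpair.1 n.unpair.2.unpair.2.unpair.2.unpair.1
    n.unpair.2.unpair.2.unpair.2.unpair.2.unpair.1
    n.unpair.2.unpair.2.unpair.2.unpair.2.unpair.2 := by
    unfold baseClauses; fun_prop
  have h2 : Primrec fun m : ℕ => ([(pTr m 0, true)] : Clause) := by fun_prop
  have h3 := h2.to_comp.comp (hax.comp (Computable.snd.comp Computable.unpair))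
  exact Computable₂.comp (f := fun (l : List Clause) i => l.getD i [(0, true), (0, false)])
    (Primrec.list_getD _).to_comp
    (Computable.list_cons.comp h3 h1.to_comp) (Computable.fst.comp Computable.unpair)

lemma clauses_holds_iff (ax : ℕ → ℕ) (v : ℕ → Bool) :
    (∀ n, (clauses ax n).holds v) ↔ (∀ n, v (pTr (ax n) 0) = true) ∧
      ∀ k a b c x, ∀ C ∈ baseClauses k a b c x, C.holds v := by
  constructor
  · intro h
    refine ⟨fun n => ?_, fun k a b c x C hC => ?_⟩
    · have := h (Nat.pair 0 n)
      simpa [clauses, Clause.holds] using this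
    · obtain ⟨i, hi, rfl⟩ := List.getElem_of_mem hC
      have := h (Nat.pair (i + 1) (Nat.pair k (Nat.pair a (Nat.pair b (Nat.pair c x)))))
      simpa [clauses, hi] using this
  · rintro ⟨h1, h2⟩ n
    unfold clauses
    rcases n.unpair.1 with - | i
    · exact ⟨_, List.mem_singleton.2 rfl, h1 _⟩
    · rw [List.getD_cons_succ]
      set L := baseClauses n.unpair.2.unpair.1
        n.unpair.2.unpair.2.unpair.1 n.unpair.2.unpair.2.unpair.2.unpair.1
        n.unpair.2.unpair.2.unpair.2.unpair.2.unpair.1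
        n.unpair.2.unpair.2.unpair.2.unpair.2.unpair.2
      by_cases hi : i < L.length
      · rw [List.getD_eq_getElem _ _ hi]
        exact h2 _ _ _ _ _ _ (List.getElem_mem hi)
      · rw [List.getD_eq_default _ _ (not_lt.1 hi)]
        cases h : v 0
        · exact ⟨(0, false), by simp, h⟩
        · exact ⟨(0, true), by simp, h⟩

/-! ### The term model -/

section
variable {v : ℕ → Bool}

/-- The explicit form of the clauses. -/
structure Henkin (v : ℕ → Bool) : Prop where
  refl : ∀ a, v (pEq a a) = true
  eucl : ∀ a b c, v (pEq a b) = true → v (pEq a c) = true → v (pEq b c) = true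
  congr : ∀ k a b c x, v (pEq a b) = true → v (pEq c x) = true →
    v (pEq (eOp k a c) (eOp k b x)) = true
  vr : ∀ k a, v (pEq (eTm (vr k) a) ((dl a).getD k 0)) = true
  ap : ∀ k a b c, v (pEq (eTm (ap k a b) c) (eOp k (eTm a c) (eTm b c))) = true
  bot : ∀ a c, v (pTr (Nat.pair 0 a) c) = false
  eq : ∀ a b c, v (pTr (fEq a b) c) = true ↔ v (pEq (eTm a c) (eTm b c)) = true
  imp : ∀ a b c, v (pTr (fImp a b) c) = true ↔ (v (pTr a c) = true → v (pTr b c) = true)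
  all : ∀ a c, v (pTr (fAll a) c) = true → ∀ x, v (pTr a (sn c x)) = true
  all_wit : ∀ a c, v (pTr a (sn c (eWit (fAll a) c))) = true → v (pTr (fAll a) c) = true
  allN : ∀ k a c, v (pTr (Nat.pair (k + 4) a) c) = true → ∀ x, v (pEq (eOp 0 x x) x) = true →
    v (pTr a (sn c x)) = true
  allN_wit : ∀ k a c, (v (pEq (eOp 0 (eWit (Nat.pair (k + 4) a) c)
      (eWit (Nat.pair (k + 4) a) c)) (eWit (Nat.pair (k + 4) a) c)) = true →
    v (pTr a (sn c (eWit (Nat.pair (k + 4) a) c))) = true) →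
      v (pTr (Nat.pair (k + 4) a) c) = true

lemma henkin_iff : Henkin v ↔ ∀ k a b c x, ∀ C ∈ baseClauses k a b c x, C.holds v := by
  simp only [baseClauses, Clause.holds, List.mem_cons, List.not_mem_nil,
    or_false, exists_eq_or_imp, exists_eq_left, forall_eq_or_imp, forall_eq]
  constructor
  · intro h k a b c x
    refine ⟨h.refl a, ?_, ?_, h.vr k a, h.ap k a b c, h.bot a c, ?_, ?_, ?_, ?_, ?_, ?_, ?_, ?_,
      ?_, ?_⟩
    · have := h.eucl a b c; grind
    · have := h.congr k a b c x; grind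
    · have := h.eq a b c; grind
    · have := h.eq a b c; grind
    · have := h.imp a b c; grind
    · have := h.imp a b c; grind
    · have := h.imp a b c; grind
    · have := h.all a c; grind
    · have := h.all_wit a c; grind
    · have := h.allN k a c; grind
    · have := h.allN_wit k a c; grind
    · have := h.allN_wit k a c; grind
  · intro h
    refine ⟨fun a => (h 0 a 0 0 0).1, fun a b c => ?_, fun k a b c x => ?_,
      fun k a => (h k a 0 0 0).2.2.2.1, fun k a b c => (h k a b c 0).2.2.2.2.1,
      fun a c => (h 0 a 0 c 0).2.2.2.2.2.1, fun a b c => ?_, fun a b c => ?_, fun a c => ?_,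
      fun a c => ?_, fun k a c => ?_, fun k a c => ?_⟩
    · have := (h 0 a b c 0).2.1; grind
    · have := (h k a b c x).2.2.1; grind
    · have := (h 0 a b c 0).2.2.2.2.2.2; grind
    · have := (h 0 a b c 0).2.2.2.2.2.2; grind
    · have := fun x => (h 0 a 0 c x).2.2.2.2.2.2; grind
    · have := (h 0 a 0 c 0).2.2.2.2.2.2; grind
    · have := fun x => (h k a 0 c x).2.2.2.2.2.2; grind
    · have := (h k a 0 c 0).2.2.2.2.2.2; grind

/-- Names of equal elements. -/
def Henkin.setoid (h : Henkin v) : Setoid ℕ where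
  r a b := v (pEq a b) = true
  iseqv := ⟨h.refl, fun {a b} hab => h.eucl a b a hab (h.refl a),
    fun {a b c} hab hbc => h.eucl b a c (h.eucl a b a hab (h.refl a)) hbc⟩

/-- The term model. -/
def Henkin.Model (h : Henkin v) : Type := Quotient h.setoid

/-- The element with a given name. -/
def Henkin.cls (h : Henkin v) (a : ℕ) : h.Model := Quotient.mk h.setoid a

lemma Henkin.cls_eq (h : Henkin v) {a b : ℕ} : h.cls a = h.cls b ↔ v (pEq a b) = true :=
  Quotient.eq (r := h.setoid)

/-- The operations of the term model. -/
def Henkin.op (h : Henkin v) (k : ℕ) : h.Model → h.Model → h.Model :=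
  Quotient.map₂ (eOp k) fun a b hab c x hcx => h.congr k a b c x hab hcx

lemma Henkin.op_mk (h : Henkin v) (k a b : ℕ) : h.op k (h.cls a) (h.cls b) = h.cls (eOp k a b) := rfl

lemma Henkin.cls_surj (h : Henkin v) (x : h.Model) : ∃ a, h.cls a = x := Quotient.exists_rep x

lemma Henkin.tv_eq (h : Henkin v) (s t : ℕ) :
    tv (h.cls 0) h.op ((dl s).map h.cls) t = h.cls (eTm t s) := by
  induction t using Nat.strong_induction_on with
  | _ t ih =>
    obtain ⟨j, m, rfl⟩ : ∃ j m, t = Nat.pair j m := ⟨_, _, (Nat.pair_unpair t).symm⟩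
    rcases j with - | k
    · rw [show Nat.pair 0 m = PACDec.vr m from rfl, tv_vr, List.getD_map, h.cls_eq.2 (h.vr m s)]
    · obtain ⟨a, b, rfl⟩ : ∃ a b, m = Nat.pair a b := ⟨_, _, (Nat.pair_unpair m).symm⟩
      rw [show Nat.pair (k + 1) (Nat.pair a b) = PACDec.ap k a b from rfl, tv_ap,
        ih a (lt_pair_succ_left _ _ _), ih b (lt_pair_succ_right _ _ _), h.op_mk,
        h.cls_eq.2 (h.ap k a b s)]

lemma Henkin.sat_iff (h : Henkin v) (c s : ℕ) :
    sat (h.cls 0) h.op c ((dl s).map h.cls) ↔ v (pTr c s) = true := by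
  induction c using Nat.strong_induction_on generalizing s with
  | _ c ih =>
    obtain ⟨j, m, rfl⟩ : ∃ j m, c = Nat.pair j m := ⟨_, _, (Nat.pair_unpair c).symm⟩
    rcases j with - | - | - | - | k
    · simp [sat_bot', h.bot]
    · obtain ⟨a, b, rfl⟩ : ∃ a b, m = Nat.pair a b := ⟨_, _, (Nat.pair_unpair m).symm⟩
      rw [show Nat.pair (0 + 1) (Nat.pair a b) = fEq a b from rfl, sat_eq, h.eq, h.tv_eq, h.tv_eq,
        h.cls_eq]
    · obtain ⟨a, b, rfl⟩ : ∃ a b, m = Nat.pair a b := ⟨_, _, (Nat.pair_unpair m).symm⟩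
      rw [show Nat.pair (0 + 1 + 1) (Nat.pair a b) = fImp a b from rfl, sat_imp, h.imp,
        ih a (lt_pair_succ_left _ _ _), ih b (lt_pair_succ_right _ _ _)]
    · have hm : ∀ x, sat (h.cls 0) h.op m ((dl s).map h.cls ++ [h.cls x]) ↔
          v (pTr m (sn s x)) = true := fun x => by
        rw [← ih m (lt_pair_succ _ _), dl_sn, List.map_append]; rfl
      rw [show Nat.pair (0 + 1 + 1 + 1) m = fAll m from rfl, sat_all]
      refine ⟨fun H => h.all_wit m s ((hm _).1 (H _)), fun H x => ?_⟩
      obtain ⟨x, rfl⟩ := h.cls_surj x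
      exact (hm x).2 (h.all m s H x)
    · have hm : ∀ x, sat (h.cls 0) h.op m ((dl s).map h.cls ++ [h.cls x]) ↔
          v (pTr m (sn s x)) = true := fun x => by
        rw [← ih m (lt_pair_succ _ _), dl_sn, List.map_append]; rfl
      rw [show Nat.pair (k + 1 + 1 + 1 + 1) m = Nat.pair (k + 4) m from rfl, sat_allN']
      refine ⟨fun H => h.allN_wit k m s fun hw => (hm _).1 (H _ ?_), fun H x hx => ?_⟩
      · rw [h.op_mk, h.cls_eq, hw]
      · obtain ⟨x, rfl⟩ := h.cls_surj x
        rw [h.op_mk, h.cls_eq] at hx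
        exact (hm x).2 (h.allN k m s H x hx)

end

/-! ### Naming the elements of a structure -/

lemma lt_of_mem_dl {s x : ℕ} (h : x ∈ dl s) : x < s := by
  have : ∀ l : List ℕ, ∀ x ∈ l, x < Encodable.encode l := by
    intro l
    induction l with
    | nil => simp
    | cons a l ih =>
      intro x hx
      rw [Encodable.encode_list_cons, Nat.lt_succ_iff]
      rcases List.mem_cons.1 hx with rfl | hx
      · exact Nat.left_le_pair _ _
      · exact (ih x hx).le.trans (Nat.right_le_pair _ _)
  simpa [dl] using this (dl s) x h

section
variable {K : Type} (d : K) (F : ℕ → K → K → K)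

/-- `x` shows that the quantified formula `c` fails at `s`. -/
def Bad (c : ℕ) (s : List K) (x : K) : Prop :=
  (c.unpair.1 = 3 ∨ F 0 x x = x) ∧ ¬ sat d F c.unpair.2 (s ++ [x])

open Classical in
/-- An element showing that the quantified formula `c` fails at `s`, if there is one. -/
noncomputable def wit (c : ℕ) (s : List K) : K :=
  if h : ∃ x, Bad d F c s x then h.choose else d

/-- The elements of a structure denoted by the names. -/
noncomputable def nm (n : ℕ) : K :=
  if n.unpair.1 = 0 then
    tv d F ((dl n.unpair.2.unpair.2).attach.map fun x => nm x.1) n.unpair.2.unpair.1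
  else if n.unpair.1 = 1 then
    wit d F n.unpair.2.unpair.1 ((dl n.unpair.2.unpair.2).attach.map fun x => nm x.1)
  else F (n.unpair.1 - 2) (nm n.unpair.2.unpair.1) (nm n.unpair.2.unpair.2)
termination_by n
decreasing_by
  · exact (lt_of_mem_dl x.2).trans_le ((Nat.unpair_right_le _).trans (Nat.unpair_right_le _))
  · exact (lt_of_mem_dl x.2).trans_le ((Nat.unpair_right_le _).trans (Nat.unpair_right_le _))
  · exact (Nat.unpair_left_le _).trans_lt (unpair_snd_lt (by omega))
  · exact (Nat.unpair_right_le _).trans_lt (unpair_snd_lt (by omega))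

lemma nm_eTm (t s : ℕ) : nm d F (eTm t s) = tv d F ((dl s).map (nm d F)) t := by
  rw [nm]; simp [eTm]

lemma nm_eWit (c s : ℕ) : nm d F (eWit c s) = wit d F c ((dl s).map (nm d F)) := by
  rw [nm]; simp [eWit]

lemma nm_eOp (k a b : ℕ) : nm d F (eOp k a b) = F k (nm d F a) (nm d F b) := by
  rw [nm]; simp [eOp]

-- `0` names the value of a variable in the empty list
lemma nm_zero : nm d F 0 = d := by
  have := nm_eTm d F 0 0
  rw [show eTm 0 0 = 0 from rfl, dl_zero, show 0 = vr 0 from rfl, tv_vr] at this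
  exact this

open Classical in
/-- The valuation describing a structure. -/
noncomputable def val (n : ℕ) : Bool :=
  if n.unpair.1 = 0 then decide (nm d F n.unpair.2.unpair.1 = nm d F n.unpair.2.unpair.2)
  else decide (sat d F n.unpair.2.unpair.1 ((dl n.unpair.2.unpair.2).map (nm d F)))

lemma val_pEq (a b : ℕ) : val d F (pEq a b) = true ↔ nm d F a = nm d F b := by
  rw [val, pEq]; simp only [Nat.unpair_pair, if_true, decide_eq_true_eq]

lemma val_pTr (c s : ℕ) : val d F (pTr c s) = true ↔ sat d F c ((dl s).map (nm d F)) := by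
  rw [val, pTr]; simp only [Nat.unpair_pair, one_ne_zero, if_false, decide_eq_true_eq]

lemma not_bad_of_wit {c : ℕ} {s : List K} (h : ¬ Bad d F c s (wit d F c s)) (x : K) :
    ¬ Bad d F c s x := by
  intro hx
  have hex : ∃ x, Bad d F c s x := ⟨x, hx⟩
  rw [wit, dif_pos hex] at h
  exact h hex.choose_spec

lemma sat_sn (a s x : ℕ) : sat d F a ((dl (sn s x)).map (nm d F)) ↔
    sat d F a ((dl s).map (nm d F) ++ [nm d F x]) := by simp

lemma henkin_val : Henkin (val d F) := by
  constructor
  · intro a; rw [val_pEq]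
  · intro a b c; simp only [val_pEq]; exact fun h1 h2 => h1.symm.trans h2
  · intro k a b c x; simp only [val_pEq, nm_eOp]; exact fun h1 h2 => by rw [h1, h2]
  · intro k a
    rw [val_pEq, nm_eTm, tv_vr]
    have := List.getD_map (f := nm d F) (l := dl a) (n := k) (d := 0)
    rwa [nm_zero] at this
  · intro k a b c
    simp only [val_pEq, nm_eOp, nm_eTm, tv_ap]
  · intro a c
    rw [Bool.eq_false_iff, Ne, val_pTr]
    exact sat_bot' d F a _
  · intro a b c
    simp only [val_pTr, val_pEq, nm_eTm, sat_eq]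
  · intro a b c
    simp only [val_pTr, sat_imp]
  · intro a c
    simp only [val_pTr, sat_all, sat_sn]
    exact fun h x => h _
  · intro a c
    simp only [val_pTr, sat_all, sat_sn, nm_eWit]
    intro h x
    have := not_bad_of_wit d F (c := fAll a) (s := (dl c).map (nm d F))
      (fun hb => hb.2 (by simpa [fAll] using h)) x
    simpa [Bad, fAll] using this
  · intro k a c
    simp only [val_pTr, val_pEq, nm_eOp, sat_allN', sat_sn]
    exact fun h x hx => h _ hx
  · intro k a c
    simp only [val_pTr, val_pEq, nm_eOp, sat_allN', sat_sn, nm_eWit]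
    intro h x hx
    have := not_bad_of_wit d F (c := Nat.pair (k + 4) a) (s := (dl c).map (nm d F))
      (fun hb => hb.2 (by simpa using h (by simpa using hb.1))) x
    simpa [Bad, hx] using this

end

/-- A complete theory with a computable list of axioms, having a model, is decidable. -/
theorem decidable_of_complete {ax : ℕ → ℕ} (hax : Computable ax) {g : ℕ → ℕ} (hg : Computable g)
    {P : ℕ → Prop}
    (hP : ∀ (K : Type) (d : K) (F : ℕ → K → K → K), (∀ n, sat d F (ax n) []) →
      ∀ c, sat d F (g c) [] ↔ P c)
    (hex : ∃ (K : Type) (d : K) (F : ℕ → K → K → K), ∀ n, sat d F (ax n) []) :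
    ∃ f : ℕ → Bool, Computable f ∧ ∀ c, f c = true ↔ P c := by
  have hq : Primrec fun c => pTr c 0 := by fun_prop
  refine exists_computable_of_clauses (computable_clauses hax) (g := fun c => pTr (g c) 0)
    (hq.to_comp.comp hg) ?_ ?_
  · obtain ⟨K, d, F, h⟩ := hex
    refine ⟨val d F, (clauses_holds_iff _ _).2 ⟨fun n => ?_, henkin_iff.1 (henkin_val d F)⟩⟩
    rw [val_pTr, dl_zero]
    exact h n
  · intro v hv c
    obtain ⟨h1, h2⟩ := (clauses_holds_iff _ _).1 hv
    have H := henkin_iff.2 h2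
    have H' : ∀ c, sat (H.cls 0) H.op c [] ↔ v (pTr c 0) = true := fun c => by
      rw [← H.sat_iff, dl_zero]; rfl
    rw [← hP _ _ _ (fun n => (H' _).2 (h1 n)) c, H']

/-! ### Formulas about fields with endomorphisms

The function symbol `0` serves the relativised quantifier; the symbols `1` to `6` stand for zero,
one, addition, multiplication, negation and inversion, and `7 + i` for the `i`-th endomorphism.
Constants and unary operations are binary function symbols used on the diagonal only. -/

/-- The operations `F` interpret the symbols in the field `K` with endomorphisms `σ`. -/
structure Interp {K : Type} [Field K] {e : ℕ} (σ : Fin e → K →+* K) (d : K)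
    (F : ℕ → K → K → K) : Prop where
  d : d = 0
  guard : ∀ x, F 0 x x = x ↔ Fix σ x
  zero : ∀ x, F 1 x x = 0
  one : ∀ x, F 2 x x = 1
  add : ∀ x y, F 3 x y = x + y
  mul : ∀ x y, F 4 x y = x * y
  neg : ∀ x, F 5 x x = - x
  inv : ∀ x, F 6 x x = x⁻¹
  sig : ∀ (i : Fin e) x, F (7 + i) x x = σ i x

/-- The term `0`. -/
def tZero : ℕ := ap 1 (vr 0) (vr 0)
/-- The term `1`. -/
def tOne : ℕ := ap 2 (vr 0) (vr 0)
/-- The sum of two terms. -/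
def tAdd (a b : ℕ) : ℕ := ap 3 a b
/-- The product of two terms. -/
def tMul (a b : ℕ) : ℕ := ap 4 a b
/-- The negative of a term. -/
def tNeg (a : ℕ) : ℕ := ap 5 a a
/-- The inverse of a term. -/
def tInv (a : ℕ) : ℕ := ap 6 a a
/-- The term for a sum of length `n`. -/
def tSum (f : ℕ → ℕ) (n : ℕ) : ℕ := Nat.rec tZero (fun j t => tAdd t (f j)) n
/-- The numeral of a natural number. -/
def tNum (n : ℕ) : ℕ := tSum (fun _ => tOne) n
/-- The power of a term. -/
def tPow (a n : ℕ) : ℕ := Nat.rec tOne (fun _ t => tMul t a) n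
/-- The term for `ev2`, the coefficients being the variables from index `o` on. -/
def tEv2 (o D x y : ℕ) : ℕ :=
  tSum (fun m => tMul (vr (o + m)) (tMul (tPow x m.unpair.1) (tPow y m.unpair.2))) D

/-- Negation. -/
def fNot (a : ℕ) : ℕ := fImp a fBot
/-- Disjunction. -/
def fOr (a b : ℕ) : ℕ := fImp (fNot a) b
/-- Conjunction. -/
def fAnd (a b : ℕ) : ℕ := fNot (fImp a (fNot b))
/-- Existential quantifier. -/
def fEx (a : ℕ) : ℕ := fNot (fAll (fNot a))
/-- Relativised existential quantifier. -/
def fExN (a : ℕ) : ℕ := fNot (fAllN (fNot a))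
/-- A block of universal quantifiers. -/
def fAllIt (n a : ℕ) : ℕ := fAll^[n] a
/-- A block of relativised universal quantifiers. -/
def fAllNIt (n a : ℕ) : ℕ := fAllN^[n] a
/-- A block of existential quantifiers. -/
def fExIt (n a : ℕ) : ℕ := fNot (fAllIt n (fNot a))

section
variable {α : Type} [Primcodable α] {f g h k : α → ℕ}

@[fun_prop] lemma pr_tAdd (hf : Primrec f) (hg : Primrec g) :
    Primrec fun x => tAdd (f x) (g x) := by unfold tAdd; fun_prop

@[fun_prop] lemma pr_tMul (hf : Primrec f) (hg : Primrec g) :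
    Primrec fun x => tMul (f x) (g x) := by unfold tMul; fun_prop

@[fun_prop] lemma pr_tNeg (hf : Primrec f) : Primrec fun x => tNeg (f x) := by
  unfold tNeg; fun_prop

@[fun_prop] lemma pr_tInv (hf : Primrec f) : Primrec fun x => tInv (f x) := by
  unfold tInv; fun_prop

lemma pr_tSum {t : α → ℕ → ℕ} (ht : Primrec fun z : α × ℕ => t z.1 z.2) (hf : Primrec f) :
    Primrec fun x => tSum (t x) (f x) := by
  unfold tSum
  refine Primrec.nat_rec' (f := f) (g := fun _ => tZero)
    (h := fun x (q : ℕ × ℕ) => tAdd q.2 (t x q.1)) hf (by fun_prop) ?_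
  have : Primrec fun z : α × ℕ × ℕ => t z.1 z.2.1 :=
    pr_comp (g := fun z : α × ℕ => t z.1 z.2) (f := fun z : α × ℕ × ℕ => (z.1, z.2.1)) ht
      (by fun_prop)
  exact pr_tAdd (by fun_prop) this

@[fun_prop] lemma pr_tNum (hf : Primrec f) : Primrec fun x => tNum (f x) := by
  unfold tNum; exact pr_tSum (by fun_prop) hf

@[fun_prop] lemma pr_tPow (hf : Primrec f) (hg : Primrec g) :
    Primrec fun x => tPow (f x) (g x) := by
  unfold tPow
  refine Primrec.nat_rec' (f := g) (g := fun _ => tOne)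
    (h := fun x (q : ℕ × ℕ) => tMul q.2 (f x)) hg (by fun_prop) ?_
  exact pr_tMul (f := fun z : α × ℕ × ℕ => z.2.2) (g := fun z : α × ℕ × ℕ => f z.1)
    (by fun_prop) (by fun_prop)

@[fun_prop] lemma pr_tEv2 (hf : Primrec f) (hg : Primrec g) (hh : Primrec h) (hk : Primrec k) :
    Primrec fun x => tEv2 (f x) (g x) (h x) (k x) := by
  unfold tEv2; exact pr_tSum (by fun_prop) hg

@[fun_prop] lemma pr_fNot (hf : Primrec f) : Primrec fun x => fNot (f x) := by
  unfold fNot; fun_prop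

@[fun_prop] lemma pr_fOr (hf : Primrec f) (hg : Primrec g) :
    Primrec fun x => fOr (f x) (g x) := by unfold fOr; fun_prop

@[fun_prop] lemma pr_fAnd (hf : Primrec f) (hg : Primrec g) :
    Primrec fun x => fAnd (f x) (g x) := by unfold fAnd; fun_prop

@[fun_prop] lemma pr_fEx (hf : Primrec f) : Primrec fun x => fEx (f x) := by
  unfold fEx; fun_prop

@[fun_prop] lemma pr_fExN (hf : Primrec f) : Primrec fun x => fExN (f x) := by
  unfold fExN; fun_prop

@[fun_prop] lemma pr_fAllIt (hf : Primrec f) (hg : Primrec g) :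
    Primrec fun x => fAllIt (f x) (g x) :=
  Primrec.nat_iterate (h := fun _ b => fAll b) hf hg
    (pr_fAll (f := fun z : α × ℕ => z.2) (by fun_prop))

@[fun_prop] lemma pr_fAllNIt (hf : Primrec f) (hg : Primrec g) :
    Primrec fun x => fAllNIt (f x) (g x) :=
  Primrec.nat_iterate (h := fun _ b => fAllN b) hf hg
    (pr_fAllN (f := fun z : α × ℕ => z.2) (by fun_prop))

@[fun_prop] lemma pr_fExIt (hf : Primrec f) (hg : Primrec g) :
    Primrec fun x => fExIt (f x) (g x) := by unfold fExIt; fun_prop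

end

section
variable {K : Type} (d : K) (F : ℕ → K → K → K)

@[simp] lemma sat_fNot (a : ℕ) (s : List K) : sat d F (fNot a) s ↔ ¬ sat d F a s := by
  simp [fNot, sat_imp, sat_bot]

@[simp] lemma sat_fOr (a b : ℕ) (s : List K) :
    sat d F (fOr a b) s ↔ (sat d F a s ∨ sat d F b s) := by
  simp [fOr, sat_imp, or_iff_not_imp_left]

@[simp] lemma sat_fAnd (a b : ℕ) (s : List K) :
    sat d F (fAnd a b) s ↔ (sat d F a s ∧ sat d F b s) := by
  simp [fAnd, sat_imp]

@[simp] lemma sat_fEx (a : ℕ) (s : List K) :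
    sat d F (fEx a) s ↔ ∃ x, sat d F a (s ++ [x]) := by
  simp [fEx, sat_all]

@[simp] lemma sat_fExN (a : ℕ) (s : List K) :
    sat d F (fExN a) s ↔ ∃ x, F 0 x x = x ∧ sat d F a (s ++ [x]) := by
  simp [fExN, sat_allN]

lemma forall_list_succ {P : List K → Prop} {n : ℕ} :
    (∀ l : List K, l.length = n + 1 → P l) ↔ ∀ x, ∀ l : List K, l.length = n → P (x :: l) := by
  constructor
  · exact fun h x l hl => h _ (by simp [hl])
  · rintro h (- | ⟨x, l⟩) hl
    · simp at hl
    · exact h x l (by simpa using hl)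

@[simp] lemma sat_fAllIt (n a : ℕ) (s : List K) :
    sat d F (fAllIt n a) s ↔ ∀ l : List K, l.length = n → sat d F a (s ++ l) := by
  induction n generalizing s with
  | zero => simp [fAllIt]
  | succ n ih =>
    rw [forall_list_succ, fAllIt, Function.iterate_succ_apply', sat_all]
    refine forall_congr' fun x => ?_
    rw [show fAll^[n] a = fAllIt n a from rfl, ih]
    simp

@[simp] lemma sat_fAllNIt (n a : ℕ) (s : List K) :
    sat d F (fAllNIt n a) s ↔ ∀ l : List K, l.length = n → (∀ x ∈ l, F 0 x x = x) →
      sat d F a (s ++ l) := by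
  induction n generalizing s with
  | zero => simp [fAllNIt]
  | succ n ih =>
    rw [forall_list_succ, fAllNIt, Function.iterate_succ_apply', sat_allN]
    refine forall_congr' fun x => ?_
    rw [show fAllN^[n] a = fAllNIt n a from rfl, ih]
    simp only [List.append_assoc, List.singleton_append, List.forall_mem_cons]
    exact ⟨fun h l hl hx => h hx.1 l hl hx.2, fun h hx l hl hx' => h l hl ⟨hx, hx'⟩⟩

@[simp] lemma sat_fExIt (n a : ℕ) (s : List K) :
    sat d F (fExIt n a) s ↔ ∃ l : List K, l.length = n ∧ sat d F a (s ++ l) := by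
  simp [fExIt]

end

section
variable {K : Type} [Field K] {e : ℕ} {σ : Fin e → K →+* K} {d : K} {F : ℕ → K → K → K}

lemma Interp.tZero (H : Interp σ d F) (s : List K) : tv d F s tZero = 0 := by
  rw [PACDec.tZero, tv_ap, H.zero]

lemma Interp.tOne (H : Interp σ d F) (s : List K) : tv d F s tOne = 1 := by
  rw [PACDec.tOne, tv_ap, H.one]

lemma Interp.tAdd (H : Interp σ d F) (s : List K) (a b : ℕ) :
    tv d F s (tAdd a b) = tv d F s a + tv d F s b := by rw [PACDec.tAdd, tv_ap, H.add]

lemma Interp.tMul (H : Interp σ d F) (s : List K) (a b : ℕ) :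
    tv d F s (tMul a b) = tv d F s a * tv d F s b := by rw [PACDec.tMul, tv_ap, H.mul]

lemma Interp.tNeg (H : Interp σ d F) (s : List K) (a : ℕ) :
    tv d F s (tNeg a) = - tv d F s a := by rw [PACDec.tNeg, tv_ap, H.neg]

lemma Interp.tInv (H : Interp σ d F) (s : List K) (a : ℕ) :
    tv d F s (tInv a) = (tv d F s a)⁻¹ := by rw [PACDec.tInv, tv_ap, H.inv]

lemma Interp.tSum (H : Interp σ d F) (s : List K) (f : ℕ → ℕ) (n : ℕ) :
    tv d F s (tSum f n) = ∑ j ∈ Finset.range n, tv d F s (f j) := by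
  induction n with
  | zero => exact H.tZero s
  | succ n ih =>
    rw [Finset.sum_range_succ, ← ih, ← H.tAdd]
    rfl

lemma Interp.tNum (H : Interp σ d F) (s : List K) (n : ℕ) : tv d F s (tNum n) = n := by
  simp [PACDec.tNum, H.tSum, H.tOne]

lemma Interp.tPow (H : Interp σ d F) (s : List K) (a n : ℕ) :
    tv d F s (tPow a n) = tv d F s a ^ n := by
  induction n with
  | zero => rw [pow_zero]; exact H.tOne s
  | succ n ih =>
    rw [pow_succ, ← ih, ← H.tMul]
    rfl

lemma Interp.tVr (H : Interp σ d F) (s : List K) (i : ℕ) : tv d F s (vr i) = s.getD i 0 := by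
  rw [tv_vr, H.d]

lemma Interp.tEv2 (H : Interp σ d F) (s : List K) (o D x y : ℕ) :
    tv d F s (tEv2 o D x y) = ev2 (fun m => s.getD (o + m) 0) D (tv d F s x) (tv d F s y) := by
  simp only [PACDec.tEv2, H.tSum, H.tMul, H.tPow, H.tVr, ev2]

lemma ev2_congr {c c' : ℕ → K} {D : ℕ} (h : ∀ m < D, c m = c' m) (x y : K) :
    ev2 c D x y = ev2 c' D x y :=
  Finset.sum_congr rfl fun m hm => by rw [h m (Finset.mem_range.1 hm)]

/-- The axiom of characteristic zero for `n + 1`. -/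
def axChar (n : ℕ) : ℕ := fNot (fEq (tNum (n + 1)) tZero)

lemma Interp.axChar (H : Interp σ d F) : (∀ n, sat d F (axChar n) []) ↔ CharZero K := by
  simp only [PACDec.axChar, sat_fNot, sat_eq, H.tNum, H.tZero]
  constructor
  · intro h
    refine charZero_of_inj_zero fun n hn => ?_
    rcases n with - | n
    · rfl
    · exact (h n hn).elim
  · intro _ n
    exact Nat.cast_ne_zero.2 (Nat.succ_ne_zero n)

/-- The axiom that monic polynomials of degree `n + 1` have roots. -/
def axAC (n : ℕ) : ℕ := fAllIt (n + 1) (fEx (fEq (tAdd (tPow (vr (n + 1)) (n + 1))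
  (tSum (fun j => tMul (vr j) (tPow (vr (n + 1)) j)) (n + 1))) tZero))

lemma getD_append_lt {s t : List K} {i : ℕ} (h : i < s.length) : (s ++ t).getD i 0 = s.getD i 0 :=
  List.getD_append _ _ _ _ h

lemma getD_snoc {s : List K} {n : ℕ} (x : K) (h : s.length = n) : (s ++ [x]).getD n 0 = x := by
  subst h; simp

lemma getD_map_range (f : ℕ → K) {n j : ℕ} (h : j < n) : ((List.range n).map f).getD j 0 = f j := by
  simp [h]

lemma Interp.axAC (H : Interp σ d F) : (∀ n, sat d F (axAC n) []) ↔ ACb K := by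
  simp only [PACDec.axAC, sat_fAllIt, sat_fEx, sat_eq, H.tAdd, H.tPow, H.tVr, H.tSum, H.tMul,
    H.tZero, List.nil_append, ACb]
  have key : ∀ (n : ℕ) (l : List K), l.length = n + 1 → ∀ (c : ℕ → K),
      (∀ j < n + 1, l.getD j 0 = c j) → ∀ x : K,
      ((l ++ [x]).getD (n + 1) 0 ^ (n + 1) + ∑ j ∈ Finset.range (n + 1), (l ++ [x]).getD j 0 *
        (l ++ [x]).getD (n + 1) 0 ^ j = x ^ (n + 1) + ∑ j ∈ Finset.range (n + 1), c j * x ^ j) := by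
    intro n l hl c hc x
    rw [getD_snoc x hl]
    congr 1
    refine Finset.sum_congr rfl fun j hj => ?_
    rw [getD_append_lt (by rw [hl]; exact Finset.mem_range.1 hj), hc j (Finset.mem_range.1 hj)]
  constructor
  · intro h n c
    obtain ⟨x, hx⟩ := h n ((List.range (n + 1)).map c) (by simp)
    rw [key n _ (by simp) c fun j hj => getD_map_range c hj] at hx
    exact ⟨x, hx⟩
  · intro h n l hl
    obtain ⟨x, hx⟩ := h n fun j => l.getD j 0
    refine ⟨x, ?_⟩
    rw [key n l hl _ fun j _ => rfl]
    exact hx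

end

/-! ### The PAC axioms -/

/-- The polynomial with `b` coefficients from index `o` on is not constant. -/
def fNcst (o b k : ℕ) : ℕ :=
  fEx (fEx (fNot (fEq (tEv2 o b (vr k) (vr (k + 1))) (tEv2 o b tZero tZero))))

/-- The coefficients from index `D` on describe a factorisation of the polynomial whose `D`
coefficients come first. -/
def fFac (D : ℕ) : ℕ :=
  fAnd (fAll (fAll (fEq (tEv2 0 D (vr (D + (bd D + bd D))) (vr (D + (bd D + bd D) + 1)))
      (tMul (tEv2 D (bd D) (vr (D + (bd D + bd D))) (vr (D + (bd D + bd D) + 1)))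
        (tEv2 (D + bd D) (bd D) (vr (D + (bd D + bd D))) (vr (D + (bd D + bd D) + 1)))))))
    (fAnd (fNcst D (bd D) (D + (bd D + bd D)))
      (fNcst (D + bd D) (bd D) (D + (bd D + bd D))))

/-- The polynomial with the given `D` coefficients has a zero in the fixed field, or is constant,
or is a product of nonconstant polynomials. -/
def fPAC (D : ℕ) : ℕ :=
  fOr (fExN (fExN (fEq (tEv2 0 D (vr D) (vr (D + 1))) tZero)))
    (fOr (fAll (fAll (fEq (tEv2 0 D (vr D) (vr (D + 1))) (tEv2 0 D tZero tZero))))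
      (fExIt (bd D + bd D) (fFac D)))

/-- The condition `PACb` for polynomials given by `D` coefficients. -/
def axPAC (D : ℕ) : ℕ := fAllNIt D (fPAC D)

lemma pr_axPAC : Primrec axPAC := by
  have hb : Primrec bd := by
    have : bd = fun D => (D + 1) * (D + 1) := by funext D; rw [bd, sq]
    rw [this]; fun_prop
  unfold axPAC fPAC fFac fNcst
  fun_prop

lemma pr_axChar : Primrec axChar := by unfold axChar; fun_prop

lemma pr_axAC : Primrec axAC := by
  unfold axAC
  have h : Primrec fun n : ℕ => tSum (fun j => tMul (vr j) (tPow (vr (n + 1)) j)) (n + 1) :=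
    pr_tSum (by fun_prop) (by fun_prop)
  fun_prop

section
variable {K : Type} [Field K] {e : ℕ} {σ : Fin e → K →+* K} {d : K} {F : ℕ → K → K → K}

/-- The values of the last two variables. -/
lemma getD_two {s : List K} {k : ℕ} (x y : K) (h : s.length = k) :
    (s ++ [x] ++ [y]).getD k 0 = x ∧ (s ++ [x] ++ [y]).getD (k + 1) 0 = y := by
  subst h; simp

lemma ev2_two {s : List K} {c : ℕ → K} {o D k : ℕ} (a b : K) (h : s.length = k) (hk : o + D ≤ k)
    (hc : ∀ m < D, s.getD (o + m) 0 = c m) (x y : K) :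
    ev2 (fun m => (s ++ [a] ++ [b]).getD (o + m) 0) D x y = ev2 c D x y := by
  refine ev2_congr (fun m hm => ?_) x y
  rw [← hc m hm, List.append_assoc, getD_append_lt (by omega)]

lemma Interp.fNcst (H : Interp σ d F) {s : List K} {c : ℕ → K} {o D k : ℕ} (h : s.length = k)
    (hk : o + D ≤ k) (hc : ∀ m < D, s.getD (o + m) 0 = c m) :
    sat d F (fNcst o D k) s ↔ ∃ x y, ev2 c D x y ≠ ev2 c D 0 0 := by
  simp only [PACDec.fNcst, sat_fEx, sat_fNot, sat_eq, H.tEv2, H.tVr, H.tZero]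
  refine exists_congr fun x => exists_congr fun y => ?_
  rw [(getD_two x y h).1, (getD_two x y h).2, ev2_two x y h hk hc, ev2_two x y h hk hc]

lemma Interp.axPAC_aux (H : Interp σ d F) {D : ℕ} {s : List K} {c : ℕ → K} (hs : s.length = D)
    (hc : ∀ m < D, s.getD m 0 = c m) :
    sat d F (fPAC D) s ↔
    ((∃ a b, Fix σ a ∧ Fix σ b ∧ ev2 c D a b = 0) ∨ (∀ x y, ev2 c D x y = ev2 c D 0 0) ∨
      ∃ g h, (∀ x y, ev2 c D x y = ev2 g (bd D) x y * ev2 h (bd D) x y) ∧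
        (∃ x y, ev2 g (bd D) x y ≠ ev2 g (bd D) 0 0) ∧
        (∃ x y, ev2 h (bd D) x y ≠ ev2 h (bd D) 0 0)) := by
  have hc' : ∀ m < D, s.getD (0 + m) 0 = c m := by simpa using hc
  rw [fPAC, sat_fOr, sat_fOr]
  refine or_congr ?_ (or_congr ?_ ?_)
  · simp only [sat_fExN, sat_eq, H.tEv2, H.tVr, H.tZero, H.guard]
    refine exists_congr fun x => ?_
    rw [← exists_and_left]
    refine exists_congr fun y => ?_
    rw [(getD_two x y hs).1, (getD_two x y hs).2, ev2_two x y hs (by omega) hc']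
  · simp only [sat_all, sat_eq, H.tEv2, H.tVr, H.tZero]
    refine forall_congr' fun x => forall_congr' fun y => ?_
    rw [(getD_two x y hs).1, (getD_two x y hs).2, ev2_two x y hs (by omega) hc',
      ev2_two x y hs (by omega) hc']
  · rw [sat_fExIt]
    have key : ∀ (l : List K) (g h : ℕ → K), l.length = bd D + bd D →
        (∀ m < bd D, l.getD m 0 = g m) → (∀ m < bd D, l.getD (bd D + m) 0 = h m) →
        (sat d F (fFac D) (s ++ l) ↔
        ((∀ x y, ev2 c D x y = ev2 g (bd D) x y * ev2 h (bd D) x y) ∧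
        (∃ x y, ev2 g (bd D) x y ≠ ev2 g (bd D) 0 0) ∧
        (∃ x y, ev2 h (bd D) x y ≠ ev2 h (bd D) 0 0))) := by
      intro l g h hl hg hh
      have hlen : (s ++ l).length = D + (bd D + bd D) := by simp [hs, hl]
      have e1 : ∀ m < D, (s ++ l).getD (0 + m) 0 = c m := fun m hm => by
        rw [getD_append_lt (by omega), hc' m hm]
      have e2 : ∀ m < bd D, (s ++ l).getD (D + m) 0 = g m := fun m hm => by
        rw [List.getD_append_right _ _ _ _ (by omega), hs, Nat.add_sub_cancel_left, hg m hm]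
      have e3 : ∀ m < bd D, (s ++ l).getD (D + bd D + m) 0 = h m := fun m hm => by
        rw [List.getD_append_right _ _ _ _ (by omega), hs, add_assoc, Nat.add_sub_cancel_left,
          hh m hm]
      rw [fFac, sat_fAnd, sat_fAnd, H.fNcst hlen (by omega) e2, H.fNcst hlen (by omega) e3]
      refine and_congr ?_ Iff.rfl
      simp only [sat_all, sat_eq, H.tEv2, H.tVr, H.tMul]
      refine forall_congr' fun x => forall_congr' fun y => ?_
      rw [(getD_two x y hlen).1, (getD_two x y hlen).2, ev2_two x y hlen (by omega) e1,
        ev2_two x y hlen (by omega) e2, ev2_two x y hlen (by omega) e3]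
    constructor
    · rintro ⟨l, hl, hsat⟩
      exact ⟨_, _, (key l (fun m => l.getD m 0) (fun m => l.getD (bd D + m) 0) hl
        (fun _ _ => rfl) (fun _ _ => rfl)).1 hsat⟩
    · rintro ⟨g, h, hgh⟩
      refine ⟨(List.range (bd D)).map g ++ (List.range (bd D)).map h, by simp,
        (key _ g h (by simp) (fun m hm => ?_) fun m hm => ?_).2 hgh⟩
      · rw [getD_append_lt (by simpa using hm), getD_map_range g hm]
      · rw [List.getD_append_right _ _ _ _ (by simp), List.length_map, List.length_range,
          Nat.add_sub_cancel_left, getD_map_range h hm]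

lemma Interp.axPAC (H : Interp σ d F) : (∀ D, sat d F (axPAC D) []) ↔ PACb σ := by
  unfold PACb
  refine forall_congr' fun D => ?_
  rw [PACDec.axPAC, sat_fAllNIt]
  simp only [H.guard, List.nil_append]
  constructor
  · intro h c hc
    refine (H.axPAC_aux (s := (List.range D).map c) (by simp)
      fun m hm => getD_map_range c hm).1 (h _ (by simp) ?_)
    simpa using hc
  · intro h l hl hfix
    refine (H.axPAC_aux (c := fun m => l.getD m 0) hl fun m hm => rfl).2 (h _ fun m hm => ?_)
    rw [List.getD_eq_getElem _ _ (by omega)]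
    exact hfix _ (List.getElem_mem _)

end

/-! ### Axioms for fields with endomorphisms -/

/-- The application of a unary function symbol. -/
def tU (k a : ℕ) : ℕ := ap k a a

/-- The axioms of fields. -/
def axField : List ℕ :=
  [ fEq (vr 0) tZero,
    fAll (fAll (fEq (tU 1 (vr 0)) (tU 1 (vr 1)))),
    fAll (fAll (fEq (tU 2 (vr 0)) (tU 2 (vr 1)))),
    fAll (fAll (fAll (fEq (tAdd (tAdd (vr 0) (vr 1)) (vr 2)) (tAdd (vr 0) (tAdd (vr 1) (vr 2)))))),
    fAll (fEq (tAdd tZero (vr 0)) (vr 0)),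
    fAll (fEq (tAdd (tNeg (vr 0)) (vr 0)) tZero),
    fAll (fAll (fAll (fEq (tMul (tMul (vr 0) (vr 1)) (vr 2)) (tMul (vr 0) (tMul (vr 1) (vr 2)))))),
    fAll (fAll (fEq (tMul (vr 0) (vr 1)) (tMul (vr 1) (vr 0)))),
    fAll (fEq (tMul tOne (vr 0)) (vr 0)),
    fAll (fImp (fNot (fEq (vr 0) tZero)) (fEq (tMul (vr 0) (tInv (vr 0))) tOne)),
    fEq (tInv tZero) tZero,
    fAll (fAll (fAll (fEq (tMul (vr 0) (tAdd (vr 1) (vr 2)))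
      (tAdd (tMul (vr 0) (vr 1)) (tMul (vr 0) (vr 2)))))),
    fNot (fEq tZero tOne) ]

/-- The axioms for the `i`-th endomorphism. -/
def axEnd (i : ℕ) : List ℕ :=
  [ fEq (tU (7 + i) tOne) tOne,
    fAll (fAll (fEq (tU (7 + i) (tAdd (vr 0) (vr 1)))
      (tAdd (tU (7 + i) (vr 0)) (tU (7 + i) (vr 1))))),
    fAll (fAll (fEq (tU (7 + i) (tMul (vr 0) (vr 1)))
      (tMul (tU (7 + i) (vr 0)) (tU (7 + i) (vr 1))))),
    fAllN (fEq (tU (7 + i) (vr 0)) (vr 0)) ]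

/-- The common fixed points of the endomorphisms belong to the range of the relativised
quantifier. -/
def axGuard (e : ℕ) : ℕ :=
  fAll ((List.range e).foldr (fun i a => fImp (fEq (tU (7 + i) (vr 0)) (vr 0)) a)
    (fEq (tU 0 (vr 0)) (vr 0)))

/-- The axioms of fields with `e` endomorphisms. -/
def axBase (e : ℕ) : List ℕ := axField ++ (axGuard e :: (List.range e).flatMap axEnd)

lemma sat_foldr_imp {K : Type} (d : K) (F : ℕ → K → K → K) (L : List ℕ) (p : ℕ → ℕ) (a : ℕ)
    (s : List K) : sat d F (L.foldr (fun i a => fImp (p i) a) a) s ↔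
      ((∀ i ∈ L, sat d F (p i) s) → sat d F a s) := by
  induction L with
  | nil => simp
  | cons i L ih => rw [List.foldr_cons, sat_imp, ih, List.forall_mem_cons, and_imp]

/-- A model of the axioms is a field with endomorphisms. -/
lemma exists_interp {K : Type} {d : K} {F : ℕ → K → K → K} {e : ℕ}
    (h : ∀ c ∈ axBase e, sat d F c []) :
    ∃ (_ : Field K) (σ : Fin e → K →+* K), Interp σ d F := by
  simp only [axBase, List.forall_mem_append, List.forall_mem_cons, List.forall_mem_flatMap,
    List.mem_range] at h
  obtain ⟨hF, hG, hE⟩ := h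
  simp only [axField, List.forall_mem_cons, sat_all, sat_eq, tU, tZero, tOne, tAdd, tMul, tNeg,
    tInv, tv_ap, tv_vr, sat_fNot, sat_imp, List.nil_append, List.cons_append, List.getD_cons_zero,
    List.getD_cons_succ, List.getD_nil] at hF
  obtain ⟨h1, h2, h3, h4, h5, h6, h7, h8, h9, h10, h11, h12, h13, -⟩ := hF
  simp only [axEnd, List.forall_mem_cons, sat_all, sat_allN, sat_eq, tU, tOne, tAdd, tMul,
    tv_ap, tv_vr, List.nil_append, List.cons_append,
    List.getD_cons_zero, List.getD_cons_succ, List.getD_nil] at hE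
  simp only [axGuard, sat_foldr_imp, sat_all, sat_eq, tU, tv_ap, tv_vr, List.nil_append,
    List.getD_cons_zero, List.mem_range] at hG
  have z : ∀ x, F 1 x x = d := fun x => (h2 x d).trans h1.symm
  have o : ∀ x, F 2 x x = F 2 d d := fun x => h3 x d
  letI : Zero K := ⟨d⟩
  letI : One K := ⟨F 2 d d⟩
  letI : Add K := ⟨F 3⟩
  letI : Mul K := ⟨F 4⟩
  letI : Neg K := ⟨fun x => F 5 x x⟩
  letI : Inv K := ⟨fun x => F 6 x x⟩
  have hz : (0 : K) = d := rfl
  letI : Field K := Field.ofMinimalAxioms K h4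
    (fun x => by have := h5 x; rwa [z] at this)
    (fun x => by have := h6 x; rwa [z] at this) h7 h8
    (fun x => by have := h9 x; rwa [o] at this)
    (fun x hx => by have := h10 x (by rwa [z]); rwa [o] at this)
    (by have := h11; rw [z] at this; exact this)
    h12 ⟨0, 1, fun h0 => h13 (by rw [z]; exact h0)⟩
  refine ⟨inferInstance, fun i => RingHom.mk' (MonoidHom.mk ⟨fun x => F (7 + i) x x, ?_⟩ ?_) ?_, ?_⟩
  · have := (hE i i.2).1
    exact this
  · exact fun x y => (hE i i.2).2.2.1 x y
  · exact fun x y => (hE i i.2).2.1 x y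
  · refine ⟨rfl, fun x => ?_, z, o, fun _ _ => rfl, fun _ _ => rfl, fun _ => rfl, fun _ => rfl,
      fun _ _ => rfl⟩
    constructor
    · intro hx i
      exact (hE i i.2).2.2.2.1 x hx
    · intro hx
      exact hG x fun i hi => hx ⟨i, hi⟩

lemma Interp.axBase {K : Type} [Field K] {d : K} {F : ℕ → K → K → K} {e : ℕ}
    {σ : Fin e → K →+* K} (H : Interp σ d F) : ∀ c ∈ axBase e, sat d F c [] := by
  have hs : ∀ i < e, ∃ f : K →+* K, (∀ x, F (7 + i) x x = f x) ∧ ∀ x, Fix σ x → f x = x :=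
    fun i hi => ⟨σ ⟨i, hi⟩, H.sig ⟨i, hi⟩, fun x hx => hx _⟩
  simp only [PACDec.axBase, List.forall_mem_append, List.forall_mem_cons, List.forall_mem_flatMap,
    List.mem_range]
  refine ⟨?_, ?_, ?_⟩
  · simp only [axField, List.forall_mem_cons, sat_all, sat_eq, tU, PACDec.tZero, PACDec.tOne,
      PACDec.tAdd, PACDec.tMul, PACDec.tNeg, PACDec.tInv, tv_ap, tv_vr, sat_fNot, sat_imp,
      List.nil_append, List.cons_append, List.getD_cons_zero, List.getD_cons_succ, List.getD_nil,
      H.zero, H.one, H.add, H.mul, H.neg, H.inv, H.d]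
    refine ⟨trivial, fun _ _ => trivial, fun _ _ => trivial, add_assoc, zero_add, neg_add_cancel, mul_assoc,
      mul_comm, one_mul, fun x hx => mul_inv_cancel₀ hx, inv_zero, mul_add, zero_ne_one, by simp⟩
  · simp only [axGuard, sat_foldr_imp, sat_all, sat_eq, tU, tv_ap, tv_vr, List.nil_append,
      List.getD_cons_zero, List.mem_range, H.guard]
    intro x hx i
    rw [← H.sig, hx i i.2]
  · intro i hi
    obtain ⟨f, hf, hf'⟩ := hs i hi
    simp only [axEnd, List.forall_mem_cons, sat_all, sat_allN, sat_eq, tU, PACDec.tOne,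
      PACDec.tAdd, PACDec.tMul, tv_ap, tv_vr, List.nil_append, List.cons_append,
      List.getD_cons_zero, List.getD_cons_succ, H.one, H.add, H.mul, hf, H.guard, map_add,
      map_mul, map_one]
    exact ⟨trivial, fun _ _ => trivial, fun _ _ => trivial, hf', by simp⟩

/-! ### Codes of rational numbers -/

/-- The code of a rational number consists of the codes of its numerator and its denominator. -/
def ratCode (q : ℚ) : ℕ := Nat.pair (Encodable.encode q.num) q.den

lemma ratCode_eq (q : ℚ) : @Encodable.encode ℚ Rat.instEncodable q = ratCode q := rfl

/-- The numbers of the form `ratCode q`; an integer with code `z` has absolute value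
`(z + 1) / 2`. -/
def IsRatCode (c : ℕ) : Prop :=
  0 < c.unpair.2 ∧ ∀ k < c.unpair.2 + 1,
    (c.unpair.1 + 1) / 2 % k = 0 ∧ c.unpair.2 % k = 0 → k = 1

lemma intCode_ofNat (n : ℕ) : Encodable.encode (n : ℤ) = 2 * n := rfl

lemma intCode_negSucc (n : ℕ) : Encodable.encode (Int.negSucc n) = 2 * n + 1 := rfl

lemma natAbs_code (z : ℤ) : (Encodable.encode z + 1) / 2 = z.natAbs := by
  rcases z with n | n
  · rw [Int.ofNat_eq_natCast, intCode_ofNat, Int.natAbs_natCast]; omega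
  · rw [intCode_negSucc, Int.natAbs_negSucc]; omega

lemma coprime_iff (a d : ℕ) (hd : 0 < d) :
    a.Coprime d ↔ ∀ k < d + 1, a % k = 0 ∧ d % k = 0 → k = 1 := by
  constructor
  · rintro h k - ⟨h1, h2⟩
    exact Nat.eq_one_of_dvd_coprimes h (Nat.dvd_of_mod_eq_zero h1) (Nat.dvd_of_mod_eq_zero h2)
  · intro h
    exact h _ (Nat.lt_succ_of_le (Nat.gcd_le_right _ hd))
      ⟨Nat.mod_eq_zero_of_dvd (Nat.gcd_dvd_left _ _), Nat.mod_eq_zero_of_dvd (Nat.gcd_dvd_right _ _)⟩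

lemma isRatCode_iff (c : ℕ) : IsRatCode c ↔ ∃ q, ratCode q = c := by
  constructor
  · rintro ⟨h1, h2⟩
    obtain ⟨z, hz⟩ : ∃ z : ℤ, Encodable.encode z = c.unpair.1 :=
      ⟨Denumerable.ofNat ℤ c.unpair.1, Denumerable.encode_ofNat _⟩
    rw [← coprime_iff _ _ h1, ← hz, natAbs_code] at h2
    exact ⟨⟨z, c.unpair.2, h1.ne', h2⟩, by simp [ratCode, hz]⟩
  · rintro ⟨q, rfl⟩
    rw [IsRatCode, ratCode, Nat.unpair_pair]
    refine ⟨q.den_pos, ?_⟩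
    rw [← coprime_iff _ _ q.den_pos, natAbs_code]
    exact q.reduced

instance : DecidablePred IsRatCode := fun c => by unfold IsRatCode; infer_instance

lemma primrec_isRatCode : PrimrecPred IsRatCode := by
  have h : PrimrecRel fun (k : ℕ) (c : ℕ) =>
      ((c.unpair.1 + 1) / 2 % k = 0 ∧ c.unpair.2 % k = 0 → k = 1) := by
    have h1 : PrimrecRel fun (k : ℕ) (c : ℕ) => (c.unpair.1 + 1) / 2 % k = 0 :=
      Primrec.eq.comp (Primrec.nat_mod.comp (Primrec.nat_div.comp (by fun_prop) (by fun_prop))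
        (by fun_prop)) (by fun_prop)
    have h2 : PrimrecRel fun (k : ℕ) (c : ℕ) => c.unpair.2 % k = 0 :=
      Primrec.eq.comp (Primrec.nat_mod.comp (by fun_prop) (by fun_prop)) (by fun_prop)
    have h3 : PrimrecRel fun (k : ℕ) (_ : ℕ) => k = 1 :=
      Primrec.eq.comp (by fun_prop) (by fun_prop)
    refine (((h1.and h2).not).or h3).of_eq fun z => ?_
    exact imp_iff_not_or.symm
  exact PrimrecPred.and (Primrec.nat_lt.comp (by fun_prop) (by fun_prop))
    (h.forall_lt.comp (by fun_prop) Primrec.id)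

/-- The rational number with a given code. In the standard enumeration of the rational numbers it
has as many predecessors as there are smaller codes. -/
def ratOf (c : ℕ) : ℚ :=
  Denumerable.ofNat ℚ ((List.range c).filter (IsRatCode ·)).length

lemma primrec_ratOf : Primrec ratOf :=
  (Primrec.ofNat ℚ).comp (Primrec.list_length.comp ((Primrec.listFilter primrec_isRatCode).comp
    Primrec.list_range))

lemma encode_rat (q : ℚ) : @Encodable.encode ℚ Rat.instDenumerable.toEncodable q =
    ((List.range (ratCode q)).filter (IsRatCode ·)).length := by
  letI := @Encodable.decidableRangeEncode ℚ Rat.instEncodable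
  have : @Encodable.encode ℚ Rat.instDenumerable.toEncodable q =
    (List.range (ratCode q)).countP (· ∈ Set.range (@Encodable.encode ℚ Rat.instEncodable)) := rfl
  rw [this, List.countP_eq_length_filter]
  congr 2
  funext c
  rw [decide_eq_decide, isRatCode_iff]
  rfl

lemma ratOf_ratCode (q : ℚ) : ratOf (ratCode q) = q := by
  rw [ratOf, ← encode_rat, Denumerable.ofNat_encode]

/-! ### Root axioms -/

section
variable {α : Type} [Primcodable α] {f g : α → ℕ}

@[fun_prop] lemma pr_div (hf : Primrec f) (hg : Primrec g) : Primrec fun x => f x / g x :=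
  Primrec.nat_div.comp hf hg

@[fun_prop] lemma pr_mod (hf : Primrec f) (hg : Primrec g) : Primrec fun x => f x % g x :=
  Primrec.nat_mod.comp hf hg

end

/-- The term for the integer with a given code. -/
def tInt (z : ℕ) : ℕ := [tNum (z / 2), tNeg (tNum (z / 2 + 1))].getD (z % 2) 0

/-- The term for the rational number with a given code. -/
def tRat (c : ℕ) : ℕ := tMul (tInt c.unpair.1) (tInv (tNum c.unpair.2))

@[fun_prop] lemma pr_tRat {α : Type} [Primcodable α] {f : α → ℕ} (hf : Primrec f) :
    Primrec fun x => tRat (f x) := by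
  have : Primrec tRat := by unfold tRat tInt; fun_prop
  fun_prop

/-- The term for the value at the first variable of the monic polynomial with lower coefficients
`L`. -/
def tPoly (L : List ℕ) : ℕ :=
  tAdd (tPow (vr 0) L.length)
    (tSum (fun j => tMul (tRat (L.getD j 0)) (tPow (vr 0) j)) L.length)

lemma pr_tPoly : Primrec tPoly := by
  unfold tPoly
  have hl : Primrec fun L : List ℕ => L.length := Primrec.list_length
  have h : Primrec fun L : List ℕ =>
      tSum (fun j => tMul (tRat (L.getD j 0)) (tPow (vr 0) j)) L.length :=
    pr_tSum (by fun_prop) hl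
  fun_prop

/-- The axiom stating the answer of `f` to the question whether the polynomial with a given index
has a root in the fixed field. -/
def axOrc (f : List ℚ → Bool) (n : ℕ) : ℕ :=
  bif decide (∀ c ∈ dl n, IsRatCode c) then
    bif f ((dl n).map ratOf ++ [1]) then fExN (fEq (tPoly (dl n)) tZero)
    else fNot (fExN (fEq (tPoly (dl n)) tZero))
  else fNot fBot

lemma computable_axOrc {f : List ℚ → Bool} (hf : Computable f) : Computable (axOrc f) := by
  have hdl : Primrec dl := by fun_prop
  have ht := pr_tPoly
  refine Computable.cond ?_ (Computable.cond (hf.comp ?_) ?_ ?_) (Computable.const _)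
  · exact (primrec_isRatCode.forall_mem_list.comp hdl).decide.to_comp
  · refine Primrec.to_comp (Primrec.list_append.comp (Primrec.list_map hdl ?_) (Primrec.const _))
    exact primrec_ratOf.comp Primrec.snd
  · refine Primrec.to_comp ?_
    fun_prop
  · refine Primrec.to_comp ?_
    fun_prop

section
variable {K : Type} [Field K] {e : ℕ} {σ : Fin e → K →+* K} {d : K} {F : ℕ → K → K → K}

lemma Interp.tInt (H : Interp σ d F) (s : List K) (z : ℤ) :
    tv d F s (tInt (Encodable.encode z)) = z := by
  rcases z with n | n
  · rw [Int.ofNat_eq_natCast, intCode_ofNat, PACDec.tInt]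
    simp [H.tNum]
  · rw [intCode_negSucc, PACDec.tInt, show (2 * n + 1) / 2 = n by omega,
      show (2 * n + 1) % 2 = 1 by omega]
    simp [H.tNum, H.tNeg]

lemma Interp.tRat (H : Interp σ d F) (s : List K) (q : ℚ) :
    tv d F s (tRat (ratCode q)) = q := by
  rw [PACDec.tRat, ratCode, Nat.unpair_pair, H.tMul, H.tInv, H.tInt, H.tNum, Rat.cast_def,
    div_eq_mul_inv]

lemma Interp.tPoly (H : Interp σ d F) (x : K) (l : List ℚ) :
    tv d F [x] (tPoly (l.map ratCode)) =
      x ^ l.length + ∑ j ∈ Finset.range l.length, ((l.getD j 0 : ℚ) : K) * x ^ j := by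
  rw [PACDec.tPoly, H.tAdd, H.tPow, H.tSum, H.tVr, List.length_map, List.getD_cons_zero]
  congr 1
  refine Finset.sum_congr rfl fun j hj => ?_
  have hj' := Finset.mem_range.1 hj
  rw [H.tMul, H.tPow, H.tVr, List.getD_cons_zero, List.getD_eq_getElem _ _ (by simpa using hj'),
    List.getD_eq_getElem _ _ hj', List.getElem_map, H.tRat]

lemma Interp.axOrc (H : Interp σ d F) (f : List ℚ → Bool) :
    (∀ n, sat d F (axOrc f n) []) ↔ ∀ l : List ℚ, (f (l ++ [1]) = true ↔
      ∃ x, Fix σ x ∧ x ^ l.length +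
        ∑ j ∈ Finset.range l.length, ((l.getD j 0 : ℚ) : K) * x ^ j = 0) := by
  have key : ∀ l : List ℚ, sat d F (PACDec.axOrc f (Encodable.encode (l.map ratCode))) [] ↔
      (f (l ++ [1]) = true ↔ ∃ x, Fix σ x ∧ x ^ l.length +
        ∑ j ∈ Finset.range l.length, ((l.getD j 0 : ℚ) : K) * x ^ j = 0) := by
    intro l
    have h1 : dl (Encodable.encode (l.map ratCode)) = l.map ratCode :=
      Denumerable.ofNat_encode _
    have h2 : ∀ c ∈ l.map ratCode, IsRatCode c := by
      intro c hc
      obtain ⟨q, -, rfl⟩ := List.mem_map.1 hc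
      exact (isRatCode_iff _).2 ⟨q, rfl⟩
    have h3 : (l.map ratCode).map ratOf = l := by
      rw [List.map_map, show ratOf ∘ ratCode = id from funext ratOf_ratCode, List.map_id]
    have h4 : sat d F (fExN (fEq (PACDec.tPoly (l.map ratCode)) PACDec.tZero)) [] ↔
        ∃ x, Fix σ x ∧ x ^ l.length +
          ∑ j ∈ Finset.range l.length, ((l.getD j 0 : ℚ) : K) * x ^ j = 0 := by
      simp only [sat_fExN, sat_eq, List.nil_append, H.guard, H.tPoly, H.tZero]
    rw [PACDec.axOrc, h1, decide_eq_true h2, cond_true, h3, ← h4]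
    cases f (l ++ [1]) <;> simp
  constructor
  · exact fun h l => (key l).1 (h _)
  · intro h n
    by_cases hn : ∀ c ∈ dl n, IsRatCode c
    · obtain ⟨l, hl⟩ : ∃ l : List ℚ, l.map ratCode = dl n := by
        generalize dl n = L at hn
        induction L with
        | nil => exact ⟨[], rfl⟩
        | cons c L ih =>
          obtain ⟨l, hl⟩ := ih fun c hc => hn c (List.mem_cons_of_mem _ hc)
          obtain ⟨q, hq⟩ := (isRatCode_iff c).1 (hn c List.mem_cons_self)
          exact ⟨q :: l, by simp [hl, hq]⟩
      have : n = Encodable.encode (l.map ratCode) := by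
        rw [hl, dl, Denumerable.encode_ofNat]
      rw [this]
      exact (key l).2 (h l)
    · rw [PACDec.axOrc, decide_eq_false hn, cond_false, sat_fNot]
      exact sat_bot d F []

end

/-! ### The axiom system -/

/-- The axioms: a field with `e` endomorphisms, algebraically closed of characteristic zero, whose
fixed field is PAC and has roots as told by `f`. -/
def axAll (e : ℕ) (f : List ℚ → Bool) (n : ℕ) : ℕ :=
  [(axBase e).getD n.unpair.2 (fNot fBot), axChar n.unpair.2, axAC n.unpair.2, axPAC n.unpair.2,
    axOrc f n.unpair.2].getD n.unpair.1 (fNot fBot)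

lemma computable_axAll (e : ℕ) {f : List ℚ → Bool} (hf : Computable f) :
    Computable (axAll e f) := by
  have hm : Computable fun n : ℕ => n.unpair.2 := Computable.snd.comp Computable.unpair
  have hl : Primrec fun n : ℕ => (axBase e).getD n (fNot fBot) := by fun_prop
  refine Computable₂.comp (f := fun (l : List ℕ) i => l.getD i (fNot fBot))
    (Primrec.list_getD _).to_comp ?_ (Computable.fst.comp Computable.unpair)
  exact Computable.list_cons.comp (hl.to_comp.comp hm) (Computable.list_cons.comp
    (pr_axChar.to_comp.comp hm) (Computable.list_cons.comp (pr_axAC.to_comp.comp hm)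
    (Computable.list_cons.comp (pr_axPAC.to_comp.comp hm) (Computable.list_cons.comp
    ((computable_axOrc hf).comp hm) (Computable.const [])))))

lemma sat_axAll {K : Type} (d : K) (F : ℕ → K → K → K) (e : ℕ) (f : List ℚ → Bool) :
    (∀ n, sat d F (axAll e f n) []) ↔ (∀ c ∈ axBase e, sat d F c []) ∧
      (∀ n, sat d F (axChar n) []) ∧ (∀ n, sat d F (axAC n) []) ∧ (∀ n, sat d F (axPAC n) []) ∧
      (∀ n, sat d F (axOrc f n) []) := by
  constructor
  · intro h
    have h' : ∀ i m, sat d F ([(axBase e).getD m (fNot fBot), axChar m, axAC m, axPAC m,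
        axOrc f m].getD i (fNot fBot)) [] := fun i m => by
      have := h (Nat.pair i m)
      rwa [axAll, Nat.unpair_pair] at this
    refine ⟨fun c hc => ?_, h' 1, h' 2, h' 3, h' 4⟩
    obtain ⟨i, hi, rfl⟩ := List.getElem_of_mem hc
    have := h' 0 i
    rwa [List.getD_cons_zero, List.getD_eq_getElem _ _ hi] at this
  · rintro ⟨h0, h1, h2, h3, h4⟩ n
    unfold axAll
    generalize n.unpair.2 = m
    have hT : sat d F (fNot fBot) [] := (sat_fNot d F _ _).2 (sat_bot d F [])
    rcases n.unpair.1 with - | - | - | - | - | i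
    · rw [List.getD_cons_zero]
      by_cases hm : m < (axBase e).length
      · rw [List.getD_eq_getElem _ _ hm]
        exact h0 _ (List.getElem_mem hm)
      · rw [List.getD_eq_default _ _ (not_lt.1 hm)]
        exact hT
    · exact h1 m
    · exact h2 m
    · exact h3 m
    · exact h4 m
    · exact hT

/-! ### Formulas and their codes -/

/-- The code of a term. -/
def trT : Tm → ℕ
  | .var i => vr i
  | .cst q => tRat (ratCode q)
  | .add a b => tAdd (trT a) (trT b)
  | .mul a b => tMul (trT a) (trT b)
  | .neg a => tNeg (trT a)

/-- The code of a formula. -/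
def trF : Fm → ℕ
  | .bot => fBot
  | .eq a b => fEq (trT a) (trT b)
  | .imp a b => fImp (trF a) (trF b)
  | .all a => fAllN (trF a)

section
variable {K : Type} [Field K] {e : ℕ} {σ : Fin e → K →+* K} {d : K} {F : ℕ → K → K → K}

lemma Interp.trT (H : Interp σ d F) (s : List K) (t : Tm) : tv d F s (trT t) = t.ev s := by
  induction t with
  | var i => exact H.tVr s i
  | cst q => exact H.tRat s q
  | add a b iha ihb => rw [PACDec.trT, H.tAdd, iha, ihb]; rfl
  | mul a b iha ihb => rw [PACDec.trT, H.tMul, iha, ihb]; rfl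
  | neg a iha => rw [PACDec.trT, H.tNeg, iha]; rfl

lemma Interp.trF (H : Interp σ d F) (φ : Fm) (s : List K) :
    sat d F (trF φ) s ↔ φ.sat (Fix σ) s := by
  induction φ generalizing s with
  | bot => exact iff_of_false (sat_bot d F s) id
  | eq a b => rw [PACDec.trF, sat_eq, H.trT, H.trT]; rfl
  | imp a b iha ihb => rw [PACDec.trF, sat_imp, iha, ihb]; rfl
  | all a iha =>
    rw [PACDec.trF, sat_allN]
    refine forall_congr' fun x => ?_
    rw [H.guard, iha]

end

/-! ### Parsing

The parsers read a list of symbol codes from right to left and keep a stack of terms or formulas.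
Each is given twice: on terms and formulas, and on their codes, where it is primitive recursive. -/

/-- The rational number with code `c`, if there is one. -/
def cstOf (c : ℕ) : Tm := .cst (if IsRatCode c then ratOf c else 0)

/-- The step of the parser of terms. Modulo `4`, the code of a variable is `2`, that of a ring
operation is `1`, and that of a rational constant is `3`. -/
def stepT (t : ℕ) (S : List Tm) : List Tm :=
  [ .var (t / 4) :: S,
    [ .add (S.getD 0 (.cst 0)) (S.getD 1 (.cst 0)) :: S.tail.tail,
      .mul (S.getD 0 (.cst 0)) (S.getD 1 (.cst 0)) :: S.tail.tail,
      .neg (S.getD 0 (.cst 0)) :: S.tail,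
      .cst 0 :: S ].getD (t / 4) (.cst 1 :: S),
    .var (t / 4) :: S ].getD (t % 4) (cstOf (t / 4) :: S)

/-- The parser of terms. -/
def parseT (l : List ℕ) : Tm := (l.foldr stepT []).getD 0 (.cst 0)

/-- The code of `cst 0`. -/
def cZero : ℕ := tRat (ratCode 0)

/-- The code of `cst 1`. -/
def cOne : ℕ := tRat (ratCode 1)

/-- The version of `cstOf` on codes. -/
def cstOfC (c : ℕ) : ℕ := if IsRatCode c then tRat c else cZero

/-- The version of `stepT` on codes. -/
def stepTC (t : ℕ) (S : List ℕ) : List ℕ :=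
  [ vr (t / 4) :: S,
    [ tAdd (S.getD 0 cZero) (S.getD 1 cZero) :: S.tail.tail,
      tMul (S.getD 0 cZero) (S.getD 1 cZero) :: S.tail.tail,
      tNeg (S.getD 0 cZero) :: S.tail,
      cZero :: S ].getD (t / 4) (cOne :: S),
    vr (t / 4) :: S ].getD (t % 4) (cstOfC (t / 4) :: S)

/-- The version of `parseT` on codes. -/
def parseTC (l : List ℕ) : ℕ := (l.foldr stepTC []).getD 0 cZero

lemma trT_cstOf (c : ℕ) : trT (cstOf c) = cstOfC c := by
  unfold cstOf cstOfC
  split_ifs with h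
  · obtain ⟨q, rfl⟩ := (isRatCode_iff c).1 h
    rw [ratOf_ratCode]; rfl
  · rfl

lemma stepTC_map (t : ℕ) (S : List Tm) : stepTC t (S.map trT) = (stepT t S).map trT := by
  have h : ∀ i, (S.map trT).getD i cZero = trT (S.getD i (.cst 0)) := fun i =>
    List.getD_map _ (Tm.cst 0) trT
  unfold stepTC stepT
  rw [h, h, ← trT_cstOf]
  rcases t % 4 with - | - | - | i
  · rfl
  · rcases t / 4 with - | - | - | - | i <;> simp [trT, cZero, cOne]
  · rfl
  · rfl

lemma parseTC_eq (l : List ℕ) : parseTC l = trT (parseT l) := by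
  have h : ∀ l : List ℕ, l.foldr stepTC [] = (l.foldr stepT []).map trT := by
    intro l
    induction l with
    | nil => rfl
    | cons t l ih => rw [List.foldr_cons, ih, stepTC_map]; rfl
  rw [parseTC, h]
  exact List.getD_map _ (Tm.cst 0) trT

/-- The step of the parser of formulas. An even code is that of a term; two successive terms make
an equation, and the first component of the state holds a term waiting for its partner. -/
def stepF (t : ℕ) (z : List Tm × List Fm) : List Tm × List Fm :=
  [ [ ([parseT (dl (t / 2).unpair.2)], z.2) ].getD z.1.length
      ([], .eq (parseT (dl (t / 2).unpair.2)) (z.1.getD 0 (.cst 0)) :: z.2) ].getD (t % 2)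
    ([ (z.1, .imp (z.2.getD 0 .bot) (z.2.getD 1 .bot) :: z.2.tail.tail),
      (z.1, .all (z.2.getD 0 .bot) :: z.2.tail) ].getD (t / 4) (z.1, .bot :: z.2))

/-- The formula with a given Gödel number. -/
def parseF (c : ℕ) : Fm := ((dl c).foldr stepF ([], [])).2.getD 0 .bot

/-- The version of `stepF` on codes. -/
def stepFC (t : ℕ) (z : List ℕ × List ℕ) : List ℕ × List ℕ :=
  [ [ ([parseTC (dl (t / 2).unpair.2)], z.2) ].getD z.1.length
      ([], fEq (parseTC (dl (t / 2).unpair.2)) (z.1.getD 0 cZero) :: z.2) ].getD (t % 2)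
    ([ (z.1, fImp (z.2.getD 0 fBot) (z.2.getD 1 fBot) :: z.2.tail.tail),
      (z.1, fAllN (z.2.getD 0 fBot) :: z.2.tail) ].getD (t / 4) (z.1, fBot :: z.2))

/-- The version of `parseF` on codes. -/
def parseFC (c : ℕ) : ℕ := ((dl c).foldr stepFC ([], [])).2.getD 0 fBot

lemma stepFC_map (t : ℕ) (z : List Tm × List Fm) :
    stepFC t (z.1.map trT, z.2.map trF) = ((stepF t z).1.map trT, (stepF t z).2.map trF) := by
  obtain ⟨p, S⟩ := z
  have h : ∀ i, (p.map trT).getD i cZero = trT (p.getD i (.cst 0)) := fun i =>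
    List.getD_map _ (Tm.cst 0) trT
  have h' : ∀ i, (S.map trF).getD i fBot = trF (S.getD i .bot) := fun i =>
    List.getD_map _ Fm.bot trF
  simp only [stepFC, stepF, h, h', parseTC_eq]
  rcases t % 2 with - | i
  · rcases p with - | ⟨a, p⟩ <;> simp [trF]
  · rcases t / 4 with - | - | i <;> simp [trF]

lemma parseFC_eq (c : ℕ) : parseFC c = trF (parseF c) := by
  have h : ∀ l : List ℕ, l.foldr stepFC ([], []) =
      ((l.foldr stepF ([], [])).1.map trT, (l.foldr stepF ([], [])).2.map trF) := by
    intro l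
    induction l with
    | nil => rfl
    | cons t l ih => rw [List.foldr_cons, ih, stepFC_map]; rfl
  rw [parseFC, h]
  exact List.getD_map _ Fm.bot trF

section
variable {α β : Type} [Primcodable α] [Primcodable β]

@[fun_prop] lemma pr_tail {f : α → List β} (hf : Primrec f) : Primrec fun x => (f x).tail :=
  Primrec.list_tail.comp hf

@[fun_prop] lemma pr_length {f : α → List β} (hf : Primrec f) : Primrec fun x => (f x).length :=
  Primrec.list_length.comp hf

lemma pr_getD' {f : α → List β} {g : α → ℕ} {h : α → β} (hf : Primrec f) (hg : Primrec g)
    (hh : Primrec h) : Primrec fun x => (f x).getD (g x) (h x) :=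
  (Primrec.option_getD.comp (Primrec.list_getElem?.comp hf hg) hh).of_eq fun x => by
    rw [List.getD_eq_getElem?_getD]

end

lemma pr_stepTC : Primrec fun z : ℕ × List ℕ => stepTC z.1 z.2 := by
  have hc : Primrec cstOfC := Primrec.ite primrec_isRatCode (by fun_prop) (by fun_prop)
  unfold stepTC
  have h1 := pr_getD' (f := fun z : ℕ × List ℕ =>
    [ tAdd (z.2.getD 0 cZero) (z.2.getD 1 cZero) :: z.2.tail.tail,
      tMul (z.2.getD 0 cZero) (z.2.getD 1 cZero) :: z.2.tail.tail,
      tNeg (z.2.getD 0 cZero) :: z.2.tail,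
      cZero :: z.2 ]) (g := fun z => z.1 / 4) (h := fun z => cOne :: z.2)
      (by fun_prop) (by fun_prop) (by fun_prop)
  exact pr_getD' (by fun_prop) (by fun_prop) (by fun_prop)

lemma pr_parseTC : Primrec parseTC := by
  have h : Primrec fun l : List ℕ => l.foldr stepTC [] :=
    Primrec.list_foldr (f := fun l : List ℕ => l) (g := fun _ => ([] : List ℕ))
      (h := fun _ (q : ℕ × List ℕ) => stepTC q.1 q.2) Primrec.id (Primrec.const _)
      (pr_stepTC.comp Primrec.snd)
  unfold parseTC
  fun_prop

lemma pr_stepFC : Primrec fun z : ℕ × List ℕ × List ℕ => stepFC z.1 z.2 := by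
  have h0 := pr_parseTC
  unfold stepFC
  have h1 := pr_getD' (f := fun z : ℕ × List ℕ × List ℕ =>
      [ ([parseTC (dl (z.1 / 2).unpair.2)], z.2.2) ]) (g := fun z => z.2.1.length)
      (h := fun z => ([], fEq (parseTC (dl (z.1 / 2).unpair.2)) (z.2.1.getD 0 cZero) :: z.2.2))
      (by fun_prop) (by fun_prop) (by fun_prop)
  have h2 := pr_getD' (f := fun z : ℕ × List ℕ × List ℕ =>
      [ (z.2.1, fImp (z.2.2.getD 0 fBot) (z.2.2.getD 1 fBot) :: z.2.2.tail.tail),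
      (z.2.1, fAllN (z.2.2.getD 0 fBot) :: z.2.2.tail) ]) (g := fun z => z.1 / 4)
      (h := fun z => (z.2.1, fBot :: z.2.2)) (by fun_prop) (by fun_prop) (by fun_prop)
  exact pr_getD' (by fun_prop) (by fun_prop) h2

lemma pr_parseFC : Primrec parseFC := by
  have h : Primrec fun c : ℕ => (dl c).foldr stepFC ([], []) :=
    Primrec.list_foldr (f := fun c : ℕ => dl c) (g := fun _ => (([], []) : List ℕ × List ℕ))
      (h := fun _ (q : ℕ × List ℕ × List ℕ) => stepFC q.1 q.2) (by fun_prop) (Primrec.const _)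
      (pr_stepFC.comp Primrec.snd)
  unfold parseFC
  fun_prop

/-! ### Correctness of the parser -/

lemma encode_list_map {α : Type} [Encodable α] (l : List α) :
    Encodable.encode l = Encodable.encode (l.map Encodable.encode) := by
  induction l with
  | nil => rfl
  | cons a l ih => rw [List.map_cons, Encodable.encode_list_cons, ih]; rfl

lemma dl_encode {α : Type} [Encodable α] (l : List α) :
    dl (Encodable.encode l) = l.map Encodable.encode := by
  rw [encode_list_map, dl, Denumerable.ofNat_encode]

lemma encode_ringFunc {α : Type} [Encodable α] {n : ℕ} (f : Language.ring.Functions n) :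
    Encodable.encode (Sum.inr ⟨n, Sum.inl f⟩ : α ⊕ (Σ n, (Language.ring[[ℚ]]).Functions n)) =
      4 * Encodable.encode (⟨n, f⟩ : Σ n, Language.ring.Functions n) + 1 := by
  have : Encodable.encode (⟨n, Sum.inl f⟩ : Σ n, (Language.ring[[ℚ]]).Functions n) =
      2 * Encodable.encode (⟨n, f⟩ : Σ n, Language.ring.Functions n) := rfl
  rw [Encodable.encode_inr, this]
  ring

lemma encode_cst {α : Type} [Encodable α] (q : ℚ) :
    Encodable.encode (Sum.inr ⟨0, Sum.inr q⟩ : α ⊕ (Σ n, (Language.ring[[ℚ]]).Functions n)) =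
      4 * ratCode q + 3 := by
  have : Encodable.encode (⟨0, Sum.inr q⟩ : Σ n, (Language.ring[[ℚ]]).Functions n) =
      2 * ratCode q + 1 := rfl
  rw [Encodable.encode_inr, this]
  ring

lemma stepT_cst {α : Type} [Encodable α] (q : ℚ) (S : List Tm) :
    stepT (Encodable.encode
      (Sum.inr ⟨0, Sum.inr q⟩ : α ⊕ (Σ n, (Language.ring[[ℚ]]).Functions n))) S =
      .cst q :: S := by
  have hc : cstOf (ratCode q) = .cst q := by
    rw [cstOf, if_pos ((isRatCode_iff _).2 ⟨q, rfl⟩), ratOf_ratCode]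
  rw [encode_cst, stepT, show (4 * ratCode q + 3) / 4 = ratCode q by omega,
    show (4 * ratCode q + 3) % 4 = 3 by omega, hc]
  rfl

lemma foldr_func {α : Type} [Encodable α] {n : ℕ} (f : (Language.ring[[ℚ]]).Functions n)
    (ts : Fin n → (Language.ring[[ℚ]]).Term α) (S : List Tm) :
    ((Term.func f ts).listEncode.map Encodable.encode).foldr stepT S =
      stepT (Encodable.encode (Sum.inr ⟨n, f⟩ : α ⊕ (Σ n, (Language.ring[[ℚ]]).Functions n)))
        ((((List.finRange n).flatMap fun i => (ts i).listEncode).map Encodable.encode).foldr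
          stepT S) := by
  rw [Term.listEncode]
  rfl

section
variable (M : IntermediateField ℚ (AlgebraicClosure ℚ))

lemma exists_tm {k : ℕ} (t : (Language.ring[[ℚ]]).Term (Empty ⊕ Fin k)) :
    ∃ t' : Tm, (∀ S, (t.listEncode.map Encodable.encode).foldr stepT S = t' :: S) ∧
      ∀ s : Fin k → M, t'.ev (List.ofFn fun i => (s i : AlgebraicClosure ℚ)) =
        (@Term.realize _ M (fieldStruct ℚ M) _ (Sum.elim default s) t : M) := by
  letI := fieldStruct ℚ M
  induction t with
  | var i =>
    rcases i with i | i
    · exact i.elim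
    · refine ⟨.var i, fun S => ?_, fun s => ?_⟩
      · have h : Encodable.encode
            (Sum.inl (Sum.inr i) : (Empty ⊕ Fin k) ⊕ (Σ n, (Language.ring[[ℚ]]).Functions n)) =
            4 * i + 2 := by
          simp only [Encodable.encode_inl, Encodable.encode_inr]
          show 2 * (2 * (i : ℕ) + 1) = _
          ring
        show stepT (Encodable.encode _) S = _
        rw [h, stepT, show (4 * (i : ℕ) + 2) / 4 = i by omega,
          show (4 * (i : ℕ) + 2) % 4 = 2 by omega]
        rfl
      · simp [Tm.ev]
  | func f ts ih =>
    choose t' h1 h2 using ih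
    rcases f with f | f
    · have key : ∀ S, ((Term.func (Sum.inl f : (Language.ring[[ℚ]]).Functions _)
            ts).listEncode.map Encodable.encode).foldr stepT S =
          stepT (4 * Encodable.encode (⟨_, f⟩ : Σ n, Language.ring.Functions n) + 1)
            ((((List.finRange _).flatMap fun i => (ts i).listEncode).map
              Encodable.encode).foldr stepT S) := fun S => by
        rw [← encode_ringFunc (α := Empty ⊕ Fin k) f]
        exact foldr_func _ ts S
      rcases f with - | - | - | - | -
      · refine ⟨.add (t' 0) (t' 1), fun S => ?_, fun s => ?_⟩
        · refine (key S).trans ?_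
          simp only [List.finRange_succ, List.finRange_zero, List.flatMap_cons, List.flatMap_nil,
            List.map_cons, List.map_nil, List.append_nil, List.map_append, List.foldr_append, h1]
          rfl
        · show _ + _ = _
          rw [h2, h2]; rfl
      · refine ⟨.mul (t' 0) (t' 1), fun S => ?_, fun s => ?_⟩
        · refine (key S).trans ?_
          simp only [List.finRange_succ, List.finRange_zero, List.flatMap_cons, List.flatMap_nil,
            List.map_cons, List.map_nil, List.append_nil, List.map_append, List.foldr_append, h1]
          rfl
        · show _ * _ = _
          rw [h2, h2]; rfl
      · refine ⟨.neg (t' 0), fun S => ?_, fun s => ?_⟩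
        · refine (key S).trans ?_
          simp only [List.finRange_succ, List.finRange_zero, List.flatMap_cons, List.flatMap_nil,
            List.map_nil, List.append_nil, h1]
          rfl
        · show - _ = _
          rw [h2]; rfl
      · refine ⟨.cst 0, fun S => ?_, fun s => ?_⟩
        · refine (key S).trans ?_
          rfl
        · exact Rat.cast_zero
      · refine ⟨.cst 1, fun S => ?_, fun s => ?_⟩
        · refine (key S).trans ?_
          rfl
        · exact Rat.cast_one
    · rename_i n
      rcases n with - | n
      · refine ⟨.cst f, fun S => ?_, fun s => ?_⟩
        · refine (foldr_func (Sum.inr f) ts S).trans ?_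
          exact stepT_cst f S
        · exact (eq_ratCast ((algebraMap M (AlgebraicClosure ℚ)).comp (algebraMap ℚ M)) f).symm
      · exact f.elim

lemma parseT_encode {k : ℕ} (t : (Language.ring[[ℚ]]).Term (Empty ⊕ Fin k)) (s : Fin k → M) :
    (parseT (dl (Encodable.encode t))).ev (List.ofFn fun i => (s i : AlgebraicClosure ℚ)) =
      (@Term.realize _ M (fieldStruct ℚ M) _ (Sum.elim default s) t : M) := by
  obtain ⟨t', h1, h2⟩ := exists_tm M t
  have h : Encodable.encode t = Encodable.encode t.listEncode := rfl
  rw [h, dl_encode, parseT, h1]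
  exact h2 s

/-- The type of symbols in the list encoding of a formula. -/
abbrev Sym : Type := (Σ k, (Language.ring[[ℚ]]).Term (Empty ⊕ Fin k)) ⊕
  ((Σ n, (Language.ring[[ℚ]]).Relations n) ⊕ ℕ)

lemma encode_sym (m : ℕ) : Encodable.encode (Sum.inr (Sum.inr m) : Sym) = 4 * m + 3 := by
  rw [Encodable.encode_inr, Encodable.encode_inr, Encodable.encode_nat]
  ring

lemma stepF_sym (m : ℕ) (z : List Tm × List Fm) :
    stepF (Encodable.encode (Sum.inr (Sum.inr m) : Sym)) z =
      [ (z.1, .imp (z.2.getD 0 .bot) (z.2.getD 1 .bot) :: z.2.tail.tail),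
      (z.1, .all (z.2.getD 0 .bot) :: z.2.tail) ].getD m (z.1, .bot :: z.2) := by
  rw [encode_sym, stepF, show (4 * m + 3) % 2 = 1 by omega, show (4 * m + 3) / 4 = m by omega]
  rfl

lemma stepF_term {k : ℕ} (t : (Language.ring[[ℚ]]).Term (Empty ⊕ Fin k))
    (z : List Tm × List Fm) :
    stepF (Encodable.encode (Sum.inl ⟨k, t⟩ : Sym)) z =
      [ ([parseT (dl (Encodable.encode t))], z.2) ].getD z.1.length
      ([], .eq (parseT (dl (Encodable.encode t))) (z.1.getD 0 (.cst 0)) :: z.2) := by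
  have h : Encodable.encode (Sum.inl ⟨k, t⟩ : Sym) = 2 * Nat.pair k (Encodable.encode t) := rfl
  have h1 : ∀ p : ℕ, 2 * p / 2 = p := fun p => by omega
  have h2 : ∀ p : ℕ, 2 * p % 2 = 0 := fun p => by omega
  rw [h, stepF, h1, h2, Nat.unpair_pair]
  rfl

lemma exists_fm {k : ℕ} (φ : (Language.ring[[ℚ]]).BoundedFormula Empty k) :
    ∃ φ' : Fm, (∀ S, (φ.listEncode.map Encodable.encode).foldr stepF ([], S) = ([], φ' :: S)) ∧
      ∀ s : Fin k → M, φ'.sat (fun x => x ∈ M) (List.ofFn fun i => (s i : AlgebraicClosure ℚ)) ↔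
        @BoundedFormula.Realize _ M (fieldStruct ℚ M) _ _ φ default s := by
  letI := fieldStruct ℚ M
  induction φ with
  | falsum => exact ⟨.bot, fun S => by
      rw [BoundedFormula.listEncode, List.map_singleton, List.foldr_cons, List.foldr_nil,
        stepF_sym]; rfl, fun s => Iff.rfl⟩
  | equal t₁ t₂ =>
    refine ⟨.eq (parseT (dl (Encodable.encode t₁))) (parseT (dl (Encodable.encode t₂))),
      fun S => ?_, fun s => ?_⟩
    · rw [BoundedFormula.listEncode, List.map_cons, List.map_singleton, List.foldr_cons,
        List.foldr_cons, List.foldr_nil, stepF_term, stepF_term]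
      rfl
    · rw [Fm.sat, parseT_encode, parseT_encode]
      exact Subtype.coe_inj
  | rel R => exact (isEmptyRingWithConstantsRel ℚ).elim ⟨_, R⟩
  | imp φ ψ ih₁ ih₂ =>
    obtain ⟨φ', h1, h2⟩ := ih₁
    obtain ⟨ψ', h3, h4⟩ := ih₂
    refine ⟨.imp φ' ψ', fun S => ?_, fun s => ?_⟩
    · rw [BoundedFormula.listEncode, List.map_append, List.foldr_append, h3, List.map_cons,
        List.foldr_cons, h1, stepF_sym]
      rfl
    · rw [Fm.sat, h2, h4]; rfl
  | all φ ih =>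
    obtain ⟨φ', h1, h2⟩ := ih
    refine ⟨.all φ', fun S => ?_, fun s => ?_⟩
    · rw [BoundedFormula.listEncode, List.map_cons, List.foldr_cons, h1, stepF_sym]
      rfl
    · rw [Fm.sat, BoundedFormula.realize_all]
      refine Iff.trans ?_ Subtype.forall.symm
      refine forall_congr' fun x => forall_congr' fun hx => ?_
      rw [← h2, List.ofFn_succ']
      simp

/-- The formula parsed from the Gödel number of a sentence expresses that the sentence holds
in `M`. -/
lemma parseF_sentenceCode (φ : (Language.ring[[ℚ]]).Sentence) :
    (parseF (sentenceCode φ)).sat (fun x => x ∈ M) [] ↔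
      @Sentence.Realize _ M (fieldStruct ℚ M) φ := by
  obtain ⟨φ', h1, h2⟩ := exists_fm M φ
  rw [parseF, sentenceCode, dl_encode, h1]
  exact h2 default

end

/-! ### Completeness and consistency of the axiom system -/

lemma polyOfCoeffs_append_one (l : List ℚ) :
    polyOfCoeffs (l ++ [1]) =
      X ^ l.length + ∑ j ∈ Finset.range l.length, C (l.getD j 0) * X ^ j := by
  rw [polyOfCoeffs, List.length_append, List.length_singleton, Finset.sum_range_succ, add_comm]
  congr 1
  · simp
  · refine Finset.sum_congr rfl fun j hj => ?_
    rw [List.getD_append _ _ _ _ (Finset.mem_range.1 hj)]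

lemma monic_polyOfCoeffs (l : List ℚ) : (polyOfCoeffs (l ++ [1])).Monic := by
  rw [polyOfCoeffs_append_one]
  refine monic_X_pow_add ((degree_sum_le _ _).trans_lt ((Finset.sup_lt_iff ?_).2 fun j hj => ?_))
  · exact WithBot.bot_lt_coe _
  · exact (degree_C_mul_X_pow_le _ _).trans_lt (by exact_mod_cast Finset.mem_range.1 hj)

lemma exists_polyOfCoeffs {p : ℚ[X]} (hp : p.Monic) :
    ∃ l : List ℚ, p = polyOfCoeffs (l ++ [1]) := by
  refine ⟨(List.range p.natDegree).map p.coeff, ?_⟩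
  rw [polyOfCoeffs_append_one, List.length_map, List.length_range]
  conv_lhs => rw [hp.as_sum]
  congr 1
  refine Finset.sum_congr rfl fun j hj => ?_
  rw [List.getD_eq_getElem _ _ (by simpa using hj)]
  simp

/-- The algebra structure is arbitrary because the algebraic closure of `ℚ` carries two which are
not equal by definition. -/
lemma aeval_polyOfCoeffs {K : Type} [Field K] [CharZero K] (A : Algebra ℚ K) (l : List ℚ) (x : K) :
    aeval x (polyOfCoeffs (l ++ [1])) =
      x ^ l.length + ∑ j ∈ Finset.range l.length, ((l.getD j 0 : ℚ) : K) * x ^ j := by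
  rw [polyOfCoeffs_append_one]
  simp only [map_add, map_pow, aeval_X, map_sum, map_mul, aeval_C]
  congr 1
  exact Finset.sum_congr rfl fun j _ => by rw [eq_ratCast (algebraMap ℚ K)]

section
variable {M : IntermediateField ℚ (AlgebraicClosure ℚ)} {e : ℕ} {f : List ℚ → Bool}

/-- The axioms decide every sentence. -/
lemma sat_parseFC (hPAC : IsPACIn M) (hGal : GalFreeRank e M)
    (hf : ∀ l : List ℚ, (polyOfCoeffs l).Monic →
      (f l = true ↔ ∃ x ∈ M, (aeval x) (polyOfCoeffs l) = 0))
    {K : Type} {d : K} {F : ℕ → K → K → K} (h : ∀ n, sat d F (axAll e f n) []) (c : ℕ) :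
    sat d F (parseFC c) [] ↔ (parseF c).sat (fun x : AlgebraicClosure ℚ => x ∈ M) [] := by
  rw [sat_axAll] at h
  obtain ⟨h0, h1, h2, h3, h4⟩ := h
  obtain ⟨_, σ, H⟩ := exists_interp h0
  have : CharZero K := H.axChar.1 h1
  have : IsAlgClosed K := (isAlgClosed_iff_ACb K).2 (H.axAC.1 h2)
  have hP : PACp σ := (PACp_iff_PACb σ).2 (H.axPAC.1 h3)
  rw [parseFC_eq, H.trF]
  refine sat_iff hPAC hGal σ hP (fun p hp => ?_) _
  obtain ⟨l, rfl⟩ := exists_polyOfCoeffs hp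
  have h5 := (hf _ hp).symm.trans ((H.axOrc f).1 h4 l)
  simp only [aeval_polyOfCoeffs] at h5 ⊢
  exact h5

open Classical in
/-- The operations interpreting the function symbols in a field with endomorphisms. -/
noncomputable def ops {K : Type} [Field K] (σ : Fin e → K →+* K) (k : ℕ) (x y : K) : K :=
  match k with
  | 0 => if Fix σ x then x else x + 1
  | 1 => 0
  | 2 => 1
  | 3 => x + y
  | 4 => x * y
  | 5 => - x
  | 6 => x⁻¹
  | i + 7 => if h : i < e then σ ⟨i, h⟩ x else x

lemma interp_ops {K : Type} [Field K] (σ : Fin e → K →+* K) : Interp σ 0 (ops σ) where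
  d := rfl
  guard x := by
    by_cases h : Fix σ x <;> simp [ops, h]
  zero _ := rfl
  one _ := rfl
  add _ _ := rfl
  mul _ _ := rfl
  neg _ := rfl
  inv _ := rfl
  sig i x := by
    rw [add_comm]
    exact dif_pos i.2

/-- The axioms hold in the algebraic closure of `ℚ` with endomorphisms having fixed field `M`. -/
lemma exists_model (hPAC : IsPACIn M) (hGal : GalFreeRank e M)
    (hf : ∀ l : List ℚ, (polyOfCoeffs l).Monic →
      (f l = true ↔ ∃ x ∈ M, (aeval x) (polyOfCoeffs l) = 0)) :
    ∃ (K : Type) (d : K) (F : ℕ → K → K → K), ∀ n, sat d F (axAll e f n) [] := by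
  obtain ⟨σ, hσ⟩ := exists_fix_iff hGal
  have H := interp_ops σ
  refine ⟨_, _, _, (sat_axAll _ _ e f).2 ⟨H.axBase, H.axChar.2 inferInstance,
    H.axAC.2 ((isAlgClosed_iff_ACb _).1 inferInstance),
    H.axPAC.2 ((PACp_iff_PACb σ).1 (PACp_of_isPACIn hPAC hσ)), (H.axOrc f).2 fun l => ?_⟩⟩
  have h5 := hf _ (monic_polyOfCoeffs l)
  simp only [aeval_polyOfCoeffs] at h5
  simp only [hσ]
  exact h5

end

end PACDec

/-- **Theorem (Statement 6).** Let `M` be a subfield of `Q̃` containing `ℚ`.  If `M` is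
PAC, its absolute Galois group is (isomorphic to) the free profinite group on `e`
generators for some positive integer `e`, and there is a computable function deciding,
for each monic polynomial over `ℚ` given by its coefficient list, whether it has a root
in `M`, then the elementary theory `Th(M)` is decidable. -/
theorem decidable_theory_of_PAC_free_galois_group
    (M : IntermediateField ℚ (AlgebraicClosure ℚ))
    (hPAC : IsPACIn M)
    (e : ℕ) (he : 0 < e) (hGal : GalFreeRank e M)
    (hroot : ∃ f : List ℚ → Bool, Computable f ∧
      ∀ l : List ℚ, (polyOfCoeffs l).Monic →
        (f l = true ↔ ∃ x ∈ M, (Polynomial.aeval x) (polyOfCoeffs l) = 0)) :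
    ThDecidable ↥M := by
  obtain ⟨f, hfc, hf⟩ := hroot
  obtain ⟨g, hg, h⟩ := PACDec.decidable_of_complete (PACDec.computable_axAll e hfc)
    PACDec.pr_parseFC.to_comp (fun _ _ _ hax => PACDec.sat_parseFC hPAC hGal hf hax)
    (PACDec.exists_model hPAC hGal hf)
  exact ⟨g, hg, fun φ => (h _).trans (PACDec.parseF_sentenceCode M φ)⟩
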